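/- Let t ≥ 3 be an odd integer. If the map x ↦ x^t is APN on the finite field F_{2^n} for infinitely many positive integers n, then t = 2^i + 1 for some i ≥ 1 or t = 4^i − 2^i + 1 for some i ≥ 1. -/

import Mathlib

/-!
If `x ^ t + y ^ t + 1 + (x + y + 1) ^ t = 0` has a solution in `𝔽_{2^n}` off the lines `x = 1`,
`y = 1` and `x = y`, then `x ↦ x ^ t` is not APN on `𝔽_{2^n}`. If some component of this curve other
than the three lines is fixed by the Frobenius, then a weak form of the Lang-Weil bound, obtained by
Stepanov's method, gives such solutions for all large `n`. So if `x ↦ x ^ t` is APN for infinitely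
many `n`, every other irreducible component `a` occurs together with a distinct conjugate `φ a`.

Write `t = 2 ^ i * ℓ + 1` with `ℓ` odd. At a singular point, the coordinates `x`, `y` and
`x + y + 1` are `ℓ`-th roots of unity. If they are also `(2 ^ i - 1)`-th roots of unity, then the
curve has `2 ^ i + 1` distinct tangents there; otherwise the point has order `2 ^ i` and a single
tangent, and the components through it meet with small multiplicity. For `i ≥ 2`, Bézout's
inequality for `a` and `φ a`, and for `a` and `φ a` times the rest of the curve, bounds
`t * (t - 3)` by a sum over the singular points, and counting them shows that this is possible only
for `ℓ = 1` and `ℓ = 2 ^ i - 1`. For `i = 1`, the components `a` and `φ a` do not meet at all,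
against Bézout's theorem; so the three lines are the whole curve and `ℓ = 1`.
-/

namespace APN

/-! ### Stepanov's method -/

section StepanovIdeal

open Polynomial Polynomial.Bivariate

lemma C_X_sub_C_dvd_sub_map_evalRingHom {R : Type*} [CommRing R] (x : R) (P : R[X][Y]) :
    C (X - C x) ∣ P - (P.map (evalRingHom x)).map C := by
  rw [C_dvd_iff_dvd_coeff]
  intro i
  simp [dvd_iff_isRoot]

theorem span_pow_mul_eq_top {K B ι : Type*} [CommRing K] [CommRing B] [Algebra K B] {h : B} {M : ℕ}
    (hM : h ^ M = 0) (v : ι → B)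
    (hv : ∀ z, ∃ w ∈ Submodule.span K (Set.range v), h ∣ z - w) :
    Submodule.span K (Set.range fun ij : Fin M × ι => h ^ (ij.1 : ℕ) * v ij.2) = ⊤ := by
  set W := Submodule.span K (Set.range fun ij : Fin M × ι => h ^ (ij.1 : ℕ) * v ij.2)
  suffices hW : ∀ n i, i + n = M → ∀ z, h ^ i * z ∈ W from
    Submodule.eq_top_iff'.2 fun z => by simpa using hW M 0 (zero_add M) z
  intro n
  induction n with
  | zero =>
    rintro i rfl z
    rw [add_zero] at hM
    simp [hM]
  | succ n ih =>
    intro i hi z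
    obtain ⟨w, hw, u, hu⟩ := hv z
    have hz : h ^ i * z = LinearMap.mulLeft K (h ^ i) w + h ^ (i + 1) * u := by
      rw [LinearMap.mulLeft_apply]
      linear_combination h ^ i * hu
    rw [hz]
    refine W.add_mem ?_ (ih (i + 1) (by omega) u)
    refine (Submodule.span_le (p := W.comap (LinearMap.mulLeft K (h ^ i)))).2 ?_ hw
    rintro _ ⟨j, rfl⟩
    exact Submodule.subset_span ⟨(⟨i, by omega⟩, j), rfl⟩

variable {K : Type*} [Field K]

theorem finite_and_finrank_le_of_pow_eq_zero {B : Type*} [CommRing B] [Algebra K B]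
    (f : K[X][Y] →ₐ[K] B) (hf : Function.Surjective f) {e : K[X]} (he : e.Monic) {x : K} {M : ℕ}
    (hx : f (C (X - C x)) ^ M = 0) (hxe : f (C (X - C x)) ∣ f (e.map C)) :
    Module.Finite K B ∧ Module.finrank K B ≤ M * e.natDegree := by
  classical
  let g : K[X] →ₗ[K] B := (f.comp (mapAlgHom CAlgHom)).toLinearMap
  have hspan := span_pow_mul_eq_top (K := K) hx (fun j : Fin e.natDegree => g (X ^ (j : ℕ)))
    fun z => by
      obtain ⟨P, rfl⟩ := hf z
      set r : K[X] := (P %ₘ e.map C).map (evalRingHom x)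
      have hr : r.degree < e.natDegree := by
        rw [← degree_eq_natDegree he.ne_zero, ← he.degree_map (C : K →+* K[X])]
        exact degree_map_le.trans_lt (degree_modByMonic_lt P (he.map C))
      refine ⟨g r, ?_, ?_⟩
      · rw [← mem_degreeLT, degreeLT_eq_span_X_pow] at hr
        refine (Submodule.span_le (p := (Submodule.span K _).comap g)).2 ?_ hr
        intro q hq
        obtain ⟨j, hj, rfl⟩ := Finset.mem_image.1 (Finset.mem_coe.1 hq)
        exact Submodule.subset_span ⟨⟨j, Finset.mem_range.1 hj⟩, rfl⟩
      · have hP : P - r.map C = (P %ₘ e.map C - r.map C) + e.map C * (P /ₘ e.map C) := by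
          linear_combination -modByMonic_add_div P (e.map C)
        change _ ∣ f P - f (r.map C)
        rw [← map_sub, hP, map_add, map_mul]
        exact dvd_add (_root_.map_dvd f (C_X_sub_C_dvd_sub_map_evalRingHom x _)) (hxe.mul_right _)
  refine ⟨⟨Submodule.fg_def.2 ⟨_, Set.finite_range _, hspan⟩⟩, ?_⟩
  rw [← finrank_top, ← hspan]
  simpa [Set.finrank] using finrank_range_le_card (R := K)
    fun ij : Fin M × Fin e.natDegree => f (C (X - C x)) ^ (ij.1 : ℕ) * g (X ^ (ij.2 : ℕ))

theorem exists_ne_zero_map_eq_zero_of_finrank_lt {V : Type*} [AddCommGroup V] [Module K V]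
    [Module.Finite K V] (f : K[X][Y] →ₗ[K] V) {A d : ℕ} (hV : Module.finrank K V < A * d) :
    ∃ G, f G = 0 ∧ G ≠ 0 ∧ G.natDegree < d ∧ ∀ j, (G.coeff j).natDegree < A := by
  classical
  let Φ : (Fin d → Fin A → K) →ₗ[K] K[X][Y] :=
    (ofFn d).restrictScalars K ∘ₗ (ofFn A).compLeft (Fin d)
  have hΦ : Function.Injective Φ :=
    (injective_ofFn d).comp fun _ _ h => funext fun i => injective_ofFn A (congrFun h i)
  have hker : (f ∘ₗ Φ).ker ≠ ⊥ :=
    LinearMap.ker_ne_bot_of_finrank_lt (by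
      simpa [Module.finrank_pi_fintype, mul_comm d] using hV)
  obtain ⟨c, hc, hc0⟩ := (Submodule.ne_bot_iff _).1 hker
  have hAd : 0 < A ∧ 0 < d := by
    constructor <;> refine Nat.pos_of_ne_zero fun h => ?_ <;> simp [h] at hV
  refine ⟨Φ c, hc, (map_ne_zero_iff Φ hΦ).2 hc0, ofFn_natDegree_lt hAd.2 _, fun j => ?_⟩
  rcases lt_or_ge j d with hj | hj
  · have hcoeff : (Φ c).coeff j = ofFn A (c ⟨j, hj⟩) := ofFn_coeff_eq_val_of_lt _ hj
    exact hcoeff ▸ ofFn_natDegree_lt hAd.1 _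
  · have hcoeff : (Φ c).coeff j = 0 := ofFn_coeff_eq_zero_of_ge _ hj
    simpa [hcoeff] using hAd.1

/-- The ideal `((X - x)^M, e(Y)^M, a)` from which the auxiliary polynomial of Stepanov's method is
taken. Here `a(x, Y) = (Y - y) e(Y)` for a point `(x, y)` of the curve `a = 0`. -/
noncomputable def stepanovIdeal {S : Type*} [CommRing S] (a : S[X][Y]) (e : S[X]) (x : S) (M : ℕ) :
    Ideal S[X][Y] :=
  Ideal.span {C (X - C x) ^ M, e.map C ^ M, a}

lemma stepanovIdeal_map {S T : Type*} [CommRing S] [CommRing T] (f : S →+* T) (a : S[X][Y])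
    (e : S[X]) (x : S) (M : ℕ) :
    (stepanovIdeal a e x M).map (mapRingHom (mapRingHom f)) =
      stepanovIdeal (a.map (mapRingHom f)) (e.map f) (f x) M := by
  have he : (e.map (C : S →+* S[X])).map (mapRingHom f) = (e.map f).map C := by
    simp [Polynomial.map_map, mapRingHom_comp_C]
  simp [stepanovIdeal, Ideal.map_span, Set.image_insert_eq, he]

lemma exists_map_C_sub_mem_stepanovIdeal {a : K[X][Y]} {e : K[X]} {x y : K}
    (he : (X - C y) * e = a.map (evalRingHom x)) (hey : e.eval y ≠ 0) (M : ℕ) :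
    ∃ w, e.map C - C (X - C x) * w ∈ stepanovIdeal a e x M := by
  have hcop : IsCoprime (X - C y) e :=
    (irreducible_X_sub_C y).coprime_iff_not_dvd.2 fun h => hey (dvd_iff_isRoot.1 h)
  obtain ⟨u, v, huv⟩ : IsCoprime (e ^ M) (X - C y) := hcop.symm.pow_left
  obtain ⟨b, hb⟩ := C_X_sub_C_dvd_sub_map_evalRingHom x a
  refine ⟨-(v.map C) * b, ?_⟩
  have hw : e.map C - C (X - C x) * (-(v.map C) * b) =
      (u * e).map C * e.map C ^ M + v.map C * a := by
    have huve := congrArg (Polynomial.map C) (congrArg (e * ·) huv)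
    rw [← he] at hb
    simp only [Polynomial.map_mul, Polynomial.map_add, Polynomial.map_pow, Polynomial.map_one]
      at huve hb ⊢
    linear_combination -huve - v.map C * hb
  rw [hw]
  exact Ideal.add_mem _ (Ideal.mul_mem_left _ _ (Ideal.subset_span (by simp)))
    (Ideal.mul_mem_left _ _ (Ideal.subset_span (by simp)))

theorem exists_mem_stepanovIdeal {a : K[X][Y]} {e : K[X]} (hem : e.Monic) {x y : K}
    (he : (X - C y) * e = a.map (evalRingHom x)) (hey : e.eval y ≠ 0) {M A d : ℕ}
    (hMA : M * e.natDegree < A * d) :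
    ∃ G ∈ stepanovIdeal a e x M, G ≠ 0 ∧ G.natDegree < d ∧ ∀ j, (G.coeff j).natDegree < A := by
  set I := stepanovIdeal a e x M
  obtain ⟨B, _, _, f, hf, hker⟩ : ∃ (B : Type _) (_ : CommRing B) (_ : Algebra K B)
      (f : K[X][Y] →ₐ[K] B), Function.Surjective f ∧ ∀ P, f P = 0 ↔ P ∈ I :=
    ⟨_ ⧸ I, inferInstance, inferInstance, Ideal.Quotient.mkₐ K I, Ideal.Quotient.mkₐ_surjective K I,
      fun _ => Ideal.Quotient.eq_zero_iff_mem⟩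
  obtain ⟨w, hw⟩ := exists_map_C_sub_mem_stepanovIdeal he hey M
  have hxe : f (C (X - C x)) ∣ f (e.map C) :=
    ⟨f w, by rw [← map_mul, ← sub_eq_zero, ← map_sub]; exact (hker _).2 hw⟩
  have hx : f (C (X - C x)) ^ M = 0 := by
    rw [← map_pow]
    exact (hker _).2 (Ideal.subset_span (by simp))
  obtain ⟨hfin, hrank⟩ := finite_and_finrank_le_of_pow_eq_zero f hf hem hx hxe
  obtain ⟨G, hG, hG'⟩ := exists_ne_zero_map_eq_zero_of_finrank_lt f.toLinearMap
    (hrank.trans_lt hMA)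
  exact ⟨G, (hker G).1 hG, hG'⟩

end StepanovIdeal

section FractionField

open Polynomial Polynomial.Bivariate

attribute [local instance] Polynomial.algebra in
theorem exists_map_eq_C_C_mul_of_mem_map {R K : Type*} [CommRing R] [CommRing K]
    [Algebra R K] (S : Submonoid R) [IsLocalization S K] {I : Ideal R[X][Y]} {G : K[X][Y]}
    (hG : G ∈ I.map (mapRingHom (mapRingHom (algebraMap R K)))) :
    ∃ G' ∈ I, ∃ s ∈ S, G'.map (mapRingHom (algebraMap R K)) = C (C (algebraMap R K s)) * G := by
  have h1 : IsLocalization (S.map (C : R →+* R[X])) K[X] := Polynomial.isLocalization S K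
  have h2 : IsLocalization ((S.map (C : R →+* R[X])).map (C : R[X] →+* R[X][Y])) K[X][Y] :=
    Polynomial.isLocalization (S.map C) K[X]
  obtain ⟨⟨G', _, _, ⟨s, hs, rfl⟩, rfl⟩, hG'⟩ :=
    (IsLocalization.mem_map_algebraMap_iff ((S.map (C : R →+* R[X])).map (C : R[X] →+* R[X][Y]))
      K[X][Y]).1 hG
  refine ⟨G', G'.2, s, hs, hG'.symm.trans ?_⟩
  simp [Polynomial.algebraMap_def, mul_comm]

theorem exists_mem_stepanovIdeal_of_isDomain {R : Type*} [CommRing R] [IsDomain R] {a : R[X][Y]}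
    {e : R[X]} (hem : e.Monic) {x y : R} (he : (X - C y) * e = a.map (evalRingHom x))
    (hey : e.eval y ≠ 0) {M A d : ℕ} (hMA : M * e.natDegree < A * d) :
    ∃ G ∈ stepanovIdeal a e x M, G ≠ 0 ∧ G.natDegree < d ∧ ∀ j, (G.coeff j).natDegree < A := by
  let ι := algebraMap R (FractionRing R)
  have hι : Function.Injective ι := IsFractionRing.injective _ _
  have hcomp : (evalRingHom (ι x)).comp (mapRingHom ι) = ι.comp (evalRingHom x) := by ext <;> simp
  have heι : (X - C (ι y)) * e.map ι = (a.map (mapRingHom ι)).map (evalRingHom (ι x)) := by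
    rw [Polynomial.map_map, hcomp, ← Polynomial.map_map, ← he]
    simp
  obtain ⟨G, hGmem, hG0, hGd, hGA⟩ := exists_mem_stepanovIdeal (hem.map ι) heι
    (by rwa [eval_map_apply, map_ne_zero_iff ι hι]) (by rwa [hem.natDegree_map])
  rw [← stepanovIdeal_map] at hGmem
  obtain ⟨G', hG'mem, s, hs, hG'⟩ := exists_map_eq_C_C_mul_of_mem_map (nonZeroDivisors R) hGmem
  have hιι : Function.Injective (mapRingHom ι) := Polynomial.map_injective ι hι
  refine ⟨G', hG'mem, ?_, ?_, fun j => ?_⟩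
  · rintro rfl
    rw [Polynomial.map_zero, eq_comm, mul_eq_zero, or_iff_left hG0, C_eq_zero, C_eq_zero,
      map_eq_zero_iff _ hι] at hG'
    exact nonZeroDivisors.ne_zero hs hG'
  · rw [← natDegree_map_eq_of_injective hιι, hG']
    exact (natDegree_C_mul_le _ _).trans_lt hGd
  · rw [← natDegree_map_eq_of_injective hι, ← coe_mapRingHom, ← coeff_map, hG', coeff_C_mul]
    exact (natDegree_C_mul_le _ _).trans_lt (hGA j)

attribute [local instance] Polynomial.algebra in
theorem exists_mul_add_mul_eq_C {R : Type*} [CommRing R] [IsDomain R] [IsIntegrallyClosed R]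
    {a G : R[X]} (hm : a.Monic) (hirr : Irreducible a) (hG : ¬ a ∣ G) :
    ∃ u v : R[X], ∃ δ : R, δ ≠ 0 ∧ u * G + v * a = C δ := by
  let K := FractionRing R
  have hinj : Function.Injective (algebraMap R K) := IsFractionRing.injective _ _
  have hcop : IsCoprime (a.map (algebraMap R K)) (G.map (algebraMap R K)) := by
    rwa [((hm.irreducible_iff_irreducible_map_fraction_map (K := K)).1 hirr).coprime_iff_not_dvd,
      map_dvd_map _ hinj hm]
  have htop : (1 : K[X]) ∈ (Ideal.span {G, a}).map (algebraMap R[X] K[X]) := by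
    obtain ⟨u, v, huv⟩ := hcop
    rw [Ideal.map_span, Set.image_pair, Ideal.mem_span_pair]
    exact ⟨v, u, (add_comm _ _).trans huv⟩
  have hloc : IsLocalization ((nonZeroDivisors R).map (C : R →+* R[X])) K[X] :=
    Polynomial.isLocalization (nonZeroDivisors R) K
  obtain ⟨⟨⟨P, hP⟩, _, ⟨δ, hδ, rfl⟩⟩, h⟩ :=
    (IsLocalization.mem_map_algebraMap_iff ((nonZeroDivisors R).map (C : R →+* R[X])) K[X]).1 htop
  obtain ⟨u, v, huv⟩ := Ideal.mem_span_pair.1 hP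
  rw [one_mul] at h
  exact ⟨u, v, δ, nonZeroDivisors.ne_zero hδ, huv.trans (Polynomial.map_injective _ hinj h).symm⟩

end FractionField

section GeometricallyIrreducible

open Polynomial Polynomial.Bivariate

variable {k : Type*} [Field k] [IsAlgClosed k]

theorem nonempty_algHom_of_finiteType (A : Type*) [CommRing A] [Nontrivial A] [Algebra k A]
    [Algebra.FiniteType k A] : Nonempty (A →ₐ[k] k) := by
  obtain ⟨m, hm⟩ := Ideal.exists_maximal A
  let _ : Field (A ⧸ m) := Ideal.Quotient.field m
  have : Module.Finite k (A ⧸ m) := finite_of_finite_type_of_isJacobsonRing k (A ⧸ m)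
  let φ : (A ⧸ m) →ₐ[k] k := IsAlgClosed.lift
  exact ⟨φ.comp (Ideal.Quotient.mkₐ k m)⟩

lemma exists_finset_forall_mem_lifts {R S : Type*} [CommRing R] [CommRing S] [Algebra R S]
    (f : S[X][Y]) : ∃ s : Finset S, ∀ A : Subalgebra R S, (s : Set S) ⊆ A →
      f ∈ lifts (mapRingHom (algebraMap A S)) := by
  classical
  refine ⟨f.support.biUnion fun i => (f.coeff i).coeffs, fun A hA => ?_⟩
  refine (lifts_iff_coeff_lifts _).2 fun i => (lifts_iff_coeff_lifts (f.coeff i)).2 fun j => ?_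
  rcases eq_or_ne ((f.coeff i).coeff j) 0 with h0 | h0
  · exact ⟨0, by rw [h0, map_zero]⟩
  · refine ⟨⟨_, hA (Finset.mem_coe.2 (Finset.mem_biUnion.2 ⟨i, ?_, coeff_mem_coeffs h0⟩))⟩, rfl⟩
    exact mem_support_iff.2 fun h => h0 (by rw [h, coeff_zero])

-- A factorisation over `K` is defined over a finitely generated `k`-algebra, which has a `k`-point.
theorem irreducible_map_mapRingHom_of_isAlgClosed (K : Type*) [Field K] [Algebra k K]
    {a : k[X][Y]} (hm : a.Monic) (hirr : Irreducible a) :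
    Irreducible (a.map (mapRingHom (algebraMap k K))) := by
  classical
  rw [hm.irreducible_iff_natDegree'] at hirr
  refine ((hm.map _).irreducible_iff_natDegree').2 ⟨fun h => ?_, fun f g hf hg hfg => ?_⟩
  · rw [← (hm.map _).natDegree_eq_zero, hm.natDegree_map, hm.natDegree_eq_zero] at h
    exact hirr.1 h
  obtain ⟨s, hs⟩ := exists_finset_forall_mem_lifts (R := k) f
  obtain ⟨s', hs'⟩ := exists_finset_forall_mem_lifts (R := k) g
  let A := Algebra.adjoin k ((s ∪ s' : Finset K) : Set K)
  have hsub : ((s ∪ s' : Finset K) : Set K) ⊆ A := Algebra.subset_adjoin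
  rw [Finset.coe_union, Set.union_subset_iff] at hsub
  obtain ⟨f₀, hf₀, -, hf₀m⟩ := lifts_and_natDegree_eq_and_monic (hs A hsub.1) hf
  obtain ⟨g₀, hg₀, hg₀d, hg₀m⟩ := lifts_and_natDegree_eq_and_monic (hs' A hsub.2) hg
  have : Algebra.FiniteType k A := (Subalgebra.fg_iff_finiteType A).1 ⟨_, rfl⟩
  obtain ⟨φ⟩ := nonempty_algHom_of_finiteType (k := k) A
  have hA : f₀ * g₀ = a.map (mapRingHom (algebraMap k A)) := by
    apply Polynomial.map_injective (mapRingHom (algebraMap A K))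
      (Polynomial.map_injective _ Subtype.val_injective)
    rw [Polynomial.map_mul, hf₀, hg₀, hfg, Polynomial.map_map, mapRingHom_comp]
    rfl
  have hk : f₀.map (mapRingHom (φ : A →+* k)) * g₀.map (mapRingHom (φ : A →+* k)) = a := by
    rw [← Polynomial.map_mul, hA, Polynomial.map_map, mapRingHom_comp, AlgHom.comp_algebraMap]
    simp
  have hdeg := hirr.2 _ _ (hf₀m.map _) (hg₀m.map _) hk
  rwa [hg₀m.natDegree_map, hg₀d, ← hm.natDegree_map (mapRingHom (algebraMap k K))] at hdeg

end GeometricallyIrreducible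

section CoordinateRing

open Polynomial Polynomial.Bivariate

lemma mul_X_modByMonic {R : Type*} [CommRing R] {p q : R[X]} (hq : q.Monic)
    (hp : p.degree < q.degree) :
    p * X %ₘ q = p * X - C (p.coeff (q.natDegree - 1)) * q := by
  nontriviality R
  rw [degree_eq_natDegree hq.ne_zero, degree_lt_iff_coeff_zero] at hp
  refine (div_modByMonic_unique (C (p.coeff (q.natDegree - 1))) _ hq ⟨by ring, ?_⟩).2
  rw [degree_eq_natDegree hq.ne_zero, degree_lt_iff_coeff_zero]
  intro m hm
  rcases m with _ | m
  · simp [hq.natDegree_eq_zero.1 (Nat.le_zero.1 hm), hp 0 hm]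
  rw [coeff_sub, coeff_mul_X, coeff_C_mul]
  rcases eq_or_lt_of_le hm with h | h
  · rw [h, Nat.add_sub_cancel, ← h, hq.coeff_natDegree, mul_one, sub_self]
  · rw [hp m (Nat.lt_succ_iff.1 h), coeff_eq_zero_of_natDegree_lt h, mul_zero, sub_zero]

lemma exists_forall_natDegree_coeff_le {R : Type*} [Semiring R] (f : R[X][Y]) :
    ∃ D, ∀ j, (f.coeff j).natDegree ≤ D := by
  refine ⟨f.support.sup fun j => (f.coeff j).natDegree, fun j => ?_⟩
  by_cases hj : j ∈ f.support
  · exact Finset.le_sup (f := fun j => (f.coeff j).natDegree) hj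
  · simp [notMem_support_iff.1 hj]

variable {k : Type*} [Field k] {a : k[X][Y]}

/-- The elements of the coordinate ring `k[X, Y] / (a)`, with `a` monic in `Y`, whose reduced
representative has coefficients (polynomials in `X`) of degree at most `D`. -/
noncomputable def coeffDegreeLE (ha : a.Monic) (D : ℕ) : AddSubmonoid (AdjoinRoot a) where
  carrier := {z | ∀ j, ((AdjoinRoot.modByMonicHom ha z).coeff j).natDegree ≤ D}
  zero_mem' := by simp
  add_mem' hz hw j := by
    rw [map_add, coeff_add]
    exact (natDegree_add_le _ _).trans (max_le (hz j) (hw j))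

namespace coeffDegreeLE

variable {ha : a.Monic} {z : AdjoinRoot a} {D : ℕ}

lemma mem_iff : z ∈ coeffDegreeLE ha D ↔
    ∀ j, ((AdjoinRoot.modByMonicHom ha z).coeff j).natDegree ≤ D := Iff.rfl

lemma mono {D' : ℕ} (hD : D ≤ D') : coeffDegreeLE ha D ≤ coeffDegreeLE ha D' :=
  fun _ hz j => (hz j).trans hD

lemma exists_mem (ha : a.Monic) (z : AdjoinRoot a) : ∃ D, z ∈ coeffDegreeLE ha D :=
  exists_forall_natDegree_coeff_le _

lemma mul_of_X_pow (hz : z ∈ coeffDegreeLE ha D) (i : ℕ) :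
    z * AdjoinRoot.of a X ^ i ∈ coeffDegreeLE ha (D + i) := by
  intro j
  have hsmul : z * AdjoinRoot.of a X ^ i = (X ^ i : k[X]) • z := by
    rw [Algebra.smul_def, AdjoinRoot.algebraMap_eq, map_pow, mul_comm]
  rw [hsmul, map_smul, coeff_smul, smul_eq_mul, mul_comm]
  exact natDegree_mul_le.trans (add_le_add (hz j) (natDegree_X_pow_le i))

lemma mul_root {e : ℕ} (he : ∀ j, (a.coeff j).natDegree ≤ e) (hz : z ∈ coeffDegreeLE ha D) :
    z * AdjoinRoot.root a ∈ coeffDegreeLE ha (D + e) := by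
  obtain ⟨P, rfl⟩ := AdjoinRoot.mk_surjective z
  have hP : P %ₘ a * X %ₘ a = P * X %ₘ a :=
    modByMonic_eq_of_dvd_sub ha
      ⟨-(P /ₘ a) * X, by linear_combination X * modByMonic_add_div P a⟩
  simp only [mem_iff, AdjoinRoot.modByMonicHom_mk] at hz
  intro j
  rw [← AdjoinRoot.mk_X, ← map_mul, AdjoinRoot.modByMonicHom_mk, ← hP,
    mul_X_modByMonic ha (degree_modByMonic_lt P ha), coeff_sub, coeff_C_mul]
  refine (natDegree_sub_le _ _).trans
    (max_le ?_ (natDegree_mul_le.trans (add_le_add (hz _) (he j))))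
  rcases j with _ | j
  · simp
  · rw [coeff_mul_X]
    exact (hz j).trans (Nat.le_add_right D e)

lemma mul_root_pow {e : ℕ} (he : ∀ j, (a.coeff j).natDegree ≤ e) (hz : z ∈ coeffDegreeLE ha D)
    (i : ℕ) : z * AdjoinRoot.root a ^ i ∈ coeffDegreeLE ha (D + e * i) := by
  induction i with
  | zero => simpa using hz
  | succ i ih =>
    rw [pow_succ, ← mul_assoc, mul_add_one, ← add_assoc]
    exact mul_root he ih

lemma eq_zero_of_forall_pow_dvd (hz : z ∈ coeffDegreeLE ha D) {s : Finset k} {M : ℕ}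
    (hs : ∀ c ∈ s, AdjoinRoot.of a (X - C c) ^ M ∣ z) (hM : D < M * s.card) : z = 0 := by
  have hcop : (s : Set k).Pairwise
      (Function.onFun IsCoprime fun c => AdjoinRoot.of a (X - C c) ^ M) := fun c _ c' _ hcc' =>
    ((pairwise_coprime_X_sub_C Function.injective_id hcc').map (AdjoinRoot.of a)).pow
  obtain ⟨w, hw⟩ := Finset.prod_dvd_of_coprime hcop hs
  set r : k[X] := ∏ c ∈ s, (X - C c) ^ M with hr
  have hzw : z = r • w := by
    rw [hw, Algebra.smul_def, AdjoinRoot.algebraMap_eq, hr]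
    simp only [map_prod, map_pow]
  have hr_deg : r.natDegree = M * s.card := by
    rw [hr, natDegree_prod_of_monic _ _ fun c _ => (monic_X_sub_C c).pow M]
    simp [mul_comm]
  refine (AdjoinRoot.mk_leftInverse ha).injective
    ((map_zero (AdjoinRoot.modByMonicHom ha)).symm ▸ ?_)
  ext1 j
  refine eq_zero_of_dvd_of_natDegree_lt (p := r) ?_ ((hz j).trans_lt (hr_deg ▸ hM))
  rw [hzw, map_smul, coeff_smul, smul_eq_mul]
  exact dvd_mul_right r _

end coeffDegreeLE

theorem of_X_sub_C_dvd_of_forall_lift_eq_zero [IsAlgClosed k] (ha : a.Monic) {c : k}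
    (hsep : (a.map (evalRingHom c)).Separable) {z : AdjoinRoot a}
    (hz : ∀ (y : k) (hy : a.eval₂ (evalRingHom c) y = 0),
      AdjoinRoot.lift (evalRingHom c) y hy z = 0) :
    AdjoinRoot.of a (X - C c) ∣ z := by
  obtain ⟨P', rfl⟩ := AdjoinRoot.mk_surjective z
  set P := P' %ₘ a with hP
  have hmk : AdjoinRoot.mk a P' = AdjoinRoot.mk a P := by
    rw [hP, ← AdjoinRoot.modByMonicHom_mk ha, AdjoinRoot.mk_leftInverse]
  have h0 : P.map (evalRingHom c) = 0 := by
    by_contra hne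
    refine hne (eq_zero_of_dvd_of_degree_lt (p := a.map (evalRingHom c)) ?_ ?_)
    · rw [IsAlgClosed.dvd_iff_roots_le_roots (ha.map _).ne_zero hne,
        Multiset.le_iff_subset (nodup_roots hsep)]
      intro y hy
      have hy : a.eval₂ (evalRingHom c) y = 0 := by
        rw [← eval_map]
        exact isRoot_of_mem_roots hy
      rw [mem_roots hne, IsRoot, eval_map, ← AdjoinRoot.lift_mk hy, ← hmk, hz y hy]
    · rw [ha.degree_map]
      exact degree_map_le.trans_lt (degree_modByMonic_lt P' ha)
  obtain ⟨Q, hQ⟩ := C_X_sub_C_dvd_sub_map_evalRingHom c P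
  rw [h0, Polynomial.map_zero, sub_zero] at hQ
  exact ⟨AdjoinRoot.mk a Q, by rw [hmk, hQ, map_mul, AdjoinRoot.mk_C]⟩

theorem natDegree_derivative_lt_of_ne_zero {R : Type*} [Semiring R] {f : R[X]}
    (h : derivative f ≠ 0) : (derivative f).natDegree < f.natDegree :=
  natDegree_derivative_lt fun h0 => h (derivative_of_natDegree_zero h0)

section GenericPoint

variable (a)

lemma map_map_evalRingHom_of_X :
    (a.map (mapRingHom (algebraMap k (AdjoinRoot a)))).map (evalRingHom (AdjoinRoot.of a X)) =
      a.map (AdjoinRoot.of a) := by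
  rw [Polynomial.map_map]
  congr 1
  ext <;> simp [AdjoinRoot.algebraMap_eq']

lemma evalEval_map_of_X_root :
    (a.map (mapRingHom (algebraMap k (AdjoinRoot a)))).evalEval
      (AdjoinRoot.of a X) (AdjoinRoot.root a) = 0 := by
  rw [← map_evalRingHom_eval, map_map_evalRingHom_of_X]
  exact AdjoinRoot.isRoot_root a

/-- The cofactor `e` in `a(x, Y) = (Y - y) e(Y)`, where `(x, y)` is the generic point of the curve
`a = 0`, with coordinates in `k[X, Y] / (a)`. -/
noncomputable def fiberCofactor : (AdjoinRoot a)[X] :=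
  a.map (AdjoinRoot.of a) /ₘ (X - C (AdjoinRoot.root a))

lemma X_sub_C_root_mul_fiberCofactor :
    (X - C (AdjoinRoot.root a)) * fiberCofactor a = a.map (AdjoinRoot.of a) :=
  mul_divByMonic_eq_iff_isRoot.2 (AdjoinRoot.isRoot_root a)

variable {a}

lemma monic_fiberCofactor (ha : a.Monic) : (fiberCofactor a).Monic :=
  (monic_X_sub_C (AdjoinRoot.root a)).of_mul_monic_left
    (X_sub_C_root_mul_fiberCofactor a ▸ ha.map _)

lemma natDegree_fiberCofactor [Nontrivial (AdjoinRoot a)] (ha : a.Monic) :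
    (fiberCofactor a).natDegree = a.natDegree - 1 := by
  rw [← ha.natDegree_map (AdjoinRoot.of a), ← X_sub_C_root_mul_fiberCofactor,
    (monic_X_sub_C _).natDegree_mul (monic_fiberCofactor ha), natDegree_X_sub_C,
    Nat.add_sub_cancel_left]

lemma eval_root_fiberCofactor :
    (fiberCofactor a).eval (AdjoinRoot.root a) = AdjoinRoot.mk a (derivative a) := by
  have h := congrArg (fun f => (derivative f).eval (AdjoinRoot.root a))
    (X_sub_C_root_mul_fiberCofactor a)
  simpa [derivative_map, eval_map, ← AdjoinRoot.aeval_eq, aeval_def] using h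

theorem exists_stepanovPolynomial (ha : a.Monic) (hirr : Irreducible a) (hder : derivative a ≠ 0)
    {M A : ℕ} (hMA : M * (a.natDegree - 1) < A * a.natDegree) :
    ∃ G ∈ stepanovIdeal (a.map (mapRingHom (algebraMap k (AdjoinRoot a)))) (fiberCofactor a)
        (AdjoinRoot.of a X) M,
      G ≠ 0 ∧ G.natDegree < a.natDegree ∧ ∀ j, (G.coeff j).natDegree < A := by
  have : IsDomain (AdjoinRoot a) := AdjoinRoot.isDomain_of_prime hirr.prime
  refine exists_mem_stepanovIdeal_of_isDomain (monic_fiberCofactor ha)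
    (y := AdjoinRoot.root a) ?_ ?_ (by rwa [natDegree_fiberCofactor ha])
  · rw [X_sub_C_root_mul_fiberCofactor, map_map_evalRingHom_of_X]
  · rw [eval_root_fiberCofactor, Ne, AdjoinRoot.mk_eq_zero]
    exact ha.not_dvd_of_natDegree_lt hder (natDegree_derivative_lt_of_ne_zero hder)

end GenericPoint

section Frobenius

variable (p : ℕ) [ExpChar k p]

lemma map_iterateFrobenius_of_map_frobenius (hfix : a.map (mapRingHom (frobenius k p)) = a)
    (n : ℕ) : a.map (mapRingHom (iterateFrobenius k p n)) = a := by
  induction n with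
  | zero => simp
  | succ n ih =>
    rw [iterateFrobenius_add, iterateFrobenius_one, ← mapRingHom_comp, ← Polynomial.map_map, hfix,
      ih]

lemma evalEval_pow_of_map_frobenius (hfix : a.map (mapRingHom (frobenius k p)) = a)
    {S : Type*} [CommRing S] [ExpChar S p] (φ : k →+* S) (n : ℕ) (x y : S) :
    (a.map (mapRingHom φ)).evalEval (x ^ p ^ n) (y ^ p ^ n) =
      (a.map (mapRingHom φ)).evalEval x y ^ p ^ n := by
  have h := map_mapRingHom_evalEval (iterateFrobenius S p n) (a.map (mapRingHom φ)) x y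
  rwa [Polynomial.map_map, mapRingHom_comp, ← RingHom.iterateFrobenius_comm, ← mapRingHom_comp,
    ← Polynomial.map_map, map_iterateFrobenius_of_map_frobenius p hfix] at h

end Frobenius

end CoordinateRing

section Stepanov

open Polynomial Polynomial.Bivariate Filter

variable {k : Type*} [Field k] {a : k[X][Y]} (ha : a.Monic)

include ha in
lemma exists_forall_separable_map_evalRingHom (hirr : Irreducible a) (hder : derivative a ≠ 0) :
    ∃ δ : k[X], δ ≠ 0 ∧ ∀ c, δ.eval c ≠ 0 → (a.map (evalRingHom c)).Separable := by
  obtain ⟨u, v, δ, hδ, huv⟩ := exists_mul_add_mul_eq_C ha hirr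
    (ha.not_dvd_of_natDegree_lt hder (natDegree_derivative_lt_of_ne_zero hder))
  refine ⟨δ, hδ, fun c hc => ?_⟩
  have huvc := congrArg (Polynomial.map (evalRingHom c)) huv
  simp only [Polynomial.map_add, Polynomial.map_mul, map_C, ← derivative_map,
    coe_evalRingHom] at huvc
  refine ⟨C (δ.eval c)⁻¹ * v.map (evalRingHom c), C (δ.eval c)⁻¹ * u.map (evalRingHom c), ?_⟩
  have hinv : C (δ.eval c)⁻¹ * C (δ.eval c) = 1 := by rw [← C_mul, inv_mul_cancel₀ hc, C_1]
  linear_combination C (δ.eval c)⁻¹ * huvc + hinv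

lemma exists_forall_evalEval_pow_mem_coeffDegreeLE {e : ℕ} (he : ∀ j, (a.coeff j).natDegree ≤ e)
    {G : (AdjoinRoot a)[X][Y]} {A d : ℕ} (hGd : G.natDegree ≤ d)
    (hGA : ∀ j, (G.coeff j).natDegree ≤ A) :
    ∃ D, ∀ m, G.evalEval (AdjoinRoot.of a X ^ m) (AdjoinRoot.root a ^ m) ∈
      coeffDegreeLE ha (D + m * (A + e * d)) := by
  choose D hD using coeffDegreeLE.exists_mem ha
  refine ⟨(Finset.range (A + 1) ×ˢ Finset.range (d + 1)).sup
    fun ij => D ((G.coeff ij.2).coeff ij.1), fun m => ?_⟩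
  rw [← map_evalRingHom_eval,
    eval_eq_sum_range' (natDegree_map_le.trans_lt (Nat.lt_succ_of_le hGd))]
  refine sum_mem fun j hj => ?_
  rw [coeff_map, coe_evalRingHom, eval_eq_sum_range' (Nat.lt_succ_of_le (hGA j)), Finset.sum_mul]
  refine sum_mem fun i hi => ?_
  rw [← pow_mul, ← pow_mul]
  refine coeffDegreeLE.mono ?_ (coeffDegreeLE.mul_root_pow he
    (coeffDegreeLE.mul_of_X_pow (hD ((G.coeff j).coeff i)) (m * i)) (m * j))
  have hsup := Finset.le_sup (f := fun ij : ℕ × ℕ => D ((G.coeff ij.2).coeff ij.1))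
    (Finset.mk_mem_product hi hj)
  have hi' : i ≤ A := Finset.mem_range_succ_iff.1 hi
  have hj' : j ≤ d := Finset.mem_range_succ_iff.1 hj
  calc _ = D ((G.coeff j).coeff i) + m * (i + e * j) := by ring
    _ ≤ _ := by gcongr

variable {p : ℕ} [ExpChar k p] (hfix : a.map (mapRingHom (frobenius k p)) = a)

include ha hfix in
theorem of_X_sub_C_dvd_eval_fiberCofactor [IsAlgClosed k] {n : ℕ} {c : k} (hc : c ^ p ^ n = c)
    (hsep : (a.map (evalRingHom c)).Separable)
    (hno : ∀ y, y ^ p ^ n = y → a.evalEval c y ≠ 0) :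
    AdjoinRoot.of a (X - C c) ∣ (fiberCofactor a).eval (AdjoinRoot.root a ^ p ^ n) := by
  refine of_X_sub_C_dvd_of_forall_lift_eq_zero ha hsep fun y hy => ?_
  have hay : a.evalEval c y = 0 := by
    rw [← map_evalRingHom_eval, eval_map, hy]
  have hay' : a.evalEval c (y ^ p ^ n) = 0 := by
    have h := evalEval_pow_of_map_frobenius p hfix (RingHom.id k) n c y
    simpa [hc, hay, zero_pow (expChar_pow_pos k p n).ne'] using h
  have h := congrArg (fun f => AdjoinRoot.lift (evalRingHom c) y hy
    (f.eval (AdjoinRoot.root a ^ p ^ n))) (X_sub_C_root_mul_fiberCofactor a)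
  simp only [eval_mul, eval_sub, eval_X, eval_C, map_mul, map_sub, map_pow,
    AdjoinRoot.lift_root, eval_map] at h
  rw [hom_eval₂, AdjoinRoot.lift_comp_of, map_pow, AdjoinRoot.lift_root, ← eval_map,
    map_evalRingHom_eval, hay', mul_eq_zero, sub_eq_zero] at h
  exact h.resolve_left fun hyn => hno y hyn hay

include ha hfix in
theorem pow_dvd_evalEval_of_mem_stepanovIdeal [IsAlgClosed k] {n : ℕ} {c : k}
    (hc : c ^ p ^ n = c) (hsep : (a.map (evalRingHom c)).Separable)
    (hno : ∀ y, y ^ p ^ n = y → a.evalEval c y ≠ 0) {M : ℕ} {G : (AdjoinRoot a)[X][Y]}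
    (hG : G ∈ stepanovIdeal (a.map (mapRingHom (algebraMap k (AdjoinRoot a)))) (fiberCofactor a)
      (AdjoinRoot.of a X) M) :
    AdjoinRoot.of a (X - C c) ^ M ∣
      G.evalEval (AdjoinRoot.of a X ^ p ^ n) (AdjoinRoot.root a ^ p ^ n) := by
  nontriviality AdjoinRoot a
  have hX : AdjoinRoot.of a (X - C c) ∣ AdjoinRoot.of a X ^ p ^ n - AdjoinRoot.of a X := by
    rw [← map_pow, ← map_sub]
    exact _root_.map_dvd _ (dvd_iff_isRoot.2 (by simp [hc]))
  have : ExpChar (AdjoinRoot a) p :=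
    expChar_of_injective_algebraMap (algebraMap k (AdjoinRoot a)).injective p
  have hroot := evalEval_pow_of_map_frobenius p hfix (algebraMap k (AdjoinRoot a)) n
    (AdjoinRoot.of a X) (AdjoinRoot.root a)
  rw [evalEval_map_of_X_root, zero_pow (expChar_pow_pos k p n).ne'] at hroot
  rw [← Ideal.mem_span_singleton]
  suffices h : stepanovIdeal _ _ _ _ ≤ (Ideal.span {AdjoinRoot.of a (X - C c) ^ M}).comap
      (evalEvalRingHom (AdjoinRoot.of a X ^ p ^ n) (AdjoinRoot.root a ^ p ^ n)) from h hG
  rw [stepanovIdeal, Ideal.span_le]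
  rintro P (rfl | rfl | rfl) <;>
    rw [SetLike.mem_coe, Ideal.mem_comap, Ideal.mem_span_singleton, coe_evalEvalRingHom]
  · rw [evalEval_pow, evalEval_C]
    exact pow_dvd_pow_of_dvd (by simpa using hX) M
  · rw [evalEval_pow, evalEval_map_C]
    exact pow_dvd_pow_of_dvd (of_X_sub_C_dvd_eval_fiberCofactor ha hfix hc hsep hno) M
  · rw [hroot]
    exact dvd_zero _

include ha hfix in
theorem finite_setOf_evalEval_pow_eq_zero [IsAlgClosed k] (hp : 1 < p) (hirr : Irreducible a)
    {G : (AdjoinRoot a)[X][Y]} (hG : G ≠ 0) (hGd : G.natDegree < a.natDegree) :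
    {n | G.evalEval (AdjoinRoot.of a X ^ p ^ n) (AdjoinRoot.root a ^ p ^ n) = 0}.Finite := by
  have : IsDomain (AdjoinRoot a) := AdjoinRoot.isDomain_of_prime hirr.prime
  have : ExpChar (AdjoinRoot a) p :=
    expChar_of_injective_algebraMap (algebraMap k (AdjoinRoot a)).injective p
  let K := FractionRing (AdjoinRoot a)
  let ι := algebraMap (AdjoinRoot a) K
  have hι : Function.Injective ι := IsFractionRing.injective _ _
  set aR := a.map (mapRingHom (algebraMap k (AdjoinRoot a))) with haR
  have hirrK : Irreducible (aR.map (mapRingHom ι)) := by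
    rw [haR, Polynomial.map_map, mapRingHom_comp]
    exact irreducible_map_mapRingHom_of_isAlgClosed K ha hirr
  obtain ⟨u, v, δ, hδ, huv⟩ := exists_mul_add_mul_eq_C ((ha.map _).map _) hirrK
    (G := G.map (mapRingHom ι)) (by
      refine ((ha.map _).map _).not_dvd_of_natDegree_lt
        ((Polynomial.map_ne_zero_iff (Polynomial.map_injective ι hι)).2 hG) ?_
      rw [(ha.map _).natDegree_map, ha.natDegree_map]
      exact natDegree_map_le.trans_lt hGd)
  have hof : Function.Injective (AdjoinRoot.of a) :=
    AdjoinRoot.of.injective_of_degree_ne_zero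
      (degree_ne_of_natDegree_ne (Nat.ne_zero_of_lt hGd))
  have hinj : Function.Injective fun n => ι (AdjoinRoot.of a X ^ p ^ n) := fun m n hmn => by
    simp only [← map_pow] at hmn
    have h := congrArg natDegree (hof (hι hmn))
    exact Nat.pow_right_injective hp (by simpa using h)
  refine Set.Finite.of_finite_image ((δ.rootSet_finite K).subset ?_) hinj.injOn
  rintro _ ⟨n, hn, rfl⟩
  have haR0 : aR.evalEval (AdjoinRoot.of a X ^ p ^ n) (AdjoinRoot.root a ^ p ^ n) = 0 := by
    rw [haR, evalEval_pow_of_map_frobenius p hfix, evalEval_map_of_X_root,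
      zero_pow (expChar_pow_pos k p n).ne']
  have h := congrArg (evalEval (ι (AdjoinRoot.of a X ^ p ^ n)) (ι (AdjoinRoot.root a ^ p ^ n))) huv
  rw [← haR] at h
  rw [evalEval_add, evalEval_mul, evalEval_mul, map_mapRingHom_evalEval, map_mapRingHom_evalEval,
    show G.evalEval _ _ = 0 from hn, haR0, map_zero, mul_zero, mul_zero, add_zero, evalEval_C] at h
  refine mem_rootSet.2 ⟨hδ, ?_⟩
  rw [coe_aeval_eq_eval]
  exact h.symm

lemma exists_finset_card_eq_forall_mem_iff_pow_eq [IsAlgClosed k] (hp : 1 < p) {n : ℕ}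
    (hn : n ≠ 0) : ∃ S : Finset k, S.card = p ^ n ∧ ∀ z, z ∈ S ↔ z ^ p ^ n = z := by
  classical
  have : CharP k p := by
    cases ‹ExpChar k p› with
    | zero => exact absurd hp (lt_irrefl 1)
    | prime _ => infer_instance
  have hne : (X ^ p ^ n - X : k[X]) ≠ 0 := FiniteField.X_pow_card_pow_sub_X_ne_zero k hn hp
  refine ⟨(X ^ p ^ n - X : k[X]).roots.toFinset, ?_, fun z => by simp [hne, sub_eq_zero]⟩
  rw [Multiset.toFinset_card_of_nodup
    (nodup_roots (galois_poly_separable p _ (dvd_pow_self p hn))),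
    IsAlgClosed.card_roots_eq_natDegree, FiniteField.X_pow_card_pow_sub_X_natDegree_eq k hn hp]


theorem exists_mem_stepanovIdeal_evalEval_mem_coeffDegreeLE (hirr : Irreducible a)
    (hder : derivative a ≠ 0) :
    ∃ (M B D : ℕ) (G : (AdjoinRoot a)[X][Y]),
      G ∈ stepanovIdeal (a.map (mapRingHom (algebraMap k (AdjoinRoot a)))) (fiberCofactor a)
        (AdjoinRoot.of a X) M ∧
      G ≠ 0 ∧ G.natDegree < a.natDegree ∧ B < M ∧
      ∀ m, G.evalEval (AdjoinRoot.of a X ^ m) (AdjoinRoot.root a ^ m) ∈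
        coeffDegreeLE ha (D + m * B) := by
  obtain ⟨d, hd⟩ := Nat.exists_eq_add_one_of_ne_zero
    fun h : a.natDegree = 0 => hder (derivative_of_natDegree_zero h)
  obtain ⟨e, he⟩ := exists_forall_natDegree_coeff_le a
  obtain ⟨G, hG, hG0, hGd, hGA⟩ := exists_stepanovPolynomial ha hirr hder
    (M := (e * d + 1) * (d + 1) + 1) (A := (e * d + 1) * d + 1) (by
      rw [hd, Nat.add_sub_cancel]
      calc _ = ((e * d + 1) * d + 1) * (d + 1) - 1 := Nat.eq_sub_of_add_eq (by ring)
        _ < _ := Nat.sub_lt (by positivity) one_pos)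
  obtain ⟨D, hD⟩ := exists_forall_evalEval_pow_mem_coeffDegreeLE ha he
    (Nat.le_of_lt_succ (hd ▸ hGd)) fun j => Nat.le_of_lt_succ (hGA j)
  refine ⟨_, _, D, G, hG, hG0, hGd, ?_, hD⟩
  calc _ < (e * d + 1) * d + e * d + 2 := Nat.lt_add_of_pos_right two_pos
    _ = _ := by ring

-- A weak form of the Lang-Weil theorem for curves over `𝔽_p`, by Stepanov's method.
theorem eventually_exists_evalEval_eq_zero [IsAlgClosed k] (ha : a.Monic)
    (hfix : a.map (mapRingHom (frobenius k p)) = a) (hp : 1 < p) (hirr : Irreducible a)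
    (hder : derivative a ≠ 0) (s : Finset k) :
    ∀ᶠ n in atTop, ∃ x y, x ^ p ^ n = x ∧ y ^ p ^ n = y ∧ a.evalEval x y = 0 ∧ x ∉ s := by
  classical
  obtain ⟨M, B, D, G, hG, hG0, hGd, hBM, hD⟩ :=
    exists_mem_stepanovIdeal_evalEval_mem_coeffDegreeLE ha hirr hder
  obtain ⟨δ, hδ, hsep⟩ := exists_forall_separable_map_evalRingHom ha hirr hder
  set s' := s ∪ δ.roots.toFinset
  have hfin := finite_setOf_evalEval_pow_eq_zero ha hfix hp hirr hG0 hGd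
  filter_upwards [Nat.cofinite_eq_atTop ▸ hfin.compl_mem_cofinite,
    eventually_gt_atTop (D + M * s'.card)] with n hn hnD
  by_contra! hno
  obtain ⟨S, hScard, hS⟩ :=
    exists_finset_card_eq_forall_mem_iff_pow_eq (k := k) hp (Nat.ne_zero_of_lt hnD)
  refine hn (coeffDegreeLE.eq_zero_of_forall_pow_dvd (hD (p ^ n)) (s := S \ s') (M := M)
    (fun c hc => ?_) ?_)
  · simp only [s', Finset.mem_sdiff, Finset.mem_union, hS, Multiset.mem_toFinset, mem_roots hδ,
      not_or] at hc
    exact pow_dvd_evalEval_of_mem_stepanovIdeal ha hfix hc.1 (hsep c hc.2.2)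
      (fun y hy h0 => hc.2.1 (hno c y hc.1 hy h0)) hG
  · have hcard : p ^ n ≤ (S \ s').card + s'.card := by
      rw [← hScard]
      exact (Finset.card_le_card (by simp)).trans (Finset.card_union_le _ _)
    refine lt_of_add_lt_add_right (a := M * s'.card) ?_
    calc D + p ^ n * B + M * s'.card = D + M * s'.card + p ^ n * B := by ring
      _ < p ^ n + p ^ n * B := by gcongr; exact hnD.trans (Nat.lt_pow_self hp)
      _ = (B + 1) * p ^ n := by ring
      _ ≤ M * ((S \ s').card + s'.card) := by gcongr; exact hBM
      _ = _ := by ring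

end Stepanov

section FiniteField

theorem exists_ringHom_galoisField_range_eq {k : Type*} [Field k] [IsAlgClosed k] (p : ℕ)
    [Fact p.Prime] [CharP k p] {n : ℕ} (hn : n ≠ 0) :
    ∃ φ : GaloisField p n →+* k, Set.range φ = {z | z ^ p ^ n = z} := by
  let _ : Algebra (ZMod p) k := ZMod.algebra k p
  let φ : GaloisField p n →ₐ[ZMod p] k := IsAlgClosed.lift
  have : Fintype (GaloisField p n) := Fintype.ofFinite _
  have hcard : Fintype.card (GaloisField p n) = p ^ n := by
    rw [Fintype.card_eq_nat_card, GaloisField.card p n hn]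
  obtain ⟨S, hS, hmem⟩ :=
    exists_finset_card_eq_forall_mem_iff_pow_eq (k := k) (Fact.out : p.Prime).one_lt hn
  have hS' : {z : k | z ^ p ^ n = z} = S := Set.ext fun z => (hmem z).symm
  refine ⟨φ, hS' ▸ Set.eq_of_subset_of_ncard_le ?_ ?_ S.finite_toSet⟩
  · rintro _ ⟨w, rfl⟩
    exact (hmem _).2 (by
      rw [RingHom.coe_coe, ← map_pow, ← hcard, FiniteField.pow_card])
  · rw [Set.ncard_coe_finset, hS, ← Set.image_univ,
      Set.ncard_image_of_injective _ (RingHom.injective _), Set.ncard_univ,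
      GaloisField.card p n hn]

end FiniteField

/-! ### The curve of an APN power map -/

section TwoPowMulOdd

variable {i ℓ : ℕ}

theorem natCast_eq_one_of_odd {R : Type*} [Semiring R] [CharP R 2] (hℓ : Odd ℓ) : (ℓ : R) = 1 :=
  natCast_eq_one_of_odd_of_two_eq_zero hℓ CharTwo.two_eq_zero

theorem odd_two_pow_mul_add_one (hi : i ≠ 0) (ℓ : ℕ) : Odd (2 ^ i * ℓ + 1) :=
  ((even_two.pow_of_ne_zero hi).mul_right ℓ).add_one

theorem three_le_two_pow_mul_add_one (hi : i ≠ 0) (hℓ : Odd ℓ) : 3 ≤ 2 ^ i * ℓ + 1 :=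
  Nat.succ_le_succ ((Nat.le_self_pow hi 2).trans (Nat.le_mul_of_pos_right _ hℓ.pos))

theorem three_le_two_mul_add_one (hℓ : Odd ℓ) : 3 ≤ 2 * ℓ + 1 :=
  three_le_two_pow_mul_add_one one_ne_zero hℓ

end TwoPowMulOdd

/-- Almost perfect nonlinear functions on a field of characteristic two, written with `+` instead of
`-`. -/
def IsAPN {F : Type*} [Field F] (f : F → F) : Prop :=
  ∀ a b, a ≠ 0 → Set.ncard {x | f (x + a) + f x = b} ≤ 2

theorem not_isAPN_of_pow_add_pow_add_eq_zero {F : Type*} [Field F] [Finite F] [CharP F 2] {t : ℕ}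
    {x y : F} (hx : x ≠ 1) (hy : y ≠ 1) (hxy : x ≠ y)
    (h : x ^ t + y ^ t + 1 + (x + y + 1) ^ t = 0) : ¬ IsAPN fun z : F => z ^ t := by
  intro hapn
  have two : (2 : F) = 0 := CharTwo.two_eq_zero
  have hsub : ({1, x, y} : Set F) ⊆ {z | (z + (x + 1)) ^ t + z ^ t = 1 + x ^ t} := by
    rintro z (rfl | rfl | rfl)
    · change (1 + (x + 1)) ^ t + 1 ^ t = 1 + x ^ t
      rw [show 1 + (x + 1) = x by linear_combination two, one_pow, add_comm]
    · change (z + (z + 1)) ^ t + z ^ t = 1 + z ^ t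
      rw [show z + (z + 1) = 1 by linear_combination z * two, one_pow]
    · change (z + (x + 1)) ^ t + z ^ t = 1 + x ^ t
      rw [show z + (x + 1) = x + z + 1 by ring]
      linear_combination h - (1 + x ^ t) * two
  have hthree : Set.ncard ({1, x, y} : Set F) = 3 :=
    Set.ncard_eq_three.2 ⟨1, x, y, hx.symm, hy.symm, hxy, rfl⟩
  have hle := (Set.ncard_le_ncard hsub (Set.toFinite _)).trans
    (hapn (x + 1) (1 + x ^ t) fun h0 => hx (by linear_combination h0 - two))
  omega

section Normalization

open Polynomial

variable {R : Type*} [CommRing R] [IsDomain R] (φ : R →+* R) {a g : R[X]}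

theorem exists_monic_associated_of_dvd_monic (hg : g.Monic) (h : a ∣ g) :
    ∃ b : R[X], b.Monic ∧ Associated a b := by
  obtain ⟨c, rfl⟩ := h
  obtain ⟨u, hu⟩ : IsUnit a.leadingCoeff :=
    .of_mul_eq_one _ ((leadingCoeff_mul a c).symm.trans hg.leadingCoeff)
  refine ⟨a * C ((u⁻¹ : Rˣ) : R), ?_, Units.map C.toMonoidHom u⁻¹, rfl⟩
  rw [Monic, leadingCoeff_mul, leadingCoeff_C, ← hu, Units.mul_inv]

theorem exists_monic_associated_map_eq_self (hg : g.Monic) (h : a ∣ g)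
    (hmap : Associated a (a.map φ)) : ∃ b : R[X], b.Monic ∧ Associated a b ∧ b.map φ = b := by
  obtain ⟨b, hb, hab⟩ := exists_monic_associated_of_dvd_monic hg h
  have hab' : Associated (a.map φ) (b.map φ) := hab.map (mapRingHom φ)
  exact ⟨b, hb, hab,
    eq_of_monic_of_associated (hb.map φ) hb ((hab'.symm.trans hmap.symm).trans hab)⟩

end Normalization

section Curve

open Polynomial Polynomial.Bivariate Filter

variable (k : Type*) [Field k] (t : ℕ)

/-- The curve `x ^ t + y ^ t + 1 + (x + y + 1) ^ t = 0` whose rational points off the lines `x = 1`,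
`y = 1`, `x = y` are the obstructions to `x ↦ x ^ t` being APN. -/
noncomputable def apnCurve : k[X][Y] :=
  Y ^ t + (Y + C (X + 1)) ^ t + C (X ^ t + 1)

variable {k t}

theorem evalEval_apnCurve (x y : k) :
    (apnCurve k t).evalEval x y = x ^ t + y ^ t + 1 + (x + y + 1) ^ t := by
  simp only [apnCurve, evalEval_add, evalEval_pow, evalEval_C, evalEval_X, eval_add, eval_pow,
    eval_X, eval_one]
  ring

variable [CharP k 2]

theorem apnCurve_natDegree_le (ht : 2 ≤ t) : (apnCurve k t).natDegree ≤ t - 1 := by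
  refine natDegree_le_iff_coeff_eq_zero.2 fun m hm => ?_
  rw [apnCurve, coeff_add, coeff_add, coeff_C, coeff_X_pow, coeff_X_add_C_pow,
    if_neg (by omega : m ≠ 0), add_zero]
  rcases eq_or_ne m t with rfl | hmt
  · simp [CharTwo.add_self_eq_zero]
  · rw [if_neg hmt, Nat.choose_eq_zero_of_lt (by omega)]
    simp

theorem apnCurve_coeff_sub_one (ht : 2 ≤ t) (hodd : Odd t) :
    (apnCurve k t).coeff (t - 1) = X + 1 := by
  rw [apnCurve, coeff_add, coeff_add, coeff_C, coeff_X_pow, coeff_X_add_C_pow,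
    if_neg (by omega), if_neg (by omega), Nat.choose_symm (by omega : 1 ≤ t), Nat.choose_one_right,
    natCast_eq_one_of_odd hodd, show t - (t - 1) = 1 by omega]
  ring

theorem apnCurve_leadingCoeff (ht : 2 ≤ t) (hodd : Odd t) :
    (apnCurve k t).leadingCoeff = X + 1 := by
  have hcoeff := apnCurve_coeff_sub_one (k := k) ht hodd
  have hdeg : (apnCurve k t).natDegree = t - 1 :=
    (apnCurve_natDegree_le ht).antisymm
      (le_natDegree_of_ne_zero (hcoeff ▸ (monic_X_add_C (1 : k)).ne_zero))
  rw [leadingCoeff, hdeg, hcoeff]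

theorem monic_of_apnCurve_eq (ht : 2 ≤ t) (hodd : Odd t) {g : k[X][Y]}
    (hg : apnCurve k t = C (X + 1) * ((Y + C 1) * (Y + C X)) * g) : g.Monic := by
  have hlead := apnCurve_leadingCoeff (k := k) ht hodd
  rw [hg, leadingCoeff_mul, leadingCoeff_mul, leadingCoeff_C,
    ((monic_X_add_C _).mul (monic_X_add_C _)).leadingCoeff, mul_one] at hlead
  exact mul_left_cancel₀ (monic_X_add_C (1 : k)).ne_zero (hlead.trans (mul_one _).symm)

theorem C_X_add_one_dvd_apnCurve : (C (X + 1) : k[X][Y]) ∣ apnCurve k t := by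
  have hpow : (X + 1 : k[X]) ∣ X ^ t + 1 := by
    simpa only [CharTwo.sub_eq_add, one_pow] using sub_dvd_pow_sub_pow (X : k[X]) 1 t
  have hpow' := sub_dvd_pow_sub_pow (Y + C (X + 1) : k[X][Y]) Y t
  rw [add_sub_cancel_left, CharTwo.sub_eq_add, add_comm (_ ^ t)] at hpow'
  exact dvd_add hpow' (_root_.map_dvd C hpow)

theorem X_add_C_one_dvd_apnCurve : (Y + C 1 : k[X][Y]) ∣ apnCurve k t := by
  rw [← CharTwo.sub_eq_add, dvd_iff_isRoot, IsRoot.def, apnCurve]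
  simp only [eval_add, eval_pow, eval_C, eval_X, one_pow]
  rw [add_left_comm (1 : k[X]) X, CharTwo.add_self_eq_zero, add_zero, add_comm 1,
    CharTwo.add_self_eq_zero]

theorem X_add_C_X_dvd_apnCurve : (Y + C X : k[X][Y]) ∣ apnCurve k t := by
  rw [← CharTwo.sub_eq_add, dvd_iff_isRoot, IsRoot.def, apnCurve]
  simp only [eval_add, eval_pow, eval_C, eval_X]
  rw [← add_assoc X X, CharTwo.add_self_eq_zero, zero_add, one_pow, CharTwo.add_self_eq_zero]

theorem exists_apnCurve_eq_lines_mul :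
    ∃ g : k[X][Y], apnCurve k t = C (X + 1) * ((Y + C 1) * (Y + C X)) * g := by
  have hX : (X + 1 : k[X]) ≠ 0 := (monic_X_add_C (1 : k)).ne_zero
  have hprime (c : k[X]) : Irreducible (Y + C c) := by
    rw [← CharTwo.sub_eq_add]
    exact irreducible_X_sub_C c
  have hlines : IsRelPrime (Y + C 1 : k[X][Y]) (Y + C X) :=
    (hprime 1).isRelPrime_iff_not_dvd.2 fun h => hX <| by
      rw [← CharTwo.sub_eq_add (Y : k[X][Y]), dvd_iff_isRoot, IsRoot.def] at h
      simpa [add_comm] using h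
  have hvert (c : k[X]) : IsRelPrime (C (X + 1 : k[X])) (Y + C c) :=
    .symm <| (hprime c).isRelPrime_iff_not_dvd.2 fun h => by
      simpa using (natDegree_le_of_dvd h (C_ne_zero.2 hX))
  exact ((hvert 1).mul_right (hvert X)).mul_dvd C_X_add_one_dvd_apnCurve
    (hlines.mul_dvd X_add_C_one_dvd_apnCurve X_add_C_X_dvd_apnCurve)

theorem derivative_apnCurve (hodd : Odd t) :
    derivative (apnCurve k t) = Y ^ (t - 1) + (Y + C (X + 1)) ^ (t - 1) := by
  simp only [apnCurve, derivative_add, derivative_X_pow, derivative_X_add_C_pow,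
    natCast_eq_one_of_odd hodd, map_one, one_mul, derivative_C, add_zero]

theorem eval_ne_zero_of_mul_dvd_apnCurve (ht : 2 ≤ t) (hodd : Odd t) {c : k[X]}
    (hc : c = 1 ∨ c = X) {a : k[X][Y]} (h : (Y + C c) * a ∣ apnCurve k t) : a.eval c ≠ 0 := by
  intro h0
  have hXt : (X ^ (t - 1) + 1 : k[X]) ≠ 0 := by
    simpa using X_pow_add_C_ne_zero (show 0 < t - 1 by omega) (1 : k)
  have hsq : (Y - C c) ^ 2 ∣ apnCurve k t := by
    rw [sq]
    refine (mul_dvd_mul ?_ (dvd_iff_isRoot.2 h0)).trans h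
    rw [CharTwo.sub_eq_add]
  have hder := pow_sub_one_dvd_derivative_of_pow_dvd hsq
  rw [pow_one, dvd_iff_isRoot, IsRoot.def, derivative_apnCurve hodd] at hder
  simp only [eval_add, eval_pow, eval_X, eval_C] at hder
  rcases hc with rfl | rfl
  · rw [add_left_comm (1 : k[X]) X, CharTwo.add_self_eq_zero, add_zero, one_pow, add_comm] at hder
    exact hXt hder
  · rw [← add_assoc X X, CharTwo.add_self_eq_zero, zero_add, one_pow] at hder
    exact hXt hder

theorem derivative_ne_zero_of_dvd_apnCurve {i ℓ : ℕ} (hi : i ≠ 0) (hℓ : Odd ℓ) {a : k[X][Y]}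
    (ha : a.Monic) (hirr : Irreducible a) (h : a ∣ apnCurve k (2 ^ i * ℓ + 1)) :
    derivative a ≠ 0 := by
  intro h0
  have dvd_derivative {P : k[X][Y]} (hP : a ∣ P) : a ∣ derivative P := by
    obtain ⟨b, rfl⟩ := hP
    rw [derivative_mul, h0, zero_mul, zero_add]
    exact dvd_mul_right _ _
  have hsum : a ∣ Y ^ ℓ + (Y + C (X + 1)) ^ ℓ := by
    have hpow := dvd_derivative h
    rw [derivative_apnCurve (odd_two_pow_mul_add_one hi ℓ), Nat.add_sub_cancel, mul_comm, pow_mul,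
      pow_mul, ← add_pow_char_pow] at hpow
    exact hirr.prime.dvd_of_dvd_pow hpow
  have hsum' : a ∣ Y ^ (ℓ - 1) + (Y + C (X + 1)) ^ (ℓ - 1) := by
    simpa only [derivative_add, derivative_X_pow, derivative_X_add_C_pow,
      natCast_eq_one_of_odd hℓ, map_one, one_mul] using dvd_derivative hsum
  have hvert : ¬ a ∣ C (X + 1) := fun hdvd => by
    have hdeg := natDegree_le_of_dvd hdvd (C_ne_zero.2 (monic_X_add_C (1 : k)).ne_zero)
    rw [natDegree_C, Nat.le_zero, ha.natDegree_eq_zero] at hdeg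
    exact hirr.not_isUnit (hdeg ▸ isUnit_one)
  obtain ⟨m, rfl⟩ := Nat.exists_eq_add_one_of_ne_zero hℓ.pos.ne'
  rw [Nat.add_sub_cancel] at hsum'
  have hright : a ∣ C (X + 1) * (Y + C (X + 1)) ^ m := by
    convert dvd_sub hsum (hsum'.mul_left Y) using 1
    ring
  have hleft : a ∣ C (X + 1) * Y ^ m := by
    convert dvd_sub (hsum'.mul_left (Y + C (X + 1))) hsum using 1
    ring
  have hYadd := hirr.prime.dvd_of_dvd_pow ((hirr.prime.dvd_or_dvd hright).resolve_left hvert)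
  have hY := hirr.prime.dvd_of_dvd_pow ((hirr.prime.dvd_or_dvd hleft).resolve_left hvert)
  exact hvert ((dvd_add_right hY).1 hYadd)

variable [IsAlgClosed k]

theorem not_isAPN_of_evalEval_apnCurve_eq_zero {n : ℕ} (hn : n ≠ 0) {x y : k}
    (hx : x ^ 2 ^ n = x) (hy : y ^ 2 ^ n = y) (hx1 : x ≠ 1) (hy1 : y ≠ 1) (hxy : x ≠ y)
    (h : (apnCurve k t).evalEval x y = 0) : ¬ IsAPN fun z : GaloisField 2 n => z ^ t := by
  obtain ⟨φ, hφ⟩ := exists_ringHom_galoisField_range_eq (k := k) 2 hn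
  obtain ⟨⟨x, rfl⟩, ⟨y, rfl⟩⟩ := And.intro (hφ.ge hx) (hφ.ge hy)
  rw [evalEval_apnCurve] at h
  exact not_isAPN_of_pow_add_pow_add_eq_zero (fun h1 => hx1 (by rw [h1, map_one]))
    (fun h1 => hy1 (by rw [h1, map_one])) (ne_of_apply_ne φ hxy) (φ.injective (by simpa using h))

theorem not_associated_map_frobenius_of_infinite_isAPN {i ℓ : ℕ} (hi : i ≠ 0) (hℓ : Odd ℓ)
    (h : {n : ℕ | 0 < n ∧ IsAPN fun x : GaloisField 2 n => x ^ (2 ^ i * ℓ + 1)}.Infinite)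
    {g a : k[X][Y]}
    (hg : apnCurve k (2 ^ i * ℓ + 1) = C (X + 1) * ((Y + C 1) * (Y + C X)) * g)
    (hirr : Irreducible a) (hag : a ∣ g) :
    ¬ Associated a (a.map (mapRingHom (frobenius k 2))) := by
  classical
  intro hass
  have ht : 2 ≤ 2 ^ i * ℓ + 1 := (Nat.le_succ 2).trans (three_le_two_pow_mul_add_one hi hℓ)
  have hodd := odd_two_pow_mul_add_one hi ℓ
  obtain ⟨b, hb, hab, hfix⟩ :=
    exists_monic_associated_map_eq_self _ (monic_of_apnCurve_eq ht hodd hg) hag hass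
  have hbg : b ∣ g := hab.symm.dvd.trans hag
  have hbirr : Irreducible b := hab.irreducible hirr
  have hbF : b ∣ apnCurve k (2 ^ i * ℓ + 1) := hg ▸ hbg.mul_left _
  have h1 : b.eval 1 ≠ 0 := eval_ne_zero_of_mul_dvd_apnCurve ht hodd (.inl rfl) <| hg ▸
    mul_dvd_mul ((dvd_mul_right _ _).mul_left _) hbg
  have hX : b.eval X ≠ 0 := eval_ne_zero_of_mul_dvd_apnCurve ht hodd (.inr rfl) <| hg ▸
    mul_dvd_mul ((dvd_mul_left _ _).mul_left _) hbg
  obtain ⟨n, ⟨hn, hapn⟩, x, y, hx, hy, hxy, hs⟩ :=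
    ((Nat.frequently_atTop_iff_infinite.2 h).and_eventually
      (eventually_exists_evalEval_eq_zero hb hfix one_lt_two hbirr
        (derivative_ne_zero_of_dvd_apnCurve hi hℓ hb hbirr hbF)
        ({1} ∪ (b.eval 1).roots.toFinset ∪ (b.eval X).roots.toFinset))).exists
  simp only [Finset.mem_union, Finset.mem_singleton, Multiset.mem_toFinset, mem_roots h1,
    mem_roots hX, not_or, IsRoot] at hs
  obtain ⟨⟨hx1, hxb1⟩, hxbX⟩ := hs
  have hF : (apnCurve k (2 ^ i * ℓ + 1)).evalEval x y = 0 := by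
    obtain ⟨c, hc⟩ := hbF
    rw [hc, evalEval_mul, hxy, zero_mul]
  refine not_isAPN_of_evalEval_apnCurve_eq_zero hn.ne' hx hy hx1 ?_ ?_ hF hapn
  · rintro rfl
    exact hxb1 (by simpa [evalEval] using hxy)
  · rintro rfl
    have heval := eval_map_apply (evalRingHom x) (p := b) X
    rw [coe_evalRingHom, eval_X] at heval
    exact hxbX (by rw [← heval, map_evalRingHom_eval, hxy])

end Curve

/-! ### Bézout's inequality -/

section Filtrations

open MvPolynomial

variable {σ R : Type*} [CommRing R] {p u v : MvPolynomial σ R} {i j m n N : ℕ}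

variable (σ R N) in
/-- The polynomials of total degree less than `N` (for `N = 0`, only the zero polynomial). -/
noncomputable def totalDegreeLT : Submodule R (MvPolynomial σ R) :=
  restrictSupport R {d | d.degree < N}

theorem mem_totalDegreeLT :
    p ∈ totalDegreeLT σ R N ↔ ∀ d : σ →₀ ℕ, N ≤ d.degree → coeff d p = 0 := by
  rw [totalDegreeLT, mem_restrictSupport_iff]
  exact ⟨fun h d hd => by_contra fun hne => hd.not_gt (h (mem_support_iff.2 hne)),
    fun h d hd => not_le.1 fun hle => mem_support_iff.1 hd (h d hle)⟩

theorem totalDegreeLT_mono (h : m ≤ n) : totalDegreeLT σ R m ≤ totalDegreeLT σ R n :=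
  restrictSupport_mono R fun _ hd => lt_of_lt_of_le hd h

theorem mem_totalDegreeLT_totalDegree_add_one (p : MvPolynomial σ R) :
    p ∈ totalDegreeLT σ R (p.totalDegree + 1) :=
  mem_totalDegreeLT.2 fun d hd => coeff_eq_zero_of_totalDegree_lt (by
    rw [← Finsupp.degree_apply]
    omega)

theorem homogeneousComponent_eq_zero_of_mem_totalDegreeLT (hp : p ∈ totalDegreeLT σ R i)
    (hij : i ≤ j) : homogeneousComponent j p = 0 := by
  ext d
  rw [coeff_homogeneousComponent, coeff_zero, ite_eq_right_iff]
  rintro rfl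
  exact mem_totalDegreeLT.1 hp d hij

theorem homogeneousComponent_eq_zero_of_mem_pow (hp : p ∈ idealOfVars σ R ^ i) (hij : j < i) :
    homogeneousComponent j p = 0 := by
  ext d
  rw [coeff_homogeneousComponent, coeff_zero, ite_eq_right_iff]
  rintro rfl
  exact (mem_pow_idealOfVars_iff' i p).1 hp d hij

theorem mem_totalDegreeLT_of_homogeneousComponent_eq_zero (hp : p ∈ totalDegreeLT σ R (i + 1))
    (h : homogeneousComponent i p = 0) : p ∈ totalDegreeLT σ R i := by
  refine mem_totalDegreeLT.2 fun d hd => hd.eq_or_lt.elim (fun hd => ?_) (mem_totalDegreeLT.1 hp d)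
  simpa [coeff_homogeneousComponent, hd] using congrArg (coeff d) h

theorem mem_pow_add_one_of_homogeneousComponent_eq_zero (hp : p ∈ idealOfVars σ R ^ i)
    (h : homogeneousComponent i p = 0) : p ∈ idealOfVars σ R ^ (i + 1) := by
  refine (mem_pow_idealOfVars_iff' _ p).2 fun d hd => (Nat.lt_succ_iff.1 hd).eq_or_lt.elim
    (fun hd => ?_) ((mem_pow_idealOfVars_iff' i p).1 hp d)
  simpa [coeff_homogeneousComponent, hd] using congrArg (coeff d) h

theorem mem_totalDegreeLT_of_forall_homogeneousComponent_eq_zero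
    (h : ∀ m, N ≤ m → homogeneousComponent m p = 0) : p ∈ totalDegreeLT σ R N :=
  mem_totalDegreeLT.2 fun d hd => by
    simpa [coeff_homogeneousComponent] using congrArg (coeff d) (h _ hd)

theorem mem_pow_of_forall_homogeneousComponent_eq_zero
    (h : ∀ m < N, homogeneousComponent m p = 0) : p ∈ idealOfVars σ R ^ N :=
  (mem_pow_idealOfVars_iff' _ _).2 fun d hd => by
    simpa [coeff_homogeneousComponent] using congrArg (coeff d) (h _ hd)

theorem mem_totalDegreeLT_of_isHomogeneous (hp : p.IsHomogeneous i) (hij : i < j) :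
    p ∈ totalDegreeLT σ R j :=
  mem_totalDegreeLT.2 fun _ hd => hp.coeff_eq_zero (hij.trans_le hd).ne'

theorem mem_pow_of_isHomogeneous (hp : p.IsHomogeneous i) : p ∈ idealOfVars σ R ^ i :=
  (mem_pow_idealOfVars_iff' _ _).2 fun _ hd => hp.coeff_eq_zero hd.ne

theorem sub_homogeneousComponent_mem_totalDegreeLT (hp : p ∈ totalDegreeLT σ R (i + 1)) :
    p - homogeneousComponent i p ∈ totalDegreeLT σ R i := by
  refine mem_totalDegreeLT_of_homogeneousComponent_eq_zero (sub_mem hp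
    (mem_totalDegreeLT_of_isHomogeneous (homogeneousComponent_isHomogeneous i p) i.lt_succ_self)) ?_
  rw [map_sub, homogeneousComponent_eq_self (homogeneousComponent_isHomogeneous i p), sub_self]

theorem sub_homogeneousComponent_mem_pow (hp : p ∈ idealOfVars σ R ^ i) :
    p - homogeneousComponent i p ∈ idealOfVars σ R ^ (i + 1) := by
  refine mem_pow_add_one_of_homogeneousComponent_eq_zero (sub_mem hp
    (mem_pow_of_isHomogeneous (homogeneousComponent_isHomogeneous i p))) ?_
  rw [map_sub, homogeneousComponent_eq_self (homogeneousComponent_isHomogeneous i p), sub_self]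

theorem mul_mem_totalDegreeLT (hu : u ∈ totalDegreeLT σ R (i + 1))
    (hv : v ∈ totalDegreeLT σ R m) : u * v ∈ totalDegreeLT σ R (i + m) := by
  classical
  refine mem_totalDegreeLT.2 fun d hd => (coeff_mul u v d).trans <|
    Finset.sum_eq_zero fun ab hab => ?_
  have hsum : ab.1.degree + ab.2.degree = d.degree := by
    rw [← Finset.HasAntidiagonal.mem_antidiagonal.1 hab, map_add]
  by_cases ha : i + 1 ≤ ab.1.degree
  · rw [mem_totalDegreeLT.1 hu _ ha, zero_mul]
  · rw [mem_totalDegreeLT.1 hv _ (by omega), mul_zero]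

theorem homogeneousComponent_add_mul_of_mem_totalDegreeLT (hu : u ∈ totalDegreeLT σ R (i + 1))
    (hv : v ∈ totalDegreeLT σ R (m + 1)) :
    homogeneousComponent (i + m) (u * v) = homogeneousComponent i u * homogeneousComponent m v := by
  have hu' := homogeneousComponent_isHomogeneous i u
  have hv' := homogeneousComponent_isHomogeneous m v
  have hsplit : u * v = homogeneousComponent i u * homogeneousComponent m v +
      (v * (u - homogeneousComponent i u) +
        homogeneousComponent i u * (v - homogeneousComponent m v)) := by ring
  have hlow : v * (u - homogeneousComponent i u) +
      homogeneousComponent i u * (v - homogeneousComponent m v) ∈ totalDegreeLT σ R (i + m) :=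
    add_mem
      (add_comm m i ▸ mul_mem_totalDegreeLT hv (sub_homogeneousComponent_mem_totalDegreeLT hu))
      (mul_mem_totalDegreeLT (mem_totalDegreeLT_of_isHomogeneous hu' i.lt_succ_self)
        (sub_homogeneousComponent_mem_totalDegreeLT hv))
  rw [hsplit, map_add, homogeneousComponent_eq_zero_of_mem_totalDegreeLT hlow le_rfl, add_zero,
    homogeneousComponent_eq_self (hu'.mul hv')]

theorem homogeneousComponent_add_mul_of_mem_pow (hu : u ∈ idealOfVars σ R ^ i)
    (hv : v ∈ idealOfVars σ R ^ m) :
    homogeneousComponent (i + m) (u * v) = homogeneousComponent i u * homogeneousComponent m v := by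
  have hu' := homogeneousComponent_isHomogeneous i u
  have hv' := homogeneousComponent_isHomogeneous m v
  have hsplit : u * v = homogeneousComponent i u * homogeneousComponent m v +
      ((u - homogeneousComponent i u) * v +
        homogeneousComponent i u * (v - homogeneousComponent m v)) := by ring
  have hhigh : (u - homogeneousComponent i u) * v +
      homogeneousComponent i u * (v - homogeneousComponent m v) ∈
        idealOfVars σ R ^ (i + m + 1) := by
    refine add_mem ?_ ?_
    · rw [add_right_comm, pow_add]
      exact Ideal.mul_mem_mul (sub_homogeneousComponent_mem_pow hu) hv
    · rw [add_assoc, pow_add]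
      exact Ideal.mul_mem_mul (mem_pow_of_isHomogeneous hu') (sub_homogeneousComponent_mem_pow hv)
  rw [hsplit, map_add, homogeneousComponent_eq_zero_of_mem_pow hhigh (Nat.lt_succ_self _), add_zero,
    homogeneousComponent_eq_self (hu'.mul hv')]

theorem exists_homogeneousComponent_ne_zero (hp : p ≠ 0) : ∃ n, homogeneousComponent n p ≠ 0 := by
  by_contra! h
  exact hp (by rw [← sum_homogeneousComponent p]; exact Finset.sum_eq_zero fun n _ => h n)

variable [IsDomain R]

theorem mem_totalDegreeLT_of_mul_mem (hv : v ∈ totalDegreeLT σ R (m + 1))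
    (hv0 : homogeneousComponent m v ≠ 0) (h : u * v ∈ totalDegreeLT σ R (i + m)) :
    u ∈ totalDegreeLT σ R i := by
  suffices H : ∀ e, u ∈ totalDegreeLT σ R (i + e) → u ∈ totalDegreeLT σ R i from
    H (u.totalDegree + 1)
      (totalDegreeLT_mono (Nat.le_add_left _ i) (mem_totalDegreeLT_totalDegree_add_one u))
  intro e
  induction e with
  | zero => exact id
  | succ e ih =>
    intro hu
    replace hu : u ∈ totalDegreeLT σ R (i + e + 1) := hu
    refine ih (mem_totalDegreeLT_of_homogeneousComponent_eq_zero hu ?_)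
    refine (mul_eq_zero.1 ?_).resolve_right hv0
    rw [← homogeneousComponent_add_mul_of_mem_totalDegreeLT hu hv]
    exact homogeneousComponent_eq_zero_of_mem_totalDegreeLT h (by omega)

theorem mem_pow_of_mul_mem_pow (hv : v ∈ idealOfVars σ R ^ m)
    (hv0 : homogeneousComponent m v ≠ 0) (h : u * v ∈ idealOfVars σ R ^ (i + m)) :
    u ∈ idealOfVars σ R ^ i := by
  induction i with
  | zero => simp
  | succ i ih =>
    have hu := ih (Ideal.pow_le_pow_right (by omega) h)
    refine mem_pow_add_one_of_homogeneousComponent_eq_zero hu ?_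
    refine (mul_eq_zero.1 ?_).resolve_right hv0
    rw [← homogeneousComponent_add_mul_of_mem_pow hu hv]
    exact homogeneousComponent_eq_zero_of_mem_pow h (by omega)

theorem mem_pow_sub_of_mul_mem_pow (hv : v ∈ idealOfVars σ R ^ m)
    (hv0 : homogeneousComponent m v ≠ 0) (h : u * v ∈ idealOfVars σ R ^ N) :
    u ∈ idealOfVars σ R ^ (N - m) := by
  rcases le_total N m with hN | hN
  · simp [Nat.sub_eq_zero_of_le hN]
  · exact mem_pow_of_mul_mem_pow hv hv0 (by rwa [Nat.sub_add_cancel hN])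

end Filtrations

section Syzygies

open MvPolynomial

theorem exists_eq_mul_of_mul_add_mul_eq_zero {R : Type*} [CommRing R] [IsDomain R]
    [DecompositionMonoid R] {a b p q : R} (hrel : IsRelPrime p q) (hq : q ≠ 0)
    (h : a * p + b * q = 0) : ∃ c, a = c * q ∧ b = -(c * p) := by
  obtain ⟨c, rfl⟩ : q ∣ a := hrel.symm.dvd_of_dvd_mul_right
    ⟨-b, by linear_combination h⟩
  exact ⟨c, mul_comm q c, mul_right_cancel₀ hq (by linear_combination h)⟩

variable {σ R : Type*} [CommRing R] [IsDomain R] [UniqueFactorizationMonoid R]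
  {α β u v : MvPolynomial σ R} {i m n N : ℕ}

theorem exists_sub_mul_mem_totalDegreeLT_of_mem_add_one (hu : u ∈ totalDegreeLT σ R (m + 1))
    (hv : v ∈ totalDegreeLT σ R (n + 1)) (hv0 : homogeneousComponent n v ≠ 0)
    (hrel : IsRelPrime (homogeneousComponent m u) (homogeneousComponent n v))
    (hα : α ∈ totalDegreeLT σ R (i + n + 1)) (hβ : β ∈ totalDegreeLT σ R (i + m + 1))
    (h : α * u + β * v ∈ totalDegreeLT σ R (i + m + n)) :
    ∃ γ, α - γ * v ∈ totalDegreeLT σ R (i + n) ∧ β + γ * u ∈ totalDegreeLT σ R (i + m) := by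
  have htop : homogeneousComponent (i + n) α * homogeneousComponent m u +
      homogeneousComponent (i + m) β * homogeneousComponent n v = 0 := by
    rw [← homogeneousComponent_add_mul_of_mem_totalDegreeLT hα hu,
      ← homogeneousComponent_add_mul_of_mem_totalDegreeLT hβ hv, add_right_comm, ← map_add]
    exact homogeneousComponent_eq_zero_of_mem_totalDegreeLT h le_rfl
  obtain ⟨γ, hγα, hγβ⟩ := exists_eq_mul_of_mul_add_mul_eq_zero hrel hv0 htop
  have hv' := homogeneousComponent_isHomogeneous n v
  have hγ : γ ∈ totalDegreeLT σ R (i + 1) :=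
    mem_totalDegreeLT_of_mul_mem (mem_totalDegreeLT_of_isHomogeneous hv' n.lt_succ_self)
      (by rwa [homogeneousComponent_eq_self hv']) (hγα ▸ mem_totalDegreeLT_of_isHomogeneous
        (homogeneousComponent_isHomogeneous _ α) (by omega))
  refine ⟨γ, ?_, ?_⟩
  · rw [show α - γ * v = (α - homogeneousComponent (i + n) α) -
      γ * (v - homogeneousComponent n v) by rw [hγα]; ring]
    exact sub_mem (sub_homogeneousComponent_mem_totalDegreeLT hα)
      (mul_mem_totalDegreeLT hγ (sub_homogeneousComponent_mem_totalDegreeLT hv))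
  · rw [show β + γ * u = (β - homogeneousComponent (i + m) β) +
      γ * (u - homogeneousComponent m u) by rw [hγβ]; ring]
    exact add_mem (sub_homogeneousComponent_mem_totalDegreeLT hβ)
      (mul_mem_totalDegreeLT hγ (sub_homogeneousComponent_mem_totalDegreeLT hu))

theorem exists_sub_mul_mem_totalDegreeLT (hu : u ∈ totalDegreeLT σ R (m + 1))
    (hv : v ∈ totalDegreeLT σ R (n + 1)) (hv0 : homogeneousComponent n v ≠ 0)
    (hrel : IsRelPrime (homogeneousComponent m u) (homogeneousComponent n v))
    (h : α * u + β * v ∈ totalDegreeLT σ R (i + m + n)) :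
    ∃ γ, α - γ * v ∈ totalDegreeLT σ R (i + n) ∧ β + γ * u ∈ totalDegreeLT σ R (i + m) := by
  suffices H : ∀ e (α β : MvPolynomial σ R), α * u + β * v ∈ totalDegreeLT σ R (i + m + n) →
      α ∈ totalDegreeLT σ R (i + e + n) → β ∈ totalDegreeLT σ R (i + e + m) →
      ∃ γ, α - γ * v ∈ totalDegreeLT σ R (i + n) ∧ β + γ * u ∈ totalDegreeLT σ R (i + m) from
    H (α.totalDegree + β.totalDegree + 1) α β h
      (totalDegreeLT_mono (by omega) (mem_totalDegreeLT_totalDegree_add_one α))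
      (totalDegreeLT_mono (by omega) (mem_totalDegreeLT_totalDegree_add_one β))
  intro e
  induction e with
  | zero => exact fun α β _ hα hβ => ⟨0, by simpa using hα, by simpa using hβ⟩
  | succ e ih =>
    intro α β h hα hβ
    rw [← add_assoc i e 1, add_right_comm] at hα hβ
    obtain ⟨γ, hγα, hγβ⟩ := exists_sub_mul_mem_totalDegreeLT_of_mem_add_one hu hv hv0 hrel hα hβ
      (totalDegreeLT_mono (by omega) h)
    obtain ⟨δ, hδα, hδβ⟩ := ih (α - γ * v) (β + γ * u) (by convert h using 1; ring) hγα hγβ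
    exact ⟨γ + δ, by convert hδα using 1; ring, by convert hδβ using 1; ring⟩

theorem exists_sub_mul_mem_pow_add_one (hu : u ∈ idealOfVars σ R ^ m)
    (hv : v ∈ idealOfVars σ R ^ n) (hv0 : homogeneousComponent n v ≠ 0)
    (hrel : IsRelPrime (homogeneousComponent m u) (homogeneousComponent n v))
    (hm : m ≤ N) (hn : n ≤ N) (hα : α ∈ idealOfVars σ R ^ (N - m))
    (hβ : β ∈ idealOfVars σ R ^ (N - n)) (h : α * u + β * v ∈ idealOfVars σ R ^ (N + 1)) :
    ∃ γ, α - γ * v ∈ idealOfVars σ R ^ (N + 1 - m) ∧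
      β + γ * u ∈ idealOfVars σ R ^ (N + 1 - n) := by
  have hbot : homogeneousComponent (N - m) α * homogeneousComponent m u +
      homogeneousComponent (N - n) β * homogeneousComponent n v = 0 := by
    rw [← homogeneousComponent_add_mul_of_mem_pow hα hu,
      ← homogeneousComponent_add_mul_of_mem_pow hβ hv, Nat.sub_add_cancel hm,
      Nat.sub_add_cancel hn, ← map_add]
    exact homogeneousComponent_eq_zero_of_mem_pow h N.lt_succ_self
  obtain ⟨γ, hγα, hγβ⟩ := exists_eq_mul_of_mul_add_mul_eq_zero hrel hv0 hbot
  have hv' := homogeneousComponent_isHomogeneous n v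
  have hγ : γ ∈ idealOfVars σ R ^ (N - m - n) :=
    mem_pow_sub_of_mul_mem_pow (mem_pow_of_isHomogeneous hv')
      (by rwa [homogeneousComponent_eq_self hv'])
      (hγα ▸ mem_pow_of_isHomogeneous (homogeneousComponent_isHomogeneous _ α))
  have hmul {w : MvPolynomial σ R} {d : ℕ} (hw : w ∈ idealOfVars σ R ^ d) :
      γ * (w - homogeneousComponent d w) ∈ idealOfVars σ R ^ (N - m - n + (d + 1)) := by
    rw [pow_add]
    exact Ideal.mul_mem_mul hγ (sub_homogeneousComponent_mem_pow hw)
  refine ⟨γ, ?_, ?_⟩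
  · rw [show α - γ * v = (α - homogeneousComponent (N - m) α) -
      γ * (v - homogeneousComponent n v) by rw [hγα]; ring]
    exact sub_mem (Ideal.pow_le_pow_right (by omega) (sub_homogeneousComponent_mem_pow hα))
      (Ideal.pow_le_pow_right (by omega) (hmul hv))
  · rw [show β + γ * u = (β - homogeneousComponent (N - n) β) +
      γ * (u - homogeneousComponent m u) by rw [hγβ]; ring]
    exact add_mem (Ideal.pow_le_pow_right (by omega) (sub_homogeneousComponent_mem_pow hβ))
      (Ideal.pow_le_pow_right (by omega) (hmul hu))

theorem exists_sub_mul_mem_pow (hu : u ∈ idealOfVars σ R ^ m) (hv : v ∈ idealOfVars σ R ^ n)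
    (hu0 : homogeneousComponent m u ≠ 0) (hv0 : homogeneousComponent n v ≠ 0)
    (hrel : IsRelPrime (homogeneousComponent m u) (homogeneousComponent n v))
    (h : α * u + β * v ∈ idealOfVars σ R ^ N) :
    ∃ γ, α - γ * v ∈ idealOfVars σ R ^ (N - m) ∧ β + γ * u ∈ idealOfVars σ R ^ (N - n) := by
  have hbase {N : ℕ} (hN : N ≤ max m n) (h : α * u + β * v ∈ idealOfVars σ R ^ N) :
      α ∈ idealOfVars σ R ^ (N - m) ∧ β ∈ idealOfVars σ R ^ (N - n) := by
    constructor
    · rcases le_or_gt N m with hNm | hNm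
      · simp [Nat.sub_eq_zero_of_le hNm]
      · refine mem_pow_sub_of_mul_mem_pow hu hu0 ((add_mem_cancel_right ?_).1 h)
        exact Ideal.mul_mem_left _ _ (Ideal.pow_le_pow_right (by omega) hv)
    · rcases le_or_gt N n with hNn | hNn
      · simp [Nat.sub_eq_zero_of_le hNn]
      · refine mem_pow_sub_of_mul_mem_pow hv hv0 ((add_mem_cancel_left ?_).1 h)
        exact Ideal.mul_mem_left _ _ (Ideal.pow_le_pow_right (by omega) hu)
  rcases le_total N (max m n) with hN | hN
  · exact ⟨0, by simpa using hbase hN h⟩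
  induction N, hN using Nat.le_induction with
  | base => exact ⟨0, by simpa using hbase le_rfl h⟩
  | succ e he ih =>
    obtain ⟨γ, hγα, hγβ⟩ := ih (Ideal.pow_le_pow_right e.le_succ h)
    obtain ⟨δ, hδα, hδβ⟩ := exists_sub_mul_mem_pow_add_one hu hv hv0 hrel (by omega) (by omega)
      hγα hγβ (by convert h using 1; ring)
    exact ⟨γ + δ, by convert hδα using 1; ring, by convert hδβ using 1; ring⟩

end Syzygies

section Exactness

universe u

open LinearMap

variable {k : Type*} [Field k] {A B C D : Type u} [AddCommGroup A] [Module k A] [AddCommGroup B]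
  [Module k B] [AddCommGroup C] [Module k C] [AddCommGroup D] [Module k D]
  {f : A →ₗ[k] B} {g : B →ₗ[k] C} {h : C →ₗ[k] D}

theorem rank_add_rank_le_of_ker_le_range (hfg : ker g ≤ range f) (hgh : h ∘ₗ g = 0)
    (hh : Function.Surjective h) :
    Module.rank k D + Module.rank k B ≤ Module.rank k C + Module.rank k A := by
  rw [rank_eq_of_surjective hh, ← rank_range_add_rank_ker g, ← add_assoc]
  gcongr
  · exact Submodule.rank_mono (range_le_ker_iff.2 hgh)
  · exact (Submodule.rank_mono hfg).trans (rank_range_le f)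

theorem rank_le_add_rank_of_ker_le_range (hgh : ker h ≤ range g) :
    Module.rank k C ≤ Module.rank k D + Module.rank k B := by
  rw [← rank_range_add_rank_ker h]
  gcongr
  · exact (range h).rank_le
  · exact (Submodule.rank_mono hgh).trans (rank_range_le g)

end Exactness

section Quotients

open LinearMap

universe u

variable {k : Type*} {S : Type u} [Field k] [CommRing S] [Algebra k S]

theorem rank_quotient_le_rank_quotient {I J : Ideal S} (h : I ≤ J) :
    Module.rank k (S ⧸ J) ≤ Module.rank k (S ⧸ I) :=
  (Ideal.Quotient.factorₐ k h).toLinearMap.rank_le_of_surjective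
    (Ideal.Quotient.factor_surjective h)

/-- Multiplication by `w` as a map `S ⧸ I → S ⧸ J`, for ideals with `w I ⊆ J`. -/
def mulQuotient (k : Type*) [CommSemiring k] [Algebra k S] {I J : Ideal S} (w : S)
    (hw : ∀ x ∈ I, x * w ∈ J) : (S ⧸ I) →ₗ[k] S ⧸ J :=
  (Submodule.mapQ I J (mulRight S w) hw).restrictScalars k

theorem rank_quotient_span_pair_sup_add_le {I J K L : Ideal S} {u v : S}
    (hJ : ∀ x ∈ I, x * v ∈ J) (hK : ∀ x ∈ I, x * u ∈ K) (hJL : ∀ x ∈ J, x * u ∈ L)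
    (hKL : ∀ x ∈ K, x * v ∈ L)
    (hsyz : ∀ α β, α * u + β * v ∈ L → ∃ γ, α - γ * v ∈ J ∧ β + γ * u ∈ K) :
    Module.rank k (S ⧸ (Ideal.span {u, v} ⊔ L)) +
      (Module.rank k (S ⧸ J) + Module.rank k (S ⧸ K)) ≤
      Module.rank k (S ⧸ L) + Module.rank k (S ⧸ I) := by
  let f : (S ⧸ I) →ₗ[k] (S ⧸ J) × (S ⧸ K) := (mulQuotient k v hJ).prod (-mulQuotient k u hK)
  let g : (S ⧸ J) × (S ⧸ K) →ₗ[k] S ⧸ L := coprod (mulQuotient k u hJL) (mulQuotient k v hKL)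
  let h : (S ⧸ L) →ₗ[k] S ⧸ (Ideal.span {u, v} ⊔ L) :=
    (Ideal.Quotient.factorₐ k le_sup_right).toLinearMap
  have hfg : ker g ≤ range f := by
    rintro ⟨a, b⟩ hab
    obtain ⟨α, rfl⟩ := Ideal.Quotient.mk_surjective a
    obtain ⟨β, rfl⟩ := Ideal.Quotient.mk_surjective b
    obtain ⟨γ, hα, hβ⟩ := hsyz α β (Ideal.Quotient.eq_zero_iff_mem.1 hab)
    refine ⟨Ideal.Quotient.mk _ γ, Prod.ext (Ideal.Quotient.eq.2 hα).symm ?_⟩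
    refine (Ideal.Quotient.eq (I := K).2 ?_).symm
    rwa [sub_neg_eq_add]
  have hgh : h ∘ₗ g = 0 := by
    refine LinearMap.ext fun ⟨a, b⟩ => ?_
    obtain ⟨α, rfl⟩ := Ideal.Quotient.mk_surjective a
    obtain ⟨β, rfl⟩ := Ideal.Quotient.mk_surjective b
    exact Ideal.Quotient.eq_zero_iff_mem.2
      (Ideal.mem_sup_left (Ideal.mem_span_pair.2 ⟨α, β, rfl⟩))
  rw [← rank_prod']
  exact rank_add_rank_le_of_ker_le_range hfg hgh (Ideal.Quotient.factor_surjective le_sup_right)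

end Quotients

section Dimension

open MvPolynomial

theorem isCompl_totalDegreeLT_pow_idealOfVars (σ R : Type*) [CommRing R] (N : ℕ) :
    IsCompl ((idealOfVars σ R ^ N).restrictScalars R) (totalDegreeLT σ R N) := by
  refine ⟨Submodule.disjoint_def.2 fun p hp hp' => ?_,
    codisjoint_iff.2 (eq_top_iff.2 fun p _ => ?_)⟩
  · ext d
    rcases lt_or_ge d.degree N with hd | hd
    · exact (mem_pow_idealOfVars_iff' N p).1 hp d hd
    · exact mem_totalDegreeLT.1 hp' d hd
  · have hp : p - ∑ i ∈ Finset.range N, homogeneousComponent i p ∈ idealOfVars σ R ^ N :=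
      (mem_pow_idealOfVars_iff' N _).2 fun d hd => by
        simp [coeff_homogeneousComponent, coeff_sum, hd]
    have hp' : ∑ i ∈ Finset.range N, homogeneousComponent i p ∈ totalDegreeLT σ R N :=
      sum_mem fun i hi => mem_totalDegreeLT_of_isHomogeneous
        (homogeneousComponent_isHomogeneous i p) (Finset.mem_range.1 hi)
    exact Submodule.mem_sup.2 ⟨_, hp, _, hp', sub_add_cancel _ _⟩

theorem two_mul_ncard_degree_lt (N : ℕ) :
    2 * {d : Fin 2 →₀ ℕ | d.degree < N}.ncard = N * (N + 1) := by
  let e : ℕ × ℕ ≃ (Fin 2 →₀ ℕ) := (finTwoArrowEquiv ℕ).symm.trans Finsupp.equivFunOnFinite.symm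
  have hdegree (ab : ℕ × ℕ) : (e ab).degree = ab.1 + ab.2 := by
    rw [Finsupp.degree_eq_sum, Fin.sum_univ_two]
    simp [e]
  have hset : {d : Fin 2 →₀ ℕ | d.degree < N} =
      ((Finset.range N).biUnion Finset.HasAntidiagonal.antidiagonal).map e.toEmbedding := by
    ext d
    obtain ⟨ab, rfl⟩ := e.surjective d
    simp [hdegree]
  rw [hset, Set.ncard_coe_finset, Finset.card_map, Finset.card_biUnion, mul_comm,
    Finset.sum_congr rfl fun i _ => Finset.Nat.card_antidiagonal i]
  · rw [mul_comm N]
    exact (congrArg (· * 2) (Finset.sum_range_succ' id N)).symm.trans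
      (Finset.sum_range_id_mul_two (N + 1))
  · exact fun i _ j _ hij => Finset.disjoint_left.2 fun ab hi hj => hij <|
      (Finset.HasAntidiagonal.mem_antidiagonal.1 hi).symm.trans
        (Finset.HasAntidiagonal.mem_antidiagonal.1 hj)

variable (k : Type*) [Field k] (N : ℕ)

instance {σ : Type*} [Finite σ] : Module.Finite k (totalDegreeLT σ k N) :=
  have := (Finsupp.finite_of_degree_lt (σ := σ) N).to_subtype
  Module.Finite.of_basis (basisRestrictSupport k _)

theorem two_mul_finrank_totalDegreeLT :
    2 * Module.finrank k (totalDegreeLT (Fin 2) k N) = N * (N + 1) := by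
  rw [← two_mul_ncard_degree_lt, totalDegreeLT,
    Module.finrank_eq_nat_card_basis (basisRestrictSupport k _), Nat.card_coe_set_eq]

theorem rank_quotient_pow_idealOfVars :
    Module.rank k (MvPolynomial (Fin 2) k ⧸ idealOfVars (Fin 2) k ^ N) =
      Module.finrank k (totalDegreeLT (Fin 2) k N) := by
  rw [Module.finrank_eq_rank]
  exact ((Submodule.Quotient.restrictScalarsEquiv k (idealOfVars (Fin 2) k ^ N)).symm.trans
    (Submodule.quotientEquivOfIsCompl _ _
      (isCompl_totalDegreeLT_pow_idealOfVars (Fin 2) k N))).rank_eq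

end Dimension

section Multiplicity

open MvPolynomial LinearMap

variable {k : Type*} [Field k] {u v : MvPolynomial (Fin 2) k} {m n N : ℕ}

theorem mul_le_rank_quotient_span_pair (hu : u ∈ totalDegreeLT (Fin 2) k (m + 1))
    (hv : v ∈ totalDegreeLT (Fin 2) k (n + 1)) (hv0 : homogeneousComponent n v ≠ 0)
    (hrel : IsRelPrime (homogeneousComponent m u) (homogeneousComponent n v)) :
    (m * n : ℕ) ≤ Module.rank k (MvPolynomial (Fin 2) k ⧸ Ideal.span {u, v}) := by
  let g : totalDegreeLT (Fin 2) k n × totalDegreeLT (Fin 2) k m →ₗ[k]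
      totalDegreeLT (Fin 2) k (m + n) :=
    coprod ((mulLeft k u).restrict fun a ha => mul_mem_totalDegreeLT hu ha)
      ((mulLeft k v).restrict fun b hb => add_comm n m ▸ mul_mem_totalDegreeLT hv hb)
  let h : totalDegreeLT (Fin 2) k (m + n) →ₗ[k] MvPolynomial (Fin 2) k ⧸ Ideal.span {u, v} :=
    (Ideal.Quotient.mkₐ k _).toLinearMap ∘ₗ Submodule.subtype _
  have hgh : ker h ≤ range g := by
    rintro ⟨w, hw⟩ hwI
    obtain ⟨α, β, rfl⟩ := Ideal.mem_span_pair.1 (Ideal.Quotient.eq_zero_iff_mem.1 hwI)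
    obtain ⟨γ, hα, hβ⟩ :=
      exists_sub_mul_mem_totalDegreeLT (i := 0) hu hv hv0 hrel (by simpa using hw)
    refine ⟨(⟨_, zero_add n ▸ hα⟩, ⟨_, zero_add m ▸ hβ⟩), Subtype.ext ?_⟩
    change u * (α - γ * v) + v * (β + γ * u) = α * u + β * v
    ring
  have hrank := rank_le_add_rank_of_ker_le_range hgh
  rcases le_or_gt Cardinal.aleph0 (Module.rank k (MvPolynomial (Fin 2) k ⧸ Ideal.span {u, v}))
    with hinf | hfin
  · exact Cardinal.natCast_lt_aleph0.le.trans hinf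
  obtain ⟨d, hd⟩ := Cardinal.lt_aleph0.1 hfin
  rw [hd, rank_prod', ← Module.finrank_eq_rank, ← Module.finrank_eq_rank,
    ← Module.finrank_eq_rank] at hrank
  rw [hd]
  norm_cast at hrank ⊢
  have hm := two_mul_finrank_totalDegreeLT k m
  have hn := two_mul_finrank_totalDegreeLT k n
  have hmn := two_mul_finrank_totalDegreeLT k (m + n)
  nlinarith

theorem rank_quotient_span_pair_sup_pow_add_le (hu : u ∈ idealOfVars (Fin 2) k ^ m)
    (hv : v ∈ idealOfVars (Fin 2) k ^ n)
    (hu0 : homogeneousComponent m u ≠ 0) (hv0 : homogeneousComponent n v ≠ 0)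
    (hrel : IsRelPrime (homogeneousComponent m u) (homogeneousComponent n v)) (j : ℕ) :
    Module.rank k (MvPolynomial (Fin 2) k ⧸
      (Ideal.span {u, v} ⊔ idealOfVars (Fin 2) k ^ (j + m + n))) ≤ (m * n : ℕ) := by
  set M := idealOfVars (Fin 2) k
  have hmul {w : MvPolynomial (Fin 2) k} {d : ℕ} (hw : w ∈ M ^ d) (i N : ℕ) (hN : N = i + d) :
      ∀ x ∈ M ^ i, x * w ∈ M ^ N := fun x hx => by
    rw [hN, pow_add]
    exact Ideal.mul_mem_mul hx hw
  have hrank := rank_quotient_span_pair_sup_add_le (k := k) (hmul hv j _ rfl) (hmul hu j _ rfl)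
    (hmul hu (j + n) (j + m + n) (by ring)) (hmul hv (j + m) (j + m + n) rfl) fun α β h => by
      obtain ⟨γ, hα, hβ⟩ := exists_sub_mul_mem_pow hu hv hu0 hv0 hrel h
      exact ⟨γ, by rwa [show j + m + n - m = j + n by omega] at hα, by
        rwa [show j + m + n - n = j + m by omega] at hβ⟩
  simp only [M, rank_quotient_pow_idealOfVars] at hrank
  have h0 := two_mul_finrank_totalDegreeLT k j
  have h1 := two_mul_finrank_totalDegreeLT k (j + m)
  have h2 := two_mul_finrank_totalDegreeLT k (j + n)
  have h3 := two_mul_finrank_totalDegreeLT k (j + m + n)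
  have hdim : Module.finrank k (totalDegreeLT (Fin 2) k (j + m + n)) +
      Module.finrank k (totalDegreeLT (Fin 2) k j) =
      m * n + (Module.finrank k (totalDegreeLT (Fin 2) k (j + n)) +
        Module.finrank k (totalDegreeLT (Fin 2) k (j + m))) := by
    linarith
  rw [← Nat.cast_add, ← Nat.cast_add, hdim, Nat.cast_add (m * n)] at hrank
  exact (Cardinal.add_nat_le_add_nat_iff _).1 hrank

theorem rank_quotient_span_pair_sup_pow_le (hu : u ∈ idealOfVars (Fin 2) k ^ m)
    (hv : v ∈ idealOfVars (Fin 2) k ^ n)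
    (hu0 : homogeneousComponent m u ≠ 0) (hv0 : homogeneousComponent n v ≠ 0)
    (hrel : IsRelPrime (homogeneousComponent m u) (homogeneousComponent n v)) :
    Module.rank k (MvPolynomial (Fin 2) k ⧸
      (Ideal.span {u, v} ⊔ idealOfVars (Fin 2) k ^ N)) ≤ (m * n : ℕ) :=
  (rank_quotient_le_rank_quotient (sup_le_sup_left (Ideal.pow_le_pow_right (by omega)) _)).trans
    (rank_quotient_span_pair_sup_pow_add_le hu hv hu0 hv0 hrel N)

end Multiplicity

section Translation

open MvPolynomial

variable {σ R : Type*} [CommRing R]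

/-- The change of coordinates `X i ↦ X i + P i`, which moves the point `P` to the origin. -/
noncomputable def translate (P : σ → R) : MvPolynomial σ R ≃ₐ[R] MvPolynomial σ R :=
  AlgEquiv.ofAlgHom (aeval fun i => X i + C (P i)) (aeval fun i => X i - C (P i))
    (algHom_ext fun i => by simp [← algebraMap_eq]) (algHom_ext fun i => by simp [← algebraMap_eq])

theorem translate_X (P : σ → R) (i : σ) : translate P (X i) = X i + C (P i) :=
  aeval_X _ i

theorem translate_C (P : σ → R) (a : R) : translate P (C a) = C a :=
  aeval_C _ a

theorem coeff_zero_translate (P : σ → R) (p : MvPolynomial σ R) :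
    coeff 0 (translate P p) = eval P p := by
  have h : (constantCoeff.comp (translate P : MvPolynomial σ R →+* MvPolynomial σ R)) = eval P :=
    ringHom_ext (fun a => by simp [translate_C]) fun i => by simp [translate_X]
  exact congrArg (· p) h

theorem translate_mem_idealOfVars_iff {P : σ → R} {p : MvPolynomial σ R} :
    translate P p ∈ idealOfVars σ R ↔ eval P p = 0 := by
  rw [← coeff_zero_translate, ← pow_one (idealOfVars σ R), mem_pow_idealOfVars_iff']
  exact ⟨fun h => h 0 (by simp), fun h d hd =>
    (Finsupp.degree_eq_zero_iff d).1 (Nat.lt_one_iff.1 hd) ▸ h⟩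

theorem map_translate_vanishingIdeal {k : Type*} [Field k] (P : σ → k) :
    (vanishingIdeal k {P}).map (translate P) = idealOfVars σ k := by
  refine le_antisymm (Ideal.map_le_iff_le_comap.2 fun p hp => ?_) fun p hp => ?_
  · exact translate_mem_idealOfVars_iff.2 (by simpa [aeval_eq_eval] using hp)
  · obtain ⟨q, rfl⟩ := (translate P).surjective p
    exact Ideal.mem_map_of_mem _ (by
      simpa [aeval_eq_eval] using translate_mem_idealOfVars_iff.1 hp)

end Translation

section LeadingForms

open MvPolynomial

variable {σ R : Type*} [CommRing R] {p q : MvPolynomial σ R} {n : ℕ}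

/-- The homogeneous part of highest degree of a polynomial. -/
noncomputable def leadingForm (p : MvPolynomial σ R) : MvPolynomial σ R :=
  homogeneousComponent p.totalDegree p

theorem leadingForm_ne_zero (hp : p ≠ 0) : leadingForm p ≠ 0 := by
  intro h
  have hlt := mem_totalDegreeLT_of_homogeneousComponent_eq_zero
    (mem_totalDegreeLT_totalDegree_add_one p) h
  obtain ⟨d, hd, hdeg⟩ :=
    Finset.exists_mem_eq_sup p.support (support_nonempty.2 hp) fun d => d.degree
  exact mem_support_iff.1 hd (mem_totalDegreeLT.1 hlt d hdeg.le)

theorem totalDegree_eq_of_mem_totalDegreeLT (hp : p ∈ totalDegreeLT σ R (n + 1))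
    (h : homogeneousComponent n p ≠ 0) : p.totalDegree = n := by
  have hp0 : p ≠ 0 := fun h0 => h (by rw [h0, map_zero])
  by_contra hne
  rcases lt_or_gt_of_ne hne with hlt | hgt
  · exact h (homogeneousComponent_eq_zero _ _ hlt)
  · exact leadingForm_ne_zero hp0 (homogeneousComponent_eq_zero_of_mem_totalDegreeLT hp hgt)

theorem leadingForm_mul [IsDomain R] (hp : p ≠ 0) (hq : q ≠ 0) :
    leadingForm (p * q) = leadingForm p * leadingForm q := by
  rw [leadingForm, totalDegree_mul_of_isDomain hp hq]
  exact homogeneousComponent_add_mul_of_mem_totalDegreeLT (mem_totalDegreeLT_totalDegree_add_one p)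
    (mem_totalDegreeLT_totalDegree_add_one q)

end LeadingForms

section Orders

open MvPolynomial

variable {σ R : Type*} [CommRing R] {P : σ → R} {p q : MvPolynomial σ R} {n : ℕ}

/-- The order of vanishing of `p` at the point `P` (for `p = 0` it is `0`, not `∞`). -/
noncomputable def orderAt (P : σ → R) (p : MvPolynomial σ R) : ℕ :=
  sInf {n | homogeneousComponent n (translate P p) ≠ 0}

/-- The lowest-degree form of the expansion of `p` at the point `P`. Its zero set is the tangent
cone at `P` of the hypersurface `p = 0`. -/
noncomputable def initialForm (P : σ → R) (p : MvPolynomial σ R) : MvPolynomial σ R :=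
  homogeneousComponent (orderAt P p) (translate P p)

theorem initialForm_ne_zero (P : σ → R) (hp : p ≠ 0) : initialForm P p ≠ 0 :=
  Nat.sInf_mem (s := {n | homogeneousComponent n (translate P p) ≠ 0})
    (exists_homogeneousComponent_ne_zero ((EmbeddingLike.map_ne_zero_iff).2 hp))

theorem translate_mem_pow_orderAt (P : σ → R) (p : MvPolynomial σ R) :
    translate P p ∈ idealOfVars σ R ^ orderAt P p := by
  refine (mem_pow_idealOfVars_iff' _ _).2 fun d hd => ?_
  have h := not_not.1 (Nat.notMem_of_lt_sInf hd)
  simpa [coeff_homogeneousComponent] using congrArg (coeff d) h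

theorem orderAt_eq_of_mem_pow (hp : translate P p ∈ idealOfVars σ R ^ n)
    (h : homogeneousComponent n (translate P p) ≠ 0) : orderAt P p = n := by
  refine (Nat.sInf_le h).antisymm (not_lt.1 fun hlt => ?_)
  have hp0 : p ≠ 0 := fun h0 => h (by rw [h0, map_zero, map_zero])
  exact initialForm_ne_zero P hp0 (homogeneousComponent_eq_zero_of_mem_pow hp hlt)

theorem orderAt_pos_iff (hp : p ≠ 0) : 0 < orderAt P p ↔ eval P p = 0 := by
  rw [← translate_mem_idealOfVars_iff, ← pow_one (idealOfVars σ R)]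
  refine ⟨fun h => Ideal.pow_le_pow_right h (translate_mem_pow_orderAt P p), fun h => ?_⟩
  by_contra h0
  exact initialForm_ne_zero P hp (homogeneousComponent_eq_zero_of_mem_pow h (by omega))

theorem homogeneousComponent_orderAt_add_translate_mul (P : σ → R) (p q : MvPolynomial σ R) :
    homogeneousComponent (orderAt P p + orderAt P q) (translate P (p * q)) =
      initialForm P p * initialForm P q := by
  rw [map_mul]
  exact homogeneousComponent_add_mul_of_mem_pow (translate_mem_pow_orderAt P p)
    (translate_mem_pow_orderAt P q)

variable [IsDomain R]

theorem orderAt_mul (P : σ → R) (hp : p ≠ 0) (hq : q ≠ 0) :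
    orderAt P (p * q) = orderAt P p + orderAt P q := by
  refine orderAt_eq_of_mem_pow ?_ ?_
  · rw [map_mul, pow_add]
    exact Ideal.mul_mem_mul (translate_mem_pow_orderAt P p) (translate_mem_pow_orderAt P q)
  · rw [homogeneousComponent_orderAt_add_translate_mul]
    exact mul_ne_zero (initialForm_ne_zero P hp) (initialForm_ne_zero P hq)

theorem initialForm_mul (P : σ → R) (hp : p ≠ 0) (hq : q ≠ 0) :
    initialForm P (p * q) = initialForm P p * initialForm P q := by
  rw [initialForm, orderAt_mul P hp hq, homogeneousComponent_orderAt_add_translate_mul]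

end Orders

section LocalMultiplicity

open MvPolynomial

variable {σ k : Type*} [Field k] {I J : Ideal (MvPolynomial σ k)} {P : σ → k} {b c : ℕ}

/-- The multiplicity of `I` at the point `P`, the dimension of the local ring at `P` of the scheme
cut out by `I`, is at most `b`. The local ring is replaced by the quotients by powers of the maximal
ideal at `P`; their dimensions are cardinals, so the bound includes finiteness. -/
def LocalMultiplicityLE (I : Ideal (MvPolynomial σ k)) (P : σ → k) (b : ℕ) : Prop :=
  ∀ N, Module.rank k (MvPolynomial σ k ⧸ (I ⊔ vanishingIdeal k {P} ^ N)) ≤ b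

theorem LocalMultiplicityLE.mono (h : LocalMultiplicityLE I P b) (hIJ : I ≤ J) (hbc : b ≤ c) :
    LocalMultiplicityLE J P c := fun N =>
  (rank_quotient_le_rank_quotient (sup_le_sup_right hIJ _)).trans
    ((h N).trans (Nat.cast_le.2 hbc))

theorem localMultiplicityLE_span_pair {u v : MvPolynomial (Fin 2) k} {P : Fin 2 → k}
    (hu : u ≠ 0) (hv : v ≠ 0) (hrel : IsRelPrime (initialForm P u) (initialForm P v)) :
    LocalMultiplicityLE (Ideal.span {u, v}) P (orderAt P u * orderAt P v) := by
  intro N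
  have hmap : Ideal.span {translate P u, translate P v} ⊔ idealOfVars (Fin 2) k ^ N =
      (Ideal.span {u, v} ⊔ vanishingIdeal k {P} ^ N).map (translate P) := by
    rw [Ideal.map_sup, Ideal.map_pow, map_translate_vanishingIdeal, Ideal.map_span, Set.image_pair]
  exact (Ideal.quotientEquivAlg _ _ (translate P) hmap).toLinearEquiv.rank_eq.trans_le
    (rank_quotient_span_pair_sup_pow_le (translate_mem_pow_orderAt P u)
      (translate_mem_pow_orderAt P v) (initialForm_ne_zero P hu) (initialForm_ne_zero P hv) hrel)

end LocalMultiplicity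

section Bezout

open MvPolynomial

universe u

variable {σ : Type*} {k : Type u} [Field k]

theorem prod_sup_le_sup_prod {ι S : Type*} [CommRing S] (s : Finset ι) (I : Ideal S)
    (J : ι → Ideal S) : ∏ i ∈ s, (I ⊔ J i) ≤ I ⊔ ∏ i ∈ s, J i := by
  classical
  induction s using Finset.induction with
  | empty => simp
  | insert i s hi ih =>
    rw [Finset.prod_insert hi, Finset.prod_insert hi]
    refine (Ideal.mul_mono_right ih).trans ?_
    rw [Ideal.sup_mul]
    refine sup_le (Ideal.mul_le_left.trans le_sup_left) ?_
    rw [Ideal.mul_sup]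
    exact sup_le (Ideal.mul_le_right.trans le_sup_left) le_sup_right

theorem pairwise_isCoprime_sup_pow_vanishingIdeal (I : Ideal (MvPolynomial σ k)) (N : ℕ) :
    Pairwise (Function.onFun IsCoprime fun P : σ → k => I ⊔ vanishingIdeal k {P} ^ N) := by
  intro P Q hPQ
  have hne : vanishingIdeal k {P} ≠ vanishingIdeal k {Q} := fun h => hPQ <| funext fun i => by
    have hP : X i - C (P i) ∈ vanishingIdeal k {P} := by simp
    rw [h, mem_vanishingIdeal_singleton_iff] at hP
    simpa [sub_eq_zero, eq_comm] using hP
  have hcoprime : IsCoprime (vanishingIdeal k {P}) (vanishingIdeal k {Q}) :=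
    Ideal.isCoprime_iff_sup_eq.2 (Ideal.IsMaximal.coprime_of_ne inferInstance inferInstance hne)
  rw [Function.onFun, Ideal.isCoprime_iff_sup_eq, eq_top_iff,
    ← Ideal.isCoprime_iff_sup_eq.1 (hcoprime.pow (m := N) (n := N))]
  exact sup_le_sup le_sup_right le_sup_right

variable [IsAlgClosed k]

theorem exists_prod_pow_vanishingIdeal_le [Finite σ] {I : Ideal (MvPolynomial σ k)}
    {Z : Finset (σ → k)} (hZ : zeroLocus k I ⊆ Z) :
    ∃ N, ∏ P ∈ Z, vanishingIdeal k {P} ^ N ≤ I := by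
  have hrad : ∏ P ∈ Z, vanishingIdeal k {P} ≤ I.radical := by
    rw [← vanishingIdeal_zeroLocus_eq_radical (K := k)]
    intro p hp P hP
    exact (mem_vanishingIdeal_singleton_iff P p).1
      ((Ideal.prod_le_inf.trans (Finset.inf_le (hZ hP))) hp)
  obtain ⟨N, hN⟩ := Ideal.exists_pow_le_of_le_radical_of_fg hrad (IsNoetherian.noetherian _)
  exact ⟨N, by rwa [Finset.prod_pow]⟩

theorem rank_quotient_le_sum [Finite σ] {I : Ideal (MvPolynomial σ k)}
    {Z : Finset (σ → k)} {b : (σ → k) → ℕ} (hZ : zeroLocus k I ⊆ Z)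
    (hb : ∀ P ∈ Z, LocalMultiplicityLE I P (b P)) :
    Module.rank k (MvPolynomial σ k ⧸ I) ≤ (∑ P ∈ Z, b P : ℕ) := by
  obtain ⟨N, hN⟩ := exists_prod_pow_vanishingIdeal_le hZ
  let J : (σ → k) → Ideal (MvPolynomial σ k) := fun P => I ⊔ vanishingIdeal k {P} ^ N
  have hcoprime := pairwise_isCoprime_sup_pow_vanishingIdeal I N
  have hJI : ⨅ P : Z, J P ≤ I := by
    rw [iInf_subtype, ← Ideal.prod_eq_iInf_of_pairwise_isCoprime fun P _ Q _ h => hcoprime h]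
    exact (prod_sup_le_sup_prod Z I _).trans (sup_le le_rfl hN)
  have hfin (P : Z) : Module.Finite k (MvPolynomial σ k ⧸ J P) :=
    Module.rank_lt_aleph0_iff.1 ((hb P P.2 N).trans_lt Cardinal.natCast_lt_aleph0)
  calc Module.rank k (MvPolynomial σ k ⧸ I)
      ≤ Module.rank k (MvPolynomial σ k ⧸ ⨅ P : Z, J P) := rank_quotient_le_rank_quotient hJI
    _ = Module.rank k (∀ P : Z, MvPolynomial σ k ⧸ J P) :=
      ({ Ideal.quotientInfRingEquivPiQuotient (fun P : Z => J P) fun P Q h =>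
          hcoprime (Subtype.coe_injective.ne h) with
        commutes' := fun _ => rfl } : _ ≃ₐ[k] _).toLinearEquiv.rank_eq
    _ = (∑ P : Z, Module.finrank k (MvPolynomial σ k ⧸ J P) : ℕ) := by
      rw [← Module.finrank_eq_rank, Module.finrank_pi_fintype]
    _ ≤ (∑ P ∈ Z, b P : ℕ) := by
      rw [← Finset.sum_coe_sort Z, Nat.cast_le]
      exact Finset.sum_le_sum fun P _ => Module.finrank_le_of_rank_le (hb P P.2 N)

theorem totalDegree_mul_totalDegree_le_sum {u v : MvPolynomial (Fin 2) k} (hv : v ≠ 0)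
    (hrel : IsRelPrime (leadingForm u) (leadingForm v)) {Z : Finset (Fin 2 → k)}
    {b : (Fin 2 → k) → ℕ} (hZ : ∀ P, eval P u = 0 → eval P v = 0 → P ∈ Z)
    (hb : ∀ P ∈ Z, LocalMultiplicityLE (Ideal.span {u, v}) P (b P)) :
    u.totalDegree * v.totalDegree ≤ ∑ P ∈ Z, b P := by
  have hlocus : zeroLocus k (Ideal.span {u, v}) ⊆ Z := fun P hP =>
    hZ P (hP u (Ideal.subset_span (by simp))) (hP v (Ideal.subset_span (by simp)))
  exact_mod_cast (mul_le_rank_quotient_span_pair (mem_totalDegreeLT_totalDegree_add_one u)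
    (mem_totalDegreeLT_totalDegree_add_one v) (leadingForm_ne_zero hv) hrel).trans
    (rank_quotient_le_sum hlocus hb)

end Bezout

section ConsecutiveForms

open MvPolynomial

variable {σ R : Type*} [CommRing R] {u v : MvPolynomial σ R} {i m : ℕ}

theorem homogeneousComponent_add_mul_of_isHomogeneous (hu : u.IsHomogeneous i)
    (v : MvPolynomial σ R) :
    homogeneousComponent (i + m) (u * v) = u * homogeneousComponent m v := by
  classical
  let := gradedAlgebra (σ := σ) (R := R)
  have hmul := DirectSum.coe_decompose_mul_add_of_left_mem (homogeneousSubmodule σ R) (b := v)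
    (j := m) ((mem_homogeneousSubmodule i u).2 hu)
  exact (decomposition.decompose'_apply _ _).symm.trans <|
    hmul.trans <| congrArg (u * ·) (decomposition.decompose'_apply _ _)

theorem homogeneousComponent_add_add_one_mul_of_mem_totalDegreeLT
    (hu : u ∈ totalDegreeLT σ R (i + 2)) (hv : v ∈ totalDegreeLT σ R (m + 2)) :
    homogeneousComponent (i + m + 1) (u * v) =
      homogeneousComponent (i + 1) u * homogeneousComponent m v +
        homogeneousComponent i u * homogeneousComponent (m + 1) v := by
  have hlow := homogeneousComponent_add_mul_of_mem_totalDegreeLT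
    (sub_homogeneousComponent_mem_totalDegreeLT hu) hv
  rw [map_sub, homogeneousComponent_of_mem (homogeneousComponent_isHomogeneous (i + 1) u),
    if_neg (by omega), sub_zero] at hlow
  rw [← hlow, ← homogeneousComponent_add_mul_of_isHomogeneous
    (homogeneousComponent_isHomogeneous (i + 1) u), add_right_comm i 1 m, ← add_assoc, ← map_add,
    ← add_mul, add_sub_cancel]

theorem homogeneousComponent_add_add_one_mul_of_mem_pow
    (hu : u ∈ idealOfVars σ R ^ i) (hv : v ∈ idealOfVars σ R ^ m) :
    homogeneousComponent (i + m + 1) (u * v) =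
      homogeneousComponent i u * homogeneousComponent (m + 1) v +
        homogeneousComponent (i + 1) u * homogeneousComponent m v := by
  have hhigh := homogeneousComponent_add_mul_of_mem_pow (sub_homogeneousComponent_mem_pow hu) hv
  rw [map_sub, homogeneousComponent_of_mem (homogeneousComponent_isHomogeneous i u),
    if_neg (by omega), sub_zero] at hhigh
  rw [← hhigh, ← homogeneousComponent_add_mul_of_isHomogeneous
    (homogeneousComponent_isHomogeneous i u), add_right_comm i 1 m, ← add_assoc, ← map_add,
    ← add_mul, add_sub_cancel]

end ConsecutiveForms

section Factors

open MvPolynomial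

variable {σ k : Type*} [Field k] {a b : MvPolynomial σ k} {P : σ → k}

theorem isUnit_homogeneousComponent_zero (ha : homogeneousComponent 0 a ≠ 0) :
    IsUnit (homogeneousComponent 0 a) := by
  rw [homogeneousComponent_zero] at ha ⊢
  exact (IsUnit.mk0 _ fun h => ha (by rw [h, C_0])).map C

theorem isRelPrime_leadingForm (ha : a ≠ 0) (hb : b ≠ 0)
    (h : ∀ π, Irreducible π → π * π ∣ leadingForm (a * b) →
      ¬ π ∣ homogeneousComponent ((a * b).totalDegree - 1) (a * b)) :
    IsRelPrime (leadingForm a) (leadingForm b) := by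
  refine WfDvdMonoid.isRelPrime_of_no_irreducible_factors
    (fun h0 => leadingForm_ne_zero ha h0.1) fun π hπ hπa hπb => ?_
  have totalDegree_ne_zero {c : MvPolynomial σ k} (hc : c ≠ 0) (hπc : π ∣ leadingForm c) :
      c.totalDegree ≠ 0 := fun h0 => hπ.not_isUnit <| isUnit_of_dvd_unit hπc <| by
    have hne := leadingForm_ne_zero hc
    rw [leadingForm, h0] at hne ⊢
    exact isUnit_homogeneousComponent_zero hne
  obtain ⟨i, hi⟩ := Nat.exists_eq_succ_of_ne_zero (totalDegree_ne_zero ha hπa)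
  obtain ⟨j, hj⟩ := Nat.exists_eq_succ_of_ne_zero (totalDegree_ne_zero hb hπb)
  refine h π hπ (leadingForm_mul ha hb ▸ mul_dvd_mul hπa hπb) ?_
  have hdeg : (a * b).totalDegree - 1 = i + j + 1 := by
    rw [totalDegree_mul_of_isDomain ha hb]
    omega
  rw [leadingForm, hi] at hπa
  rw [leadingForm, hj] at hπb
  rw [hdeg, homogeneousComponent_add_add_one_mul_of_mem_totalDegreeLT
    (congrArg (· + 1) hi ▸ mem_totalDegreeLT_totalDegree_add_one a :)
    (congrArg (· + 1) hj ▸ mem_totalDegreeLT_totalDegree_add_one b :)]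
  exact dvd_add (hπa.mul_right _) (hπb.mul_left _)

theorem isRelPrime_initialForm_of_squarefree (ha : a ≠ 0) (hb : b ≠ 0)
    (h : Squarefree (initialForm P (a * b))) :
    IsRelPrime (initialForm P a) (initialForm P b) :=
  (squarefree_mul_iff.1 (initialForm_mul P ha hb ▸ h)).1

theorem isRelPrime_initialForm_of_orderAt_eq_zero (ha : a ≠ 0) (h : orderAt P a = 0) :
    IsRelPrime (initialForm P a) (initialForm P b) := by
  have hne := initialForm_ne_zero P ha
  rw [initialForm, h] at hne ⊢
  exact (isUnit_homogeneousComponent_zero hne).isRelPrime_left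

theorem irreducible_of_isHomogeneous_one {L : MvPolynomial σ k} (hL : L.IsHomogeneous 1)
    (hL0 : L ≠ 0) : Irreducible L := by
  refine irreducible_of_totalDegree_eq_one (hL.totalDegree hL0) fun x hx => IsUnit.mk0 _ ?_
  rintro rfl
  exact hL0 (ext _ _ fun d => zero_dvd_iff.1 (hx d))

theorem associated_pow_of_isHomogeneous_of_dvd {L : MvPolynomial σ k} (hL : L.IsHomogeneous 1)
    (hL0 : L ≠ 0) {n q : ℕ} (ha : a.IsHomogeneous n) (ha0 : a ≠ 0) (h : a ∣ L ^ q) :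
    Associated a (L ^ n) := by
  obtain ⟨m, -, hass⟩ := (dvd_prime_pow (irreducible_of_isHomogeneous_one hL hL0).prime q).1 h
  obtain ⟨u, hu⟩ := hass
  have hdeg := totalDegree_mul_of_isDomain ha0 u.ne_zero
  rw [(isUnit_iff_totalDegree_of_isReduced.1 u.isUnit).2, hu, ha.totalDegree ha0,
    (hL.pow m).totalDegree (pow_ne_zero m hL0)] at hdeg
  obtain rfl : m = n := by omega
  exact ⟨u, hu⟩

end Factors

/-! ### Factors meeting at a point with a single tangent direction -/

section SingleTangent

open MvPolynomial

variable {k : Type*} [Field k]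

/-- The tangent cone of `f` at `P` is a multiple line and the next form is squarefree. -/
def HasSingleTangent {σ : Type*} (P : σ → k) (f : MvPolynomial σ k) : Prop :=
  (∃ L : MvPolynomial σ k, L.IsHomogeneous 1 ∧ initialForm P f = L ^ orderAt P f) ∧
    Squarefree (homogeneousComponent (orderAt P f + 1) (translate P f))

variable {σ : Type*} {P : σ → k} {a b : MvPolynomial σ k}

theorem HasSingleTangent.exists_associated_pow (h : HasSingleTangent P (a * b)) (ha : a ≠ 0)
    (hb : b ≠ 0) (hpos : orderAt P (a * b) ≠ 0) :
    ∃ L, Irreducible L ∧ Associated (initialForm P a) (L ^ orderAt P a) ∧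
      Associated (initialForm P b) (L ^ orderAt P b) := by
  obtain ⟨⟨L, hL, hpow⟩, -⟩ := h
  have hL0 : L ≠ 0 := by
    rintro rfl
    exact initialForm_ne_zero P (mul_ne_zero ha hb) (by rw [hpow, zero_pow hpos])
  rw [initialForm_mul P ha hb] at hpow
  exact ⟨L, irreducible_of_isHomogeneous_one hL hL0,
    associated_pow_of_isHomogeneous_of_dvd hL hL0 (homogeneousComponent_isHomogeneous _ _)
      (initialForm_ne_zero P ha) ⟨_, hpow.symm⟩,
    associated_pow_of_isHomogeneous_of_dvd hL hL0 (homogeneousComponent_isHomogeneous _ _)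
      (initialForm_ne_zero P hb) ⟨_, hpow.symm.trans (mul_comm _ _)⟩⟩

theorem homogeneousComponent_orderAt_add_one_translate_mul (P : σ → k) (ha : a ≠ 0) (hb : b ≠ 0) :
    homogeneousComponent (orderAt P (a * b) + 1) (translate P (a * b)) =
      initialForm P a * homogeneousComponent (orderAt P b + 1) (translate P b) +
        homogeneousComponent (orderAt P a + 1) (translate P a) * initialForm P b := by
  rw [orderAt_mul P ha hb, map_mul]
  exact homogeneousComponent_add_add_one_mul_of_mem_pow (translate_mem_pow_orderAt P a)
    (translate_mem_pow_orderAt P b)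

theorem HasSingleTangent.orderAt_le_one (h : HasSingleTangent P (a * b)) (ha : a ≠ 0)
    (hb : b ≠ 0) : orderAt P a ≤ 1 ∨ orderAt P b ≤ 1 := by
  by_contra! hlt
  obtain ⟨L, hL, hLa, hLb⟩ := h.exists_associated_pow ha hb (by
    rw [orderAt_mul P ha hb]
    omega)
  have hsq := h.2
  rw [homogeneousComponent_orderAt_add_one_translate_mul P ha hb] at hsq
  have hLLa : L * L ∣ initialForm P a := pow_two L ▸ (pow_dvd_pow L hlt.1).trans hLa.symm.dvd
  have hLLb : L * L ∣ initialForm P b := pow_two L ▸ (pow_dvd_pow L hlt.2).trans hLb.symm.dvd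
  exact hL.not_isUnit (hsq L (dvd_add (hLLa.mul_right _) (hLLb.mul_left _)))

variable [CharP k 2] {P : Fin 2 → k} {a b : MvPolynomial (Fin 2) k}

theorem HasSingleTangent.exists_translate_sub_mul (h : HasSingleTangent P (a * b)) (ha : a ≠ 0)
    (hb : b ≠ 0) (ha1 : orderAt P a = 1) (hb1 : orderAt P b ≠ 0) :
    ∃ c, translate P (b - c * a) ∈ idealOfVars (Fin 2) k ^ (orderAt P b + 1) ∧
      initialForm P a * homogeneousComponent (orderAt P b + 1) (translate P (b - c * a)) =
        homogeneousComponent (orderAt P (a * b) + 1) (translate P (a * b)) := by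
  obtain ⟨L, -, hLa, hLb⟩ := h.exists_associated_pow ha hb (by
    rw [orderAt_mul P ha hb]
    omega)
  rw [ha1, pow_one] at hLa
  obtain ⟨u, hu⟩ := (hLa.pow_pow (n := orderAt P b)).trans hLb.symm
  obtain ⟨r, -, hr⟩ := isUnit_iff_eq_C_of_isReduced.1 u.isUnit
  obtain ⟨j, hj⟩ := Nat.exists_eq_succ_of_ne_zero hb1
  have hA : (initialForm P a).IsHomogeneous 1 := ha1 ▸ homogeneousComponent_isHomogeneous _ _
  set E := C r * initialForm P a ^ j
  have hE : E.IsHomogeneous j := by simpa using (hA.pow j).C_mul r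
  have hEa : E * initialForm P a = initialForm P b := by
    rw [← hu, hr, hj, pow_succ]
    simp only [E]
    ring
  have htranslate : translate P (b - (translate P).symm E * a) =
      translate P b - E * translate P a := by simp
  have hform : homogeneousComponent (orderAt P b) (E * translate P a) = initialForm P b := by
    rw [← hEa, initialForm, ha1, hj, ← homogeneousComponent_add_mul_of_isHomogeneous hE]
  refine ⟨(translate P).symm E, ?_, ?_⟩
  · rw [htranslate]
    refine mem_pow_add_one_of_homogeneousComponent_eq_zero
      (sub_mem (translate_mem_pow_orderAt P b) ?_) ?_
    · rw [hj, Nat.succ_eq_add_one, pow_add]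
      exact Ideal.mul_mem_mul (mem_pow_of_isHomogeneous hE) (ha1 ▸ translate_mem_pow_orderAt P a)
    · rw [map_sub, hform, initialForm, sub_self]
  · rw [htranslate, homogeneousComponent_orderAt_add_one_translate_mul P ha hb, map_sub,
      show orderAt P b + 1 = j + (orderAt P a + 1) by omega,
      homogeneousComponent_add_mul_of_isHomogeneous hE, ← hEa, CharTwo.sub_eq_add]
    ring

-- Replacing `b` by `b - c * a` makes the initial forms relatively prime.
theorem HasSingleTangent.localMultiplicityLE_of_orderAt_eq_one (h : HasSingleTangent P (a * b))
    (ha : a ≠ 0) (hb : b ≠ 0) (ha1 : orderAt P a = 1) (hb1 : orderAt P b ≠ 0) :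
    LocalMultiplicityLE (Ideal.span {a, b}) P (orderAt P (a * b)) := by
  obtain ⟨c, hmem, hform⟩ := h.exists_translate_sub_mul ha hb ha1 hb1
  have hsq := hform ▸ h.2
  have hne := right_ne_zero_of_mul hsq.ne_zero
  have hord := orderAt_eq_of_mem_pow hmem hne
  have hne0 : b - c * a ≠ 0 := fun h0 => hne (by rw [h0, map_zero, map_zero])
  have hrel : IsRelPrime (initialForm P a) (initialForm P (b - c * a)) := by
    rw [initialForm.eq_def P (b - c * a), hord]
    exact (squarefree_mul_iff.1 hsq).1
  refine (localMultiplicityLE_span_pair ha hne0 hrel).mono (Ideal.span_le.2 ?_) ?_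
  · rintro x (rfl | rfl)
    · exact Ideal.subset_span (by simp)
    · exact sub_mem (Ideal.subset_span (by simp))
        (Ideal.mul_mem_left _ _ (Ideal.subset_span (by simp)))
  · rw [hord, orderAt_mul P ha hb]
    lia

theorem HasSingleTangent.localMultiplicityLE (h : HasSingleTangent P (a * b)) (ha : a ≠ 0)
    (hb : b ≠ 0) : LocalMultiplicityLE (Ideal.span {a, b}) P
      (if orderAt P a = 0 ∨ orderAt P b = 0 then 0 else orderAt P (a * b)) := by
  split_ifs with h0
  · rcases h0 with h0 | h0
    · simpa [h0] using localMultiplicityLE_span_pair ha hb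
        (isRelPrime_initialForm_of_orderAt_eq_zero ha h0)
    · simpa [h0] using localMultiplicityLE_span_pair ha hb
        (isRelPrime_initialForm_of_orderAt_eq_zero hb h0).symm
  · push Not at h0
    rcases h.orderAt_le_one ha hb with ha1 | hb1
    · exact h.localMultiplicityLE_of_orderAt_eq_one ha hb (by omega) h0.2
    · rw [Set.pair_comm, mul_comm]
      rw [mul_comm] at h
      exact h.localMultiplicityLE_of_orderAt_eq_one hb ha (by omega) h0.1

end SingleTangent

/-! ### Singular points -/

section RootPoints

variable {k : Type*} [Field k] {m n : ℕ} {P : Fin 2 → k}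

/-- The three coordinates `x`, `y`, `x + y + 1` of the point `P = (x, y)` are `m`-th roots of
unity. The singular points of the curves studied here are of this form. -/
def IsRootPoint (m : ℕ) (P : Fin 2 → k) : Prop :=
  P 0 ^ m = 1 ∧ P 1 ^ m = 1 ∧ (P 0 + P 1 + 1) ^ m = 1

theorem IsRootPoint.ne_zero (h : IsRootPoint m P) (hm : m ≠ 0) :
    P 0 ≠ 0 ∧ P 1 ≠ 0 ∧ P 0 + P 1 + 1 ≠ 0 :=
  ⟨fun h0 => by simpa [h0, hm] using h.1, fun h0 => by simpa [h0, hm] using h.2.1,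
    fun h0 => by simpa [h0, hm] using h.2.2⟩

theorem isRootPoint_pow_mul_iff [CharP k 2] (i : ℕ) :
    IsRootPoint (2 ^ i * m) P ↔ IsRootPoint m P := by
  have hpow (x : k) : x ^ (2 ^ i * m) = 1 ↔ x ^ m = 1 := by
    rw [mul_comm, pow_mul, ← iterateFrobenius_def, map_eq_one_iff _ (iterateFrobenius_inj k 2 i)]
  simp only [IsRootPoint, hpow]

end RootPoints

section Binomial

open Polynomial

variable {R : Type*} [CommRing R] [CharP R 2] {i ℓ m : ℕ}

variable (R) in
theorem cast_choose_pow_mul (i ℓ m : ℕ) :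
    (((2 ^ i * ℓ).choose m : ℕ) : R) =
      if 2 ^ i ∣ m then ((ℓ.choose (m / 2 ^ i) : ℕ) : R) else 0 := by
  have hexpand : (X + 1 : R[X]) ^ (2 ^ i * ℓ) = expand R (2 ^ i) ((X + 1) ^ ℓ) := by
    rw [pow_mul, add_pow_char_pow, one_pow, map_pow, map_add, expand_X, map_one]
  rw [← coeff_X_add_one_pow, hexpand, coeff_expand (by positivity), coeff_X_add_one_pow]

theorem cast_choose_eq_zero_of_lt (h1 : 1 < m) (hm : m < 2 ^ i) :
    (((2 ^ i * ℓ + 1).choose m : ℕ) : R) = 0 := by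
  obtain ⟨m, rfl⟩ := Nat.exists_eq_add_of_le' h1.le
  rw [Nat.choose_succ_succ, Nat.cast_add, cast_choose_pow_mul, cast_choose_pow_mul,
    if_neg (Nat.not_dvd_of_pos_of_lt (by omega) (by omega)),
    if_neg (Nat.not_dvd_of_pos_of_lt (by omega) hm), add_zero]

theorem cast_choose_two_pow (hi : i ≠ 0) (hℓ : Odd ℓ) :
    (((2 ^ i * ℓ + 1).choose (2 ^ i) : ℕ) : R) = 1 := by
  have h2 := Nat.le_self_pow hi 2
  obtain ⟨s, hs⟩ := Nat.exists_eq_add_of_le' (show 1 ≤ 2 ^ i by omega)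
  have hdvd : ¬ 2 ^ i ∣ s := Nat.not_dvd_of_pos_of_lt (by omega) (by omega)
  nth_rewrite 2 [hs]
  rw [Nat.choose_succ_succ, Nat.cast_add, cast_choose_pow_mul, cast_choose_pow_mul, if_neg hdvd,
    Nat.succ_eq_add_one, ← hs, if_pos dvd_rfl, Nat.div_self (by omega), Nat.choose_one_right,
    natCast_eq_one_of_odd hℓ, zero_add]

theorem cast_choose_two_pow_add_one (hi : i ≠ 0) (hℓ : Odd ℓ) :
    (((2 ^ i * ℓ + 1).choose (2 ^ i + 1) : ℕ) : R) = 1 := by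
  have h2 := Nat.le_self_pow hi 2
  have hdvd : ¬ 2 ^ i ∣ 2 ^ i + 1 := fun h =>
    absurd (Nat.le_of_dvd one_pos ((Nat.dvd_add_right dvd_rfl).1 h)) (by omega)
  rw [Nat.choose_succ_succ, Nat.cast_add, cast_choose_pow_mul, cast_choose_pow_mul, if_neg hdvd,
    if_pos dvd_rfl, Nat.div_self (by omega), Nat.choose_one_right, natCast_eq_one_of_odd hℓ,
    add_zero]

end Binomial

section ApnPolynomial

open MvPolynomial

section CommRing

variable {R : Type*} [CommRing R]

variable (R) in
/-- The polynomial `x ^ t + y ^ t + 1 + (x + y + 1) ^ t`. In contrast to `apnCurve`, no variable is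
singled out, which suits the study of degrees and of local expansions. -/
noncomputable def apnPolynomial (t : ℕ) : MvPolynomial (Fin 2) R :=
  X 0 ^ t + X 1 ^ t + 1 + (X 0 + X 1 + 1) ^ t

/-- Up to the factor `t.choose m`, the homogeneous part of degree `m` of the Taylor expansion of
`x ^ t + y ^ t + (x + y + 1) ^ t` at `P`. -/
noncomputable def taylorForm (t m : ℕ) (P : Fin 2 → R) : MvPolynomial (Fin 2) R :=
  C (P 0 ^ (t - m)) * X 0 ^ m + C (P 1 ^ (t - m)) * X 1 ^ m +
    C ((P 0 + P 1 + 1) ^ (t - m)) * (X 0 + X 1) ^ m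

theorem homogeneousComponent_add_C_pow {σ : Type*} {L : MvPolynomial σ R}
    (hL : L.IsHomogeneous 1) (c : R) (t m : ℕ) :
    homogeneousComponent m ((L + C c) ^ t) = C (t.choose m : R) * (C (c ^ (t - m)) * L ^ m) := by
  have hhom (j : ℕ) :
      (L ^ j * C c ^ (t - j) * (t.choose j : MvPolynomial σ R)).IsHomogeneous j := by
    have h := (hL.pow j).C_mul (c ^ (t - j) * t.choose j)
    rw [one_mul] at h
    convert h using 1
    simp only [map_mul, map_pow, map_natCast]
    ring
  rw [add_pow, map_sum, Finset.sum_congr rfl fun j _ => homogeneousComponent_of_mem (hhom j)]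
  rw [Finset.sum_ite_eq]
  split_ifs with hm
  · simp only [map_pow, map_natCast]
    ring
  · rw [Nat.choose_eq_zero_of_lt (by simpa using hm), Nat.cast_zero, map_zero, zero_mul]

theorem homogeneousComponent_translate_apnPolynomial (t m : ℕ) (P : Fin 2 → R) :
    homogeneousComponent m (translate P (apnPolynomial R t)) =
      C (t.choose m : R) * taylorForm t m P + if m = 0 then 1 else 0 := by
  have hsum : (X 0 + C (P 0) + (X 1 + C (P 1)) + 1 : MvPolynomial (Fin 2) R) =
      X 0 + X 1 + C (P 0 + P 1 + 1) := by
    simp only [map_add, map_one]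
    ring
  simp only [apnPolynomial, map_add, map_pow, translate_X, map_one]
  rw [hsum, homogeneousComponent_add_C_pow (isHomogeneous_X R 0),
    homogeneousComponent_add_C_pow (isHomogeneous_X R 1),
    homogeneousComponent_add_C_pow ((isHomogeneous_X R 0).add (isHomogeneous_X R 1)),
    homogeneousComponent_of_mem (isHomogeneous_one (Fin 2) R), taylorForm]
  ring

theorem homogeneousComponent_apnPolynomial {m : ℕ} (t : ℕ) (hm : m ≠ 0) :
    homogeneousComponent m (apnPolynomial R t) = C (t.choose m : R) *
      (C (0 ^ (t - m)) * (X 0 ^ m + X 1 ^ m) + (X 0 + X 1) ^ m) := by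
  have hzero : translate (0 : Fin 2 → R) (apnPolynomial R t) = apnPolynomial R t := by
    simp [apnPolynomial, translate_X]
  rw [← hzero, homogeneousComponent_translate_apnPolynomial, if_neg hm, taylorForm]
  simp
  ring

theorem apnPolynomial_mem_totalDegreeLT (t : ℕ) :
    apnPolynomial R t ∈ totalDegreeLT (Fin 2) R (t + 1) := by
  refine mem_totalDegreeLT_of_forall_homogeneousComponent_eq_zero fun m hm => ?_
  rw [homogeneousComponent_apnPolynomial t (by omega), Nat.choose_eq_zero_of_lt (by omega),
    Nat.cast_zero, map_zero, zero_mul]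

theorem homogeneousComponent_self_apnPolynomial {t : ℕ} (ht : t ≠ 0) :
    homogeneousComponent t (apnPolynomial R t) = X 0 ^ t + X 1 ^ t + (X 0 + X 1) ^ t := by
  rw [homogeneousComponent_apnPolynomial t ht]
  simp

end CommRing

section Leading

variable {k : Type*} [Field k] {t : ℕ}

theorem isRelPrime_X_X {σ : Type*} {i j : σ} (h : i ≠ j) :
    IsRelPrime (X i : MvPolynomial σ k) (X j) :=
  ((X_prime (R := k) (i := i)).irreducible.isRelPrime_iff_not_dvd).2 fun hdvd => h (X_dvd_X.1 hdvd)

theorem dvd_pderiv_of_mul_self_dvd {σ : Type*} {π p : MvPolynomial σ k} (h : π * π ∣ p) (i : σ) :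
    π ∣ pderiv i p := by
  obtain ⟨c, rfl⟩ := h
  rw [mul_assoc, Derivation.leibniz, Derivation.leibniz]
  simp only [smul_eq_mul]
  exact dvd_add (dvd_mul_right _ _) ((dvd_mul_right _ _).mul_right _)

variable [CharP k 2]

theorem homogeneousComponent_sub_one_apnPolynomial (ht : 3 ≤ t) (hodd : Odd t) :
    homogeneousComponent (t - 1) (apnPolynomial k t) = (X 0 + X 1) ^ (t - 1) := by
  rw [homogeneousComponent_apnPolynomial t (by omega),
    Nat.choose_symm_of_eq_add (show t = t - 1 + 1 by omega), Nat.choose_one_right,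
    natCast_eq_one_of_odd hodd, zero_pow (by omega)]
  simp

theorem not_dvd_add_pow_of_mul_self_dvd (hodd : Odd t)
    {π : MvPolynomial (Fin 2) k} (hπ : Irreducible π)
    (h : π * π ∣ X 0 ^ t + X 1 ^ t + (X 0 + X 1) ^ t) : ¬ π ∣ (X 0 + X 1) ^ (t - 1) := by
  intro hsum
  have hderiv := dvd_pderiv_of_mul_self_dvd h 1
  simp only [map_add, pderiv_pow, natCast_eq_one_of_odd hodd, pderiv_X_self,
    pderiv_X_of_ne (show (0 : Fin 2) ≠ 1 by decide), one_mul, mul_zero, zero_add, mul_one] at hderiv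
  have hX1 := hπ.prime.dvd_of_dvd_pow ((dvd_add_left hsum).1 hderiv)
  have hX0 := (dvd_add_left hX1).1 (hπ.prime.dvd_of_dvd_pow hsum)
  exact hπ.not_isUnit (isRelPrime_X_X zero_ne_one hX0 hX1)

theorem homogeneousComponent_self_apnPolynomial_ne_zero (ht : 3 ≤ t) (hodd : Odd t) :
    homogeneousComponent t (apnPolynomial k t) ≠ 0 := by
  rw [homogeneousComponent_self_apnPolynomial (by omega)]
  intro h0
  have hU : (X 0 + X 1 : MvPolynomial (Fin 2) k).IsHomogeneous 1 :=
    (isHomogeneous_X k 0).add (isHomogeneous_X k 1)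
  have hU0 : (X 0 + X 1 : MvPolynomial (Fin 2) k) ≠ 0 := fun h => by
    simpa using congrArg (eval ![1, 0]) h
  exact not_dvd_add_pow_of_mul_self_dvd hodd (irreducible_of_isHomogeneous_one hU hU0)
    (h0 ▸ dvd_zero _) (dvd_pow_self _ (by omega))

theorem totalDegree_apnPolynomial (ht : 3 ≤ t) (hodd : Odd t) :
    (apnPolynomial k t).totalDegree = t :=
  totalDegree_eq_of_mem_totalDegreeLT (apnPolynomial_mem_totalDegreeLT t)
    (homogeneousComponent_self_apnPolynomial_ne_zero ht hodd)

theorem apnPolynomial_ne_zero (ht : 3 ≤ t) (hodd : Odd t) : apnPolynomial k t ≠ 0 := fun h =>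
  homogeneousComponent_self_apnPolynomial_ne_zero (k := k) ht hodd (by rw [h, map_zero])

theorem isRelPrime_leadingForm_of_apnPolynomial_eq (ht : 3 ≤ t) (hodd : Odd t)
    {a b : MvPolynomial (Fin 2) k} (h : apnPolynomial k t = a * b) :
    IsRelPrime (leadingForm a) (leadingForm b) := by
  have hne : a * b ≠ 0 := h ▸ apnPolynomial_ne_zero ht hodd
  refine isRelPrime_leadingForm (left_ne_zero_of_mul hne) (right_ne_zero_of_mul hne)
    fun π hπ hsq => ?_
  rw [← h, leadingForm, totalDegree_apnPolynomial ht hodd,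
    homogeneousComponent_self_apnPolynomial (by omega)] at hsq
  rw [← h, totalDegree_apnPolynomial ht hodd, homogeneousComponent_sub_one_apnPolynomial ht hodd]
  exact not_dvd_add_pow_of_mul_self_dvd hodd hπ hsq

end Leading

section SingularPoints

variable {k : Type*} [Field k] [CharP k 2] {i ℓ : ℕ} {P : Fin 2 → k}

theorem add_add_add_self_add_one (x y : k) : x + y + (x + y + 1) = 1 := by
  rw [← add_assoc, CharTwo.add_self_eq_zero, zero_add]

theorem isRootPoint_of_translate_mem_pow_two {t : ℕ} (hodd : Odd t)
    (h : translate P (apnPolynomial k t) ∈ idealOfVars (Fin 2) k ^ 2) : IsRootPoint (t - 1) P := by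
  have h0 := homogeneousComponent_eq_zero_of_mem_pow h zero_lt_two
  have h1 := homogeneousComponent_eq_zero_of_mem_pow h one_lt_two
  rw [homogeneousComponent_translate_apnPolynomial] at h0 h1
  rw [Nat.choose_one_right, natCast_eq_one_of_odd hodd] at h1
  have hval : P 0 ^ t + P 1 ^ t + (P 0 + P 1 + 1) ^ t + 1 = 0 := by
    simpa [taylorForm] using congrArg (eval 0) h0
  have hx : P 0 ^ (t - 1) = (P 0 + P 1 + 1) ^ (t - 1) :=
    CharTwo.add_eq_zero.1 (by simpa [taylorForm] using congrArg (eval ![1, 0]) h1)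
  have hy : P 1 ^ (t - 1) = (P 0 + P 1 + 1) ^ (t - 1) :=
    CharTwo.add_eq_zero.1 (by simpa [taylorForm] using congrArg (eval ![0, 1]) h1)
  have hone : (P 0 + P 1 + 1) ^ (t - 1) = 1 := by
    rw [← CharTwo.add_eq_zero, ← hval, ← pow_sub_one_mul hodd.pos.ne' (P 0),
      ← pow_sub_one_mul hodd.pos.ne' (P 1), ← pow_sub_one_mul hodd.pos.ne' (P 0 + P 1 + 1), hx, hy,
      ← mul_add, ← mul_add, add_add_add_self_add_one, mul_one]
  exact ⟨hx.trans hone, hy.trans hone, hone⟩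

theorem taylorForm_two_pow (t : ℕ) : taylorForm t (2 ^ i) P =
    C (P 0 ^ (t - 2 ^ i) + (P 0 + P 1 + 1) ^ (t - 2 ^ i)) * X 0 ^ 2 ^ i +
      C (P 1 ^ (t - 2 ^ i) + (P 0 + P 1 + 1) ^ (t - 2 ^ i)) * X 1 ^ 2 ^ i := by
  rw [taylorForm, add_pow_char_pow, C_add, C_add]
  ring

theorem exists_taylorForm_eq_pow [IsAlgClosed k] (t i : ℕ) (P : Fin 2 → k) :
    ∃ L : MvPolynomial (Fin 2) k, L.IsHomogeneous 1 ∧ taylorForm t (2 ^ i) P = L ^ 2 ^ i := by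
  obtain ⟨x, hx⟩ := IsAlgClosed.exists_pow_nat_eq
    (P 0 ^ (t - 2 ^ i) + (P 0 + P 1 + 1) ^ (t - 2 ^ i)) (Nat.two_pow_pos i)
  obtain ⟨y, hy⟩ := IsAlgClosed.exists_pow_nat_eq
    (P 1 ^ (t - 2 ^ i) + (P 0 + P 1 + 1) ^ (t - 2 ^ i)) (Nat.two_pow_pos i)
  refine ⟨C x * X 0 + C y * X 1, (isHomogeneous_C_mul_X x 0).add (isHomogeneous_C_mul_X y 1), ?_⟩
  rw [taylorForm_two_pow, ← hx, ← hy, add_pow_char_pow, mul_pow, mul_pow, C_pow, C_pow]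

theorem IsRootPoint.translate_mem_pow (i : ℕ) (hP : IsRootPoint ℓ P) :
    translate P (apnPolynomial k (2 ^ i * ℓ + 1)) ∈ idealOfVars (Fin 2) k ^ 2 ^ i := by
  obtain ⟨hx, hy, hz⟩ := (isRootPoint_pow_mul_iff i).2 hP
  refine mem_pow_of_forall_homogeneousComponent_eq_zero fun m hm => ?_
  rw [homogeneousComponent_translate_apnPolynomial]
  rcases Nat.lt_trichotomy m 1 with h | rfl | h
  · obtain rfl : m = 0 := by omega
    rw [if_pos rfl, Nat.choose_zero_right, taylorForm, Nat.sub_zero]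
    simp only [pow_succ, hx, hy, hz, pow_zero, mul_one, one_mul, Nat.cast_one, map_one, ← map_add]
    rw [add_add_add_self_add_one, map_one, CharTwo.add_self_eq_zero]
  · rw [taylorForm, Nat.add_sub_cancel, hx, hy, hz]
    simp only [map_one, one_mul, pow_one, CharTwo.add_self_eq_zero, mul_zero,
      one_ne_zero, if_false]
  · rw [cast_choose_eq_zero_of_lt h hm, map_zero, zero_mul, if_neg (by omega), add_zero]

theorem homogeneousComponent_two_pow_translate (hi : i ≠ 0) (hℓ : Odd ℓ) (P : Fin 2 → k) :
    homogeneousComponent (2 ^ i) (translate P (apnPolynomial k (2 ^ i * ℓ + 1))) =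
      taylorForm (2 ^ i * ℓ + 1) (2 ^ i) P := by
  rw [homogeneousComponent_translate_apnPolynomial, cast_choose_two_pow hi hℓ,
    if_neg (by positivity), map_one, one_mul, add_zero]

theorem homogeneousComponent_two_pow_add_one_translate (hi : i ≠ 0) (hℓ : Odd ℓ)
    (P : Fin 2 → k) :
    homogeneousComponent (2 ^ i + 1) (translate P (apnPolynomial k (2 ^ i * ℓ + 1))) =
      taylorForm (2 ^ i * ℓ + 1) (2 ^ i + 1) P := by
  rw [homogeneousComponent_translate_apnPolynomial, cast_choose_two_pow_add_one hi hℓ,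
    if_neg (by positivity), map_one, one_mul, add_zero]

theorem squarefree_sum_pow_succ (hi : i ≠ 0) {a b c : k} (habc : a * b + a * c + b * c ≠ 0) :
    Squarefree (C (a ^ 2 ^ i) * X 0 ^ (2 ^ i + 1) + C (b ^ 2 ^ i) * X 1 ^ (2 ^ i + 1) +
      C (c ^ 2 ^ i) * (X 0 + X 1) ^ (2 ^ i + 1) : MvPolynomial (Fin 2) k) := by
  refine ((irreducible_sq_not_dvd_iff_eq_zero_and_no_irreducibles_or_squarefree _).1
    fun π hπ hdvd => ?_).resolve_left fun h => h.2 _ (X_prime (R := k) (i := 0)).irreducible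
  have hodd : Odd (2 ^ i + 1) := (even_two.pow_of_ne_zero hi).add_one
  have hx : π ∣ C a * X 0 + C c * (X 0 + X 1) := hπ.prime.dvd_of_dvd_pow (n := 2 ^ i) <| by
    simpa [pderiv_pow, natCast_eq_one_of_odd hodd, pderiv_X_of_ne, add_pow_char_pow, mul_pow,
      Derivation.leibniz] using dvd_pderiv_of_mul_self_dvd hdvd 0
  have hy : π ∣ C b * X 1 + C c * (X 0 + X 1) := hπ.prime.dvd_of_dvd_pow (n := 2 ^ i) <| by
    simpa [pderiv_pow, natCast_eq_one_of_odd hodd, pderiv_X_of_ne, add_pow_char_pow, mul_pow,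
      Derivation.leibniz] using dvd_pderiv_of_mul_self_dvd hdvd 1
  have hunit : IsUnit (C (a * b + a * c + b * c) : MvPolynomial (Fin 2) k) :=
    (isUnit_iff_ne_zero.2 habc).map C
  have htwo : (2 : MvPolynomial (Fin 2) k) = 0 := CharTwo.two_eq_zero
  refine hπ.not_isUnit (isRelPrime_X_X zero_ne_one (hunit.dvd_mul_left.1 ?_)
    (hunit.dvd_mul_left.1 ?_))
  · convert dvd_add (hx.mul_left (C b + C c)) (hy.mul_left (C c)) using 1
    simp only [map_add, map_mul]
    linear_combination (- (C c * C b * X 1) - C c ^ 2 * (X 0 + X 1)) * htwo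
  · convert dvd_add (hy.mul_left (C a + C c)) (hx.mul_left (C c)) using 1
    simp only [map_add, map_mul]
    linear_combination (- (C c * C a * X 0) - C c ^ 2 * (X 0 + X 1)) * htwo

theorem IsRootPoint.squarefree_taylorForm (hi : i ≠ 0) (hℓ : Odd ℓ) (hP : IsRootPoint ℓ P) :
    Squarefree (taylorForm (2 ^ i * ℓ + 1) (2 ^ i + 1) P) := by
  obtain ⟨hx, hy, hz⟩ := hP.ne_zero hℓ.pos.ne'
  have hpow {x : k} (h : x ^ ℓ = 1) : x ^ (2 ^ i * ℓ + 1 - (2 ^ i + 1)) = x⁻¹ ^ 2 ^ i := by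
    rw [Nat.add_sub_add_right, ← Nat.mul_sub_one, mul_comm, pow_mul,
      eq_inv_of_mul_eq_one_left (a := x ^ (ℓ - 1)) (by rw [pow_sub_one_mul hℓ.pos.ne', h])]
  rw [taylorForm, hpow hP.1, hpow hP.2.1, hpow hP.2.2]
  refine squarefree_sum_pow_succ hi ?_
  have hdet : (P 0)⁻¹ * (P 1)⁻¹ + (P 0)⁻¹ * (P 0 + P 1 + 1)⁻¹ + (P 1)⁻¹ * (P 0 + P 1 + 1)⁻¹ =
      (P 0 + P 1 + (P 0 + P 1 + 1)) * (P 0 * P 1 * (P 0 + P 1 + 1))⁻¹ := by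
    field_simp
    ring
  rw [hdet, add_add_add_self_add_one, one_mul]
  exact inv_ne_zero (mul_ne_zero (mul_ne_zero hx hy) hz)

theorem taylorForm_two_pow_eq_zero_iff (t i : ℕ) (P : Fin 2 → k) :
    taylorForm t (2 ^ i) P = 0 ↔ P 0 ^ (t - 2 ^ i) = (P 0 + P 1 + 1) ^ (t - 2 ^ i) ∧
      P 1 ^ (t - 2 ^ i) = (P 0 + P 1 + 1) ^ (t - 2 ^ i) := by
  rw [taylorForm_two_pow]
  refine ⟨fun h => ⟨CharTwo.add_eq_zero.1 ?_, CharTwo.add_eq_zero.1 ?_⟩, fun ⟨hx, hy⟩ => by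
    rw [hx, hy, CharTwo.add_self_eq_zero, map_zero, zero_mul, zero_mul, add_zero]⟩
  · simpa using congrArg (eval ![1, 0]) h
  · simpa using congrArg (eval ![0, 1]) h

theorem IsRootPoint.taylorForm_two_pow_eq_zero_iff (hℓ : Odd ℓ) (hP : IsRootPoint ℓ P) :
    taylorForm (2 ^ i * ℓ + 1) (2 ^ i) P = 0 ↔ IsRootPoint (2 ^ i - 1) P := by
  set d := 2 ^ i * ℓ + 1 - 2 ^ i
  have hle : 2 ^ i ≤ 2 ^ i * ℓ := Nat.le_mul_of_pos_right _ hℓ.pos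
  have hmul {x : k} (h : x ^ ℓ = 1) : x ^ d * x ^ (2 ^ i - 1) = 1 := by
    rw [← pow_add, show d + (2 ^ i - 1) = ℓ * 2 ^ i by grind [Nat.two_pow_pos i], pow_mul, h,
      one_pow]
  have hroot {x : k} (h : x ^ ℓ = 1) : x ^ d * x ^ 2 ^ i = x := by
    rw [← pow_sub_one_mul (Nat.two_pow_pos i).ne', ← mul_assoc, hmul h, one_mul]
  rw [APN.taylorForm_two_pow_eq_zero_iff]
  constructor
  · rintro ⟨hx, hy⟩
    have hz : (P 0 + P 1 + 1) ^ d = 1 := by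
      calc (P 0 + P 1 + 1) ^ d
          = (P 0 + P 1 + 1) ^ d * (P 0 + P 1 + (P 0 + P 1 + 1)) ^ 2 ^ i := by
            rw [add_add_add_self_add_one, one_pow, mul_one]
        _ = P 0 ^ d * P 0 ^ 2 ^ i + P 1 ^ d * P 1 ^ 2 ^ i +
            (P 0 + P 1 + 1) ^ d * (P 0 + P 1 + 1) ^ 2 ^ i := by
            rw [hx, hy, add_pow_char_pow, add_pow_char_pow (P 0)]
            ring
        _ = 1 := by rw [hroot hP.1, hroot hP.2.1, hroot hP.2.2, add_add_add_self_add_one]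
    have hone {x : k} (h : x ^ ℓ = 1) (hd : x ^ d = 1) : x ^ (2 ^ i - 1) = 1 := by
      simpa only [hd, one_mul] using hmul h
    exact ⟨hone hP.1 (hx.trans hz), hone hP.2.1 (hy.trans hz), hone hP.2.2 hz⟩
  · rintro ⟨hx, hy, hz⟩
    have hone {x : k} (h : x ^ ℓ = 1) (hq : x ^ (2 ^ i - 1) = 1) : x ^ d = 1 := by
      simpa only [hq, mul_one] using hmul h
    rw [hone hP.1 hx, hone hP.2.1 hy, hone hP.2.2 hz]
    exact ⟨rfl, rfl⟩

theorem IsRootPoint.orderAt_apnPolynomial (hi : i ≠ 0) (hℓ : Odd ℓ) (hP : IsRootPoint ℓ P)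
    (hq : IsRootPoint (2 ^ i - 1) P) :
    orderAt P (apnPolynomial k (2 ^ i * ℓ + 1)) = 2 ^ i + 1 := by
  refine orderAt_eq_of_mem_pow (mem_pow_add_one_of_homogeneousComponent_eq_zero
    (hP.translate_mem_pow i) ?_) ?_
  · rw [homogeneousComponent_two_pow_translate hi hℓ]
    exact (hP.taylorForm_two_pow_eq_zero_iff hℓ).2 hq
  · rw [homogeneousComponent_two_pow_add_one_translate hi hℓ]
    exact (hP.squarefree_taylorForm hi hℓ).ne_zero

theorem IsRootPoint.squarefree_initialForm_apnPolynomial (hi : i ≠ 0) (hℓ : Odd ℓ)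
    (hP : IsRootPoint ℓ P) (hq : IsRootPoint (2 ^ i - 1) P) :
    Squarefree (initialForm P (apnPolynomial k (2 ^ i * ℓ + 1))) := by
  rw [initialForm, hP.orderAt_apnPolynomial hi hℓ hq,
    homogeneousComponent_two_pow_add_one_translate hi hℓ]
  exact hP.squarefree_taylorForm hi hℓ

theorem IsRootPoint.orderAt_apnPolynomial_of_not (hi : i ≠ 0) (hℓ : Odd ℓ) (hP : IsRootPoint ℓ P)
    (hq : ¬ IsRootPoint (2 ^ i - 1) P) :
    orderAt P (apnPolynomial k (2 ^ i * ℓ + 1)) = 2 ^ i :=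
  orderAt_eq_of_mem_pow (hP.translate_mem_pow i) fun h =>
    hq ((hP.taylorForm_two_pow_eq_zero_iff hℓ).1
      ((homogeneousComponent_two_pow_translate hi hℓ P).symm.trans h))

theorem IsRootPoint.hasSingleTangent_apnPolynomial [IsAlgClosed k] (hi : i ≠ 0) (hℓ : Odd ℓ)
    (hP : IsRootPoint ℓ P) (hq : ¬ IsRootPoint (2 ^ i - 1) P) :
    HasSingleTangent P (apnPolynomial k (2 ^ i * ℓ + 1)) := by
  rw [HasSingleTangent, initialForm, hP.orderAt_apnPolynomial_of_not hi hℓ hq,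
    homogeneousComponent_two_pow_translate hi hℓ,
    homogeneousComponent_two_pow_add_one_translate hi hℓ]
  exact ⟨exists_taylorForm_eq_pow _ i P, hP.squarefree_taylorForm hi hℓ⟩

theorem isRootPoint_of_eval_eq_zero {a b : MvPolynomial (Fin 2) k}
    (h : apnPolynomial k (2 ^ i * ℓ + 1) = a * b) (hi : i ≠ 0) (ha : eval P a = 0)
    (hb : eval P b = 0) : IsRootPoint ℓ P := by
  refine (isRootPoint_pow_mul_iff i).1 (isRootPoint_of_translate_mem_pow_two
    ((even_two.pow_of_ne_zero hi).mul_right ℓ).add_one ?_)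
  rw [h, map_mul, pow_two]
  exact Ideal.mul_mem_mul (translate_mem_idealOfVars_iff.2 ha) (translate_mem_idealOfVars_iff.2 hb)

end SingularPoints

end ApnPolynomial

/-! ### Intersecting a factor with its conjugate -/

section Conjugation

open MvPolynomial

variable {σ : Type*} {k K : Type*} [Field k] [Field K] (φ : k →+* K) (P : σ → k)
  (p : MvPolynomial σ k)

theorem translate_map : translate (fun i => φ (P i)) (map φ p) = map φ (translate P p) := by
  have h : ((translate fun i => φ (P i) : MvPolynomial σ K →+* MvPolynomial σ K)).comp (map φ) =
      (map φ).comp (translate P : MvPolynomial σ k →+* MvPolynomial σ k) := by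
    ext i <;> simp [translate_X, translate_C]
  exact congrArg (· p) h

theorem homogeneousComponent_map (n : ℕ) :
    homogeneousComponent n (map φ p) = map φ (homogeneousComponent n p) := by
  ext d
  simp only [coeff_homogeneousComponent, coeff_map]
  split_ifs <;> simp

theorem orderAt_map : orderAt (fun i => φ (P i)) (map φ p) = orderAt P p := by
  simp only [orderAt, translate_map, homogeneousComponent_map, ne_eq,
    map_eq_zero_iff _ (map_injective (σ := σ) φ φ.injective)]

theorem totalDegree_map_ringHom : (map φ p).totalDegree = p.totalDegree := by
  simp only [totalDegree, support_map_of_injective p φ.injective]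

theorem IsRootPoint.map {m : ℕ} {P : Fin 2 → k} (hP : IsRootPoint m P) :
    IsRootPoint m fun i => φ (P i) := by
  obtain ⟨hx, hy, hz⟩ := hP
  refine ⟨?_, ?_, ?_⟩
  · rw [← map_pow, hx, map_one]
  · rw [← map_pow, hy, map_one]
  · rw [← map_add, ← map_one φ, ← map_add, ← map_pow, hz]

end Conjugation

section Points

variable {k : Type*} [Field k] {i ℓ m : ℕ} {P : Fin 2 → k}

variable (k) in
open scoped Classical in
/-- The finite set of points satisfying `IsRootPoint m`. -/
noncomputable def rootPoints (m : ℕ) : Finset (Fin 2 → k) :=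
  (Fintype.piFinset fun _ => Polynomial.nthRootsFinset m (1 : k)).filter (IsRootPoint m)

theorem mem_rootPoints (hm : 0 < m) : P ∈ rootPoints k m ↔ IsRootPoint m P := by
  simp only [rootPoints, Finset.mem_filter, Fintype.mem_piFinset, Fin.forall_fin_two,
    Polynomial.mem_nthRootsFinset hm, and_iff_right_iff_imp]
  exact fun h => ⟨h.1, h.2.1⟩

variable (k) in
open scoped Classical in
/-- The singular points of `apnPolynomial k (2 ^ i * ℓ + 1)` with `2 ^ i + 1` distinct tangents. -/
noncomputable def ordinaryPoints (i ℓ : ℕ) : Finset (Fin 2 → k) :=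
  (rootPoints k ℓ).filter (IsRootPoint (2 ^ i - 1))

variable (k) in
open scoped Classical in
/-- The singular points of `apnPolynomial k (2 ^ i * ℓ + 1)` of order `2 ^ i`. They have a single
tangent. -/
noncomputable def singleTangentPoints (i ℓ : ℕ) : Finset (Fin 2 → k) :=
  (rootPoints k ℓ).filter fun P => ¬ IsRootPoint (2 ^ i - 1) P

theorem mem_ordinaryPoints (hℓ : 0 < ℓ) :
    P ∈ ordinaryPoints k i ℓ ↔ IsRootPoint ℓ P ∧ IsRootPoint (2 ^ i - 1) P := by
  classical rw [ordinaryPoints, Finset.mem_filter, mem_rootPoints hℓ]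

theorem mem_singleTangentPoints (hℓ : 0 < ℓ) :
    P ∈ singleTangentPoints k i ℓ ↔ IsRootPoint ℓ P ∧ ¬ IsRootPoint (2 ^ i - 1) P := by
  classical rw [singleTangentPoints, Finset.mem_filter, mem_rootPoints hℓ]

open MvPolynomial in
theorem sum_orderAt_map_sq (φ : k →+* k) (hℓ : 0 < ℓ) (a : MvPolynomial (Fin 2) k) :
    ∑ P ∈ ordinaryPoints k i ℓ, orderAt P (map φ a) ^ 2 =
      ∑ P ∈ ordinaryPoints k i ℓ, orderAt P a ^ 2 := by
  have hmaps (P : Fin 2 → k) (hP : P ∈ ordinaryPoints k i ℓ) :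
      (fun j => φ (P j)) ∈ ordinaryPoints k i ℓ := by
    rw [mem_ordinaryPoints hℓ] at hP ⊢
    exact ⟨hP.1.map φ, hP.2.map φ⟩
  have hinj : Set.InjOn (fun (P : Fin 2 → k) j => φ (P j)) (ordinaryPoints k i ℓ) :=
    fun P _ Q _ h => funext fun j => φ.injective (congrFun h j)
  exact (Finset.sum_nbij _ hmaps hinj
    (Finset.surjOn_of_injOn_of_card_le _ hmaps hinj le_rfl) fun P _ => by rw [orderAt_map]).symm

end Points

section Components

open MvPolynomial

section SingleTangent

variable {k σ : Type*} [Field k] {P : σ → k}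

-- Among two complementary factors through the point one has order `1`. Applied to the splittings
-- `a | bcw`, `b | acw`, `c | abw` and `ab | cw` this leaves only `a`, `b` and `c`, of order `1`.
theorem HasSingleTangent.orderAt_eq_three {a b c w : MvPolynomial σ k}
    (h : HasSingleTangent P (a * b * c * w)) (hne : a * b * c * w ≠ 0) (ha : orderAt P a ≠ 0)
    (hb : orderAt P b ≠ 0) (hc : orderAt P c ≠ 0) : orderAt P (a * b * c * w) = 3 := by
  obtain ⟨⟨⟨ha0, hb0⟩, hc0⟩, hw0⟩ := by simpa only [mul_ne_zero_iff] using hne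
  have h1 := HasSingleTangent.orderAt_le_one (a := a) (b := b * c * w) (by convert h using 1; ring)
    ha0 (by simp [*])
  have h2 := HasSingleTangent.orderAt_le_one (a := b) (b := a * c * w) (by convert h using 1; ring)
    hb0 (by simp [*])
  have h3 := HasSingleTangent.orderAt_le_one (a := c) (b := a * b * w) (by convert h using 1; ring)
    hc0 (by simp [*])
  have h4 := HasSingleTangent.orderAt_le_one (a := a * b) (b := c * w)
    (by convert h using 1; ring) (by simp [*]) (by simp [*])
  simp only [orderAt_mul, mul_ne_zero, ne_eq, not_false_eq_true, ha0, hb0, hc0, hw0]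
    at h1 h2 h3 h4
  rw [orderAt_mul P (by simp [*]) hw0, orderAt_mul P (by simp [*]) hc0, orderAt_mul P ha0 hb0]
  omega

open scoped Classical in
theorem HasSingleTangent.countP_le_two {s : Multiset (MvPolynomial σ k)} {w : MvPolynomial σ k}
    (h : HasSingleTangent P (s.prod * w)) (hne : s.prod * w ≠ 0)
    (hthree : orderAt P (s.prod * w) ≠ 3) : s.countP (fun a => orderAt P a ≠ 0) ≤ 2 := by
  by_contra! hlt
  rw [Multiset.countP_eq_card_filter] at hlt
  obtain ⟨s', hs'⟩ := Multiset.card_pos_iff_exists_mem.1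
    ((Nat.choose_pos hlt).trans_eq (Multiset.card_powersetCard 3 _).symm)
  obtain ⟨hle, hcard⟩ := Multiset.mem_powersetCard.1 hs'
  obtain ⟨a, b, c, rfl⟩ := Multiset.card_eq_three.1 hcard
  obtain ⟨z, hz⟩ := Multiset.prod_dvd_prod_of_le (hle.trans (Multiset.filter_le _ s))
  have hprod : s.prod * w = a * b * c * (z * w) := by
    rw [hz]
    simp only [Multiset.insert_eq_cons, Multiset.prod_cons, Multiset.prod_singleton]
    ring
  have hpos {x : MvPolynomial σ k} (hx : x ∈ ({a, b, c} : Multiset _)) : orderAt P x ≠ 0 :=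
    (Multiset.mem_filter.1 (Multiset.mem_of_le hle hx)).2
  rw [hprod] at h hne hthree
  exact hthree (h.orderAt_eq_three hne (hpos (by simp)) (hpos (by simp)) (hpos (by simp)))

open scoped Classical in
theorem mul_totalDegree_multiset_prod_le {t c d : ℕ} {Z Z' : Finset (σ → k)}
    {s : Multiset (MvPolynomial σ k)} (h0 : 0 ∉ s)
    (h : ∀ a ∈ s, t * a.totalDegree ≤ c * ∑ P ∈ Z, orderAt P a +
      d * (Z'.filter fun P => orderAt P a ≠ 0).card) :
    t * s.prod.totalDegree ≤ c * ∑ P ∈ Z, orderAt P s.prod +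
      d * ∑ P ∈ Z', s.countP (fun a => orderAt P a ≠ 0) := by
  induction s using Multiset.induction_on with
  | empty => simp
  | cons a s ih =>
    rw [Multiset.mem_cons, not_or] at h0
    have ha : a ≠ 0 := fun h => h0.1 h.symm
    have hs : s.prod ≠ 0 := Multiset.prod_ne_zero h0.2
    have hhead := h a (Multiset.mem_cons_self a s)
    have htail := ih h0.2 fun b hb => h b (Multiset.mem_cons_of_mem hb)
    rw [Finset.card_filter] at hhead
    simp only [Multiset.prod_cons, totalDegree_mul_of_isDomain ha hs, orderAt_mul _ ha hs,
      Multiset.countP_cons, Finset.sum_add_distrib]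
    linarith

end SingleTangent

variable {k : Type*} [Field k] [CharP k 2] {i ℓ : ℕ} {a b r : MvPolynomial (Fin 2) k}

variable [IsAlgClosed k]

open scoped Classical in
theorem totalDegree_mul_totalDegree_le (hi : i ≠ 0) (hℓ : Odd ℓ)
    (hf : apnPolynomial k (2 ^ i * ℓ + 1) = a * (b * r)) :
    a.totalDegree * b.totalDegree ≤ ∑ P ∈ ordinaryPoints k i ℓ, orderAt P a * orderAt P b +
      2 ^ i * ((singleTangentPoints k i ℓ).filter fun P => orderAt P a ≠ 0).card := by
  have ht := three_le_two_pow_mul_add_one hi hℓ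
  have hodd := odd_two_pow_mul_add_one hi ℓ
  have hne : a * (b * r) ≠ 0 := hf ▸ apnPolynomial_ne_zero ht hodd
  obtain ⟨ha, hb, hr⟩ := by simpa only [mul_ne_zero_iff] using hne
  have hf' : apnPolynomial k (2 ^ i * ℓ + 1) = a * b * r := by rw [hf, mul_assoc]
  have hrel : IsRelPrime (leadingForm a) (leadingForm b) :=
    (isRelPrime_leadingForm_of_apnPolynomial_eq ht hodd hf).of_dvd_right
      (leadingForm_mul hb hr ▸ dvd_mul_right _ _)
  refine (totalDegree_mul_totalDegree_le_sum hb hrel (Z := rootPoints k ℓ)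
    (b := fun P => if IsRootPoint (2 ^ i - 1) P then orderAt P a * orderAt P b
      else if orderAt P a ≠ 0 then 2 ^ i else 0) (fun P hPa hPb => ?_) fun P hP => ?_).trans_eq ?_
  · exact (mem_rootPoints hℓ.pos).2 (isRootPoint_of_eval_eq_zero hf hi hPa (by simp [hPb]))
  · rw [mem_rootPoints hℓ.pos] at hP
    split_ifs with hq h0
    · have hsq := hP.squarefree_initialForm_apnPolynomial hi hℓ hq
      rw [hf', initialForm_mul P (mul_ne_zero ha hb) hr] at hsq
      exact localMultiplicityLE_span_pair ha hb
        (isRelPrime_initialForm_of_squarefree ha hb (hsq.squarefree_of_dvd (dvd_mul_right _ _)))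
    · have htan := hP.hasSingleTangent_apnPolynomial hi hℓ hq
      rw [hf] at htan
      refine (htan.localMultiplicityLE ha (mul_ne_zero hb hr)).mono (Ideal.span_le.2 ?_) ?_
      · rintro x (rfl | rfl)
        · exact Ideal.subset_span (by simp)
        · exact Ideal.mul_mem_right _ _ (Ideal.subset_span (by simp))
      · rw [← hf, hP.orderAt_apnPolynomial_of_not hi hℓ hq]
        split_ifs
        exacts [Nat.zero_le _, le_rfl]
    · simpa [not_not.1 h0] using localMultiplicityLE_span_pair ha hb
        (isRelPrime_initialForm_of_orderAt_eq_zero ha (not_not.1 h0))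
  · rw [Finset.sum_ite, ← Finset.sum_filter, Finset.sum_const, smul_eq_mul, mul_comm (2 ^ i)]
    rfl

open scoped Classical in
-- Add the Bézout bounds for the pairs `a, φ a` and `a, φ a * r`, and use
-- `2 * ord a * ord (φ a) ≤ (ord a) ^ 2 + (ord (φ a)) ^ 2`: as `φ` permutes the ordinary points,
-- both squares have the same sum over them.
theorem mul_totalDegree_le_of_eq_mul_map (hi : i ≠ 0) (hℓ : Odd ℓ) (φ : k →+* k)
    (hf : apnPolynomial k (2 ^ i * ℓ + 1) = a * (map φ a * r)) :
    (2 ^ i * ℓ + 1) * a.totalDegree ≤ (2 ^ i + 1) * ∑ P ∈ ordinaryPoints k i ℓ, orderAt P a +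
      2 * 2 ^ i * ((singleTangentPoints k i ℓ).filter fun P => orderAt P a ≠ 0).card := by
  have ht := three_le_two_pow_mul_add_one hi hℓ
  have hodd := odd_two_pow_mul_add_one hi ℓ
  have hne : a * (map φ a * r) ≠ 0 := hf ▸ apnPolynomial_ne_zero ht hodd
  obtain ⟨ha, hb⟩ := mul_ne_zero_iff.1 hne
  have hconj := totalDegree_mul_totalDegree_le hi hℓ hf
  have hrest := totalDegree_mul_totalDegree_le hi hℓ (b := map φ a * r) (r := 1) (by rwa [mul_one])
  have hdeg : (2 ^ i * ℓ + 1) * a.totalDegree =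
      a.totalDegree * a.totalDegree + a.totalDegree * (map φ a * r).totalDegree := by
    rw [← totalDegree_apnPolynomial (k := k) ht hodd, hf, totalDegree_mul_of_isDomain ha hb]
    ring
  have hamgm : 2 * ∑ P ∈ ordinaryPoints k i ℓ, orderAt P a * orderAt P (map φ a) ≤
      ∑ P ∈ ordinaryPoints k i ℓ, orderAt P a ^ 2 +
        ∑ P ∈ ordinaryPoints k i ℓ, orderAt P (map φ a) ^ 2 := by
    rw [Finset.mul_sum, ← Finset.sum_add_distrib]
    exact Finset.sum_le_sum fun P _ =>
      (mul_assoc _ _ _).symm.trans_le (two_mul_le_add_sq (orderAt P a) (orderAt P (map φ a)))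
  have hsum : ∑ P ∈ ordinaryPoints k i ℓ, orderAt P a * orderAt P (map φ a * r) +
      ∑ P ∈ ordinaryPoints k i ℓ, orderAt P a ^ 2 =
        (2 ^ i + 1) * ∑ P ∈ ordinaryPoints k i ℓ, orderAt P a := by
    rw [Finset.mul_sum, ← Finset.sum_add_distrib]
    refine Finset.sum_congr rfl fun P hP => ?_
    rw [mem_ordinaryPoints hℓ.pos] at hP
    rw [← hP.1.orderAt_apnPolynomial hi hℓ hP.2, hf, orderAt_mul P ha hb]
    ring
  rw [totalDegree_map_ringHom] at hconj
  rw [sum_orderAt_map_sq φ hℓ.pos] at hamgm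
  linarith

theorem mul_totalDegree_le_card_ordinaryPoints_add (hi : i ≠ 0) (hℓ : Odd ℓ) (φ : k →+* k)
    {w g : MvPolynomial (Fin 2) k} (hf : apnPolynomial k (2 ^ i * ℓ + 1) = w * g)
    (hg : ∀ a, Irreducible a → a ∣ g → a * map φ a ∣ apnPolynomial k (2 ^ i * ℓ + 1)) :
    (2 ^ i * ℓ + 1) * g.totalDegree ≤ (2 ^ i + 1) ^ 2 * (ordinaryPoints k i ℓ).card +
      4 * 2 ^ i * (singleTangentPoints k i ℓ).card := by
  classical
  have hne : w * g ≠ 0 := hf ▸ apnPolynomial_ne_zero (three_le_two_pow_mul_add_one hi hℓ)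
    (odd_two_pow_mul_add_one hi ℓ)
  obtain ⟨s, hs, u, rfl⟩ :=
    UniqueFactorizationMonoid.exists_prime_factors g (right_ne_zero_of_mul hne)
  have h0 : (0 : MvPolynomial (Fin 2) k) ∉ s := fun h => (hs 0 h).ne_zero rfl
  have hsum := mul_totalDegree_multiset_prod_le h0 fun a ha => by
    obtain ⟨r, hr⟩ := hg a (hs a ha).irreducible ((Multiset.dvd_prod ha).mul_right _)
    exact mul_totalDegree_le_of_eq_mul_map hi hℓ φ (hr.trans (mul_assoc _ _ _))
  have hdeg : (s.prod * u : MvPolynomial (Fin 2) k).totalDegree = s.prod.totalDegree := by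
    rw [totalDegree_mul_of_isDomain (Multiset.prod_ne_zero h0) u.ne_zero,
      (isUnit_iff_totalDegree_of_isReduced.1 u.isUnit).2, add_zero]
  have hf' : apnPolynomial k (2 ^ i * ℓ + 1) = s.prod * (u * w) := by
    rw [hf]
    ring
  rw [mul_comm, mul_assoc] at hne
  have hord : ∑ P ∈ ordinaryPoints k i ℓ, orderAt P s.prod ≤
      (ordinaryPoints k i ℓ).card * (2 ^ i + 1) := by
    refine Finset.sum_le_card_nsmul _ _ _ fun P hP => ?_
    rw [mem_ordinaryPoints hℓ.pos] at hP
    rw [← hP.1.orderAt_apnPolynomial hi hℓ hP.2, hf',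
      orderAt_mul P (left_ne_zero_of_mul hne) (right_ne_zero_of_mul hne)]
    exact Nat.le_add_right _ _
  have hcount : ∑ P ∈ singleTangentPoints k i ℓ, s.countP (fun a => orderAt P a ≠ 0) ≤
      (singleTangentPoints k i ℓ).card * 2 := by
    refine Finset.sum_le_card_nsmul _ _ _ fun P hP => ?_
    rw [mem_singleTangentPoints hℓ.pos] at hP
    have hpow := hP.1.orderAt_apnPolynomial_of_not hi hℓ hP.2
    refine HasSingleTangent.countP_le_two (hf' ▸ hP.1.hasSingleTangent_apnPolynomial hi hℓ hP.2)
      hne fun h3 => ?_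
    rw [hf', h3] at hpow
    exact absurd (hpow ▸ even_two.pow_of_ne_zero hi) (by decide)
  rw [hdeg]
  nlinarith [Nat.mul_le_mul_left (2 ^ i + 1) hord, Nat.mul_le_mul_left (2 * 2 ^ i) hcount]

end Components

/-! ### Counting the singular points -/

section Counting

variable {k : Type*} [Field k] {i ℓ m : ℕ}

open scoped Classical in
theorem card_filter_rootPoints_le (hm : 0 < m) (α : k) :
    ((rootPoints k m).filter fun P => P 0 = α).card ≤ m := by
  refine (Finset.card_le_card_of_injOn (fun P => P 1)
    (t := Polynomial.nthRootsFinset m (1 : k)) (fun P hP => ?_) fun P hP Q hQ h => ?_).trans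
    ((Multiset.toFinset_card_le _).trans (Polynomial.card_nthRoots m 1))
  · rw [Finset.mem_coe, Finset.mem_filter, mem_rootPoints hm] at hP
    exact (Polynomial.mem_nthRootsFinset hm 1).2 hP.1.2.1
  · rw [Finset.mem_coe, Finset.mem_filter] at hP hQ
    exact funext (Fin.forall_fin_two.2 ⟨hP.2.trans hQ.2.symm, h⟩)

theorem card_ordinaryPoints_add_card_singleTangentPoints :
    (ordinaryPoints k i ℓ).card + (singleTangentPoints k i ℓ).card = (rootPoints k ℓ).card := by
  classical
  exact Finset.card_filter_add_card_filter_not _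

theorem card_singleTangentPoints_eq_zero (hℓ : 0 < ℓ) (h : ℓ ∣ 2 ^ i - 1) :
    (singleTangentPoints k i ℓ).card = 0 := by
  rw [Finset.card_eq_zero, Finset.eq_empty_iff_forall_notMem]
  intro P hP
  obtain ⟨⟨hx, hy, hz⟩, hq⟩ := (mem_singleTangentPoints hℓ).1 hP
  obtain ⟨c, hc⟩ := h
  exact hq ⟨by rw [hc, pow_mul, hx, one_pow], by rw [hc, pow_mul, hy, one_pow],
    by rw [hc, pow_mul, hz, one_pow]⟩

theorem ordinaryPoints_subset (hℓ : 0 < ℓ) :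
    ordinaryPoints k i ℓ ⊆ rootPoints k (ℓ.gcd (2 ^ i - 1)) := fun P hP => by
  obtain ⟨⟨hx, hy, hz⟩, hx', hy', hz'⟩ := (mem_ordinaryPoints hℓ).1 hP
  exact (mem_rootPoints (Nat.gcd_pos_of_pos_left _ hℓ)).2
    ⟨pow_gcd_eq_one.2 ⟨hx, hx'⟩, pow_gcd_eq_one.2 ⟨hy, hy'⟩, pow_gcd_eq_one.2 ⟨hz, hz'⟩⟩

variable [CharP k 2]

open scoped Classical in
-- The involution `(x, y) ↦ (x, x + y + 1)` has no fixed point on the line `x = α`.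
theorem even_card_filter_rootPoints (hm : 0 < m) {α : k} (hα : α ≠ 1) :
    Even ((rootPoints k m).filter fun P => P 0 = α).card := by
  rw [even_iff_two_dvd, ← ZMod.natCast_eq_zero_iff, Finset.card_eq_sum_ones, Nat.cast_sum]
  have hinvol (P : Fin 2 → k) : P 0 + (P 0 + P 1 + 1) + 1 = P 1 := by
    linear_combination (P 0 + 1) * CharTwo.two_eq_zero (R := k)
  refine Finset.sum_involution (fun P _ => ![P 0, P 0 + P 1 + 1]) (fun _ _ => by decide)
    (fun P hP _ h => hα ?_) (fun P hP => ?_) fun P _ => ?_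
  · have h1 : P 0 + P 1 + 1 = P 1 := congrFun h 1
    rw [← (Finset.mem_filter.1 hP).2, ← CharTwo.add_eq_zero]
    linear_combination h1
  · rw [Finset.mem_filter, mem_rootPoints hm] at hP ⊢
    obtain ⟨⟨hx, hy, hz⟩, h0⟩ := hP
    exact ⟨⟨hx, hz, (congrArg (· ^ m) (hinvol P)).trans hy⟩, h0⟩
  · exact funext (Fin.forall_fin_two.2 ⟨rfl, hinvol P⟩)

theorem card_rootPoints_le (hm : Odd m) : (rootPoints k m).card ≤ m * (m - 1) + 1 := by
  classical
  have hroot (P : Fin 2 → k) (hP : P ∈ rootPoints k m) :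
      P 0 ∈ Polynomial.nthRootsFinset m (1 : k) :=
    (Polynomial.mem_nthRootsFinset hm.pos 1).2 ((mem_rootPoints hm.pos).1 hP).1
  have hfiber (α : k) :
      ((rootPoints k m).filter fun P => P 0 = α).card ≤ (m - 1) + if α = 1 then 1 else 0 := by
    have hle := card_filter_rootPoints_le hm.pos α
    split_ifs with hα
    · omega
    · have heven := even_card_filter_rootPoints hm.pos hα
      grind
  calc (rootPoints k m).card
      = ∑ α ∈ Polynomial.nthRootsFinset m (1 : k),
          ((rootPoints k m).filter fun P => P 0 = α).card :=
        Finset.card_eq_sum_card_fiberwise hroot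
    _ ≤ ∑ α ∈ Polynomial.nthRootsFinset m (1 : k), ((m - 1) + if α = 1 then 1 else 0) :=
        Finset.sum_le_sum fun α _ => hfiber α
    _ ≤ m * (m - 1) + 1 := by
        rw [Finset.sum_add_distrib, Finset.sum_const, smul_eq_mul, Finset.sum_ite_eq']
        gcongr
        · exact (Multiset.toFinset_card_le _).trans (Polynomial.card_nthRoots m 1)
        · split_ifs <;> omega

theorem card_ordinaryPoints_le (hℓ : Odd ℓ) : (ordinaryPoints k i ℓ).card ≤
    ℓ.gcd (2 ^ i - 1) * (ℓ.gcd (2 ^ i - 1) - 1) + 1 :=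
  (Finset.card_le_card (ordinaryPoints_subset hℓ.pos)).trans
    (card_rootPoints_le (Odd.of_dvd_nat hℓ (Nat.gcd_dvd_left _ _)))

end Counting

section Arithmetic

theorem three_mul_le_of_dvd_of_odd {d n : ℕ} (h : d ∣ n) (hn : Odd n) (hne : d ≠ n) :
    3 * d ≤ n := by
  obtain ⟨c, rfl⟩ := h
  have hc : c ≠ 1 := by
    rintro rfl
    exact hne (mul_one d).symm
  obtain ⟨e, rfl⟩ := (Nat.odd_mul.1 hn).2
  rw [mul_comm]
  exact Nat.mul_le_mul_left d (by omega)

variable {q ℓ d A B : ℤ}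

theorem sq_mul_lt_of_three_mul_add_one_le (hℓ : 3 ≤ ℓ) (hq : 3 * ℓ + 1 ≤ q)
    (hA : A ≤ ℓ * (ℓ - 1) + 1) : (q + 1) ^ 2 * A < (q * ℓ + 1) * (q * ℓ - 2) := by
  refine (mul_le_mul_of_nonneg_left hA (sq_nonneg (q + 1))).trans_lt ?_
  have hqℓ : 0 ≤ q * (ℓ - 1) * (q - 3 * ℓ - 1) := by
    apply_rules [mul_nonneg] <;> linarith
  have hℓ' : 6 ≤ ℓ * (ℓ - 1) := by nlinarith
  nlinarith [mul_nonneg (sub_nonneg.2 (show 10 ≤ q by linarith)) (sub_nonneg.2 hℓ')]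

theorem sq_mul_add_lt_of_eight_le (hq : 8 ≤ q) (hd : 1 ≤ d) (hdℓ : 3 * d ≤ ℓ)
    (hA : A ≤ d * (d - 1) + 1) (hAB : A + B ≤ ℓ * (ℓ - 1) + 1) :
    (q + 1) ^ 2 * A + 4 * q * B < (q * ℓ + 1) * (q * ℓ - 2) := by
  have hd9 : 9 * (d * (d - 1) + 1) ≤ ℓ ^ 2 - 3 * ℓ + 9 := by nlinarith
  have hq8 : 0 ≤ 8 * q ^ 2 - 34 * q - 1 := by nlinarith
  have hlarge : 9 * ((q - 1) ^ 2 * A + 4 * q * (A + B)) ≤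
      (q - 1) ^ 2 * (ℓ ^ 2 - 3 * ℓ + 9) + 36 * q * (ℓ * (ℓ - 1) + 1) := by
    nlinarith [mul_le_mul_of_nonneg_left hA (sq_nonneg (q - 1)),
      mul_le_mul_of_nonneg_left hd9 (sq_nonneg (q - 1)),
      mul_le_mul_of_nonneg_left hAB (show 0 ≤ 36 * q by linarith)]
  nlinarith [mul_nonneg (show 0 ≤ ℓ ^ 2 - 9 by nlinarith) hq8,
    mul_nonneg (show 0 ≤ ℓ - 3 by linarith) (show 0 ≤ 3 * q ^ 2 + 21 * q + 3 by nlinarith)]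

theorem sq_mul_add_lt_of_eq_four (hd : d = 1 ∨ d = 3) (hdℓ : 3 * d ≤ ℓ)
    (hA : A ≤ d * (d - 1) + 1) (hAB : A + B ≤ ℓ * (ℓ - 1) + 1) :
    (4 + 1) ^ 2 * A + 4 * 4 * B < (4 * ℓ + 1) * (4 * ℓ - 2) := by
  rcases hd with rfl | rfl <;> linarith

theorem sq_mul_add_lt {i ℓ A B : ℕ} (hi : 2 ≤ i) (hℓ : Odd ℓ) (hℓ1 : ℓ ≠ 1)
    (hℓq : ℓ ≠ 2 ^ i - 1) (hA : A ≤ ℓ.gcd (2 ^ i - 1) * (ℓ.gcd (2 ^ i - 1) - 1) + 1)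
    (hAB : A + B ≤ ℓ * (ℓ - 1) + 1) (hB : ℓ ∣ 2 ^ i - 1 → B = 0) :
    ((2 ^ i + 1) ^ 2 * A + 4 * 2 ^ i * B : ℤ) < (2 ^ i * ℓ + 1) * (2 ^ i * ℓ - 2) := by
  have hodd : Odd (2 ^ i - 1) := Nat.Even.sub_odd Nat.one_le_two_pow
    (even_two.pow_of_ne_zero (by omega)) odd_one
  have hcast {n : ℕ} (hn : 1 ≤ n) : ((n * (n - 1) + 1 : ℕ) : ℤ) = n * (n - 1) + 1 := by
    push_cast [hn]
    rfl
  have hAB' : (A + B : ℤ) ≤ ℓ * (ℓ - 1) + 1 := (hcast hℓ.pos).symm ▸ mod_cast hAB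
  by_cases hdvd : ℓ ∣ 2 ^ i - 1
  · have hle := three_mul_le_of_dvd_of_odd hdvd hodd hℓq
    have hℓ3 := three_mul_le_of_dvd_of_odd (one_dvd ℓ) hℓ hℓ1.symm
    rw [hB hdvd, Nat.cast_zero, mul_zero, add_zero]
    rw [hB hdvd, Nat.cast_zero, add_zero] at hAB'
    have hq : 3 * ℓ + 1 ≤ 2 ^ i := by
      have hpos := Nat.one_le_two_pow (n := i)
      omega
    exact sq_mul_lt_of_three_mul_add_one_le (by omega) (mod_cast hq) hAB'
  set d := ℓ.gcd (2 ^ i - 1)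
  have hd : 1 ≤ d := Nat.gcd_pos_of_pos_left _ hℓ.pos
  have hdq : d ∣ 2 ^ i - 1 := Nat.gcd_dvd_right _ _
  have hdℓ : 3 * d ≤ ℓ := three_mul_le_of_dvd_of_odd (Nat.gcd_dvd_left _ _) hℓ fun h =>
    hdvd (h ▸ hdq)
  have hA' : (A : ℤ) ≤ d * (d - 1) + 1 := (hcast hd).symm ▸ mod_cast hA
  rcases hi.eq_or_lt with rfl | hi
  · have hd3 : d = 1 ∨ d = 3 := (Nat.dvd_prime Nat.prime_three).1 hdq
    exact_mod_cast sq_mul_add_lt_of_eq_four (by exact_mod_cast hd3) (by exact_mod_cast hdℓ) hA' hAB'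
  · exact sq_mul_add_lt_of_eight_le
      (by exact_mod_cast Nat.pow_le_pow_right two_pos (show 3 ≤ i from hi))
      (by exact_mod_cast hd) (by exact_mod_cast hdℓ) hA' hAB'

end Arithmetic

section Lines

open MvPolynomial

variable {R : Type*} [CommRing R]

variable (R) in
/-- The product of the three lines `x = 1`, `y = 1` and `x = y`, which are components of every curve
`apnPolynomial = 0` in characteristic two and carry only trivial solutions. -/
noncomputable def trivialLines : MvPolynomial (Fin 2) R :=
  (X 0 + 1) * (X 1 + 1) * (X 0 + X 1)

theorem map_trivialLines {S : Type*} [CommRing S] (φ : R →+* S) :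
    map φ (trivialLines R) = trivialLines S := by
  simp [trivialLines]

theorem map_apnPolynomial {S : Type*} [CommRing S] (φ : R →+* S) (t : ℕ) :
    map φ (apnPolynomial R t) = apnPolynomial S t := by
  simp [apnPolynomial]

theorem totalDegree_trivialLines_le : (trivialLines R).totalDegree ≤ 3 := by
  cases subsingleton_or_nontrivial R
  · simp [Subsingleton.elim (trivialLines R) 0]
  · have hX (j : Fin 2) : (X j : MvPolynomial (Fin 2) R).totalDegree ≤ 1 := (totalDegree_X j).le
    have hone : (1 : MvPolynomial (Fin 2) R).totalDegree ≤ 1 := by simp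
    have hadd {p q : MvPolynomial (Fin 2) R} (hp : p.totalDegree ≤ 1) (hq : q.totalDegree ≤ 1) :
        (p + q).totalDegree ≤ 1 := (totalDegree_add p q).trans (max_le hp hq)
    exact (totalDegree_mul _ _).trans (Nat.add_le_add ((totalDegree_mul _ _).trans
      (Nat.add_le_add (hadd (hX 0) hone) (hadd (hX 1) hone))) (hadd (hX 0) (hX 1)))

variable {k : Type*} [Field k] [CharP k 2] {t : ℕ} {g : MvPolynomial (Fin 2) k} {P : Fin 2 → k}

theorem le_totalDegree_add_three (ht : 3 ≤ t) (hodd : Odd t)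
    (hg : apnPolynomial k t = trivialLines k * g) : t ≤ g.totalDegree + 3 := by
  have hmul := totalDegree_mul (trivialLines k) g
  rw [← hg, totalDegree_apnPolynomial ht hodd] at hmul
  have hlines := totalDegree_trivialLines_le (R := k)
  omega

theorem eval_trivialLines_eq_zero_iff :
    eval P (trivialLines k) = 0 ↔ P 0 = 1 ∨ P 1 = 1 ∨ P 0 = P 1 := by
  simp [trivialLines, CharTwo.add_eq_zero, or_assoc]

theorem three_le_orderAt_trivialLines (hP : IsRootPoint 1 P) (h0 : trivialLines k ≠ 0) :
    3 ≤ orderAt P (trivialLines k) := by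
  obtain ⟨hx, hy, -⟩ := hP
  rw [pow_one] at hx hy
  have hne := h0
  rw [trivialLines, mul_ne_zero_iff, mul_ne_zero_iff] at hne
  obtain ⟨⟨h1, h2⟩, h3⟩ := hne
  rw [trivialLines, orderAt_mul P (mul_ne_zero h1 h2) h3, orderAt_mul P h1 h2]
  have hord1 := (orderAt_pos_iff (P := P) h1).2 (by simp [hx, CharTwo.add_self_eq_zero])
  have hord2 := (orderAt_pos_iff (P := P) h2).2 (by simp [hy, CharTwo.add_self_eq_zero])
  have hord3 := (orderAt_pos_iff (P := P) h3).2 (by simp [hx, hy, CharTwo.add_self_eq_zero])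
  omega

end Lines

section Conjugate

open MvPolynomial

open Polynomial (mapRingHom)
open Polynomial.Bivariate (equivMvPolynomial)
open scoped Polynomial.Bivariate

variable {k : Type*} [Field k]

theorem equivMvPolynomial_map_mapRingHom {R : Type*} [CommRing R] (φ : R →+* R) (a : R[X][Y]) :
    equivMvPolynomial R (a.map (mapRingHom φ)) =
      map φ (equivMvPolynomial R a) := by
  have hcomp : (equivMvPolynomial R : R[X][Y] →+* MvPolynomial (Fin 2) R).comp
      (mapRingHom (mapRingHom φ)) =
      (map φ).comp (equivMvPolynomial R : R[X][Y] →+* MvPolynomial (Fin 2) R) := by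
    ext <;> simp
  exact congrArg (fun f => f a) hcomp

theorem equivMvPolynomial_apnCurve (t : ℕ) :
    equivMvPolynomial k (apnCurve k t) = apnPolynomial k t := by
  simp only [apnCurve, apnPolynomial, map_add, map_one, map_pow,
    Polynomial.Bivariate.equivMvPolynomial_X, Polynomial.Bivariate.equivMvPolynomial_C_X]
  ring

variable [CharP k 2] [IsAlgClosed k]

theorem irreducible_map_frobenius {σ : Type*} {a : MvPolynomial σ k} (ha : Irreducible a) :
    Irreducible (map (frobenius k 2) a) :=
  (MulEquiv.irreducible_iff (mapEquiv σ (frobeniusEquiv k 2))).2 ha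

theorem exists_apnPolynomial_eq_trivialLines_mul {i ℓ : ℕ} (hi : i ≠ 0) (hℓ : Odd ℓ)
    (h : {n : ℕ | 0 < n ∧ IsAPN fun x : GaloisField 2 n => x ^ (2 ^ i * ℓ + 1)}.Infinite) :
    ∃ g, apnPolynomial k (2 ^ i * ℓ + 1) = trivialLines k * g ∧
      ∀ a, Irreducible a → a ∣ g → ¬ Associated a (map (frobenius k 2) a) := by
  obtain ⟨g, hg⟩ := exists_apnCurve_eq_lines_mul (k := k) (t := 2 ^ i * ℓ + 1)
  set e := equivMvPolynomial k with he
  refine ⟨e g, ?_, fun a ha hag hass => ?_⟩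
  · rw [← equivMvPolynomial_apnCurve, hg, trivialLines]
    simp only [he, map_add, map_one, map_mul, Polynomial.Bivariate.equivMvPolynomial_C_X,
      Polynomial.Bivariate.equivMvPolynomial_X]
    ring
  · refine not_associated_map_frobenius_of_infinite_isAPN hi hℓ h hg
      ((MulEquiv.irreducible_iff e.symm).2 ha) (by simpa using _root_.map_dvd e.symm hag) ?_
    have hconj := hass.map e.symm
    rwa [← e.apply_symm_apply a, ← equivMvPolynomial_map_mapRingHom, e.symm_apply_apply,
      e.symm_apply_apply] at hconj

theorem mul_map_frobenius_dvd {t : ℕ} (ht : 3 ≤ t) (hodd : Odd t) {g a : MvPolynomial (Fin 2) k}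
    (hg : apnPolynomial k t = trivialLines k * g) (ha : Irreducible a) (hag : a ∣ g)
    (hass : ¬ Associated a (map (frobenius k 2) a)) : a * map (frobenius k 2) a ∣ g := by
  have hfix : map (frobenius k 2) g = g := by
    have hmap := congrArg (map (frobenius k 2)) hg
    have hne := apnPolynomial_ne_zero (k := k) ht hodd
    rw [hg] at hne
    rw [map_apnPolynomial, map_mul, map_trivialLines, hg] at hmap
    exact (mul_left_cancel₀ (left_ne_zero_of_mul hne) hmap).symm
  have hrel : IsRelPrime a (map (frobenius k 2) a) :=
    (ha.isRelPrime_iff_not_dvd).2 fun hdvd =>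
      hass (ha.associated_of_dvd (irreducible_map_frobenius ha) hdvd)
  exact hrel.mul_dvd hag (hfix ▸ _root_.map_dvd (map (frobenius k 2)) hag)

end Conjugate

section TwoMulOdd

open MvPolynomial

theorem sq_pow_eq_inv_pow {K : Type*} [Field K] {ℓ : ℕ} {x : K} (hℓ : ℓ ≠ 0)
    (hx : (x ^ 2) ^ ℓ = 1) :
    (x ^ 2) ^ (2 * ℓ + 1 - 2) = x⁻¹ ^ 2 ∧ (x ^ 2) ^ (2 * ℓ + 1 - 3) = x⁻¹ ^ 4 := by
  have hx0 : x ≠ 0 := by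
    rintro rfl
    simp [hℓ] at hx
  obtain ⟨n, rfl⟩ := Nat.exists_eq_add_one_of_ne_zero hℓ
  constructor
  · rw [show 2 * (n + 1) + 1 - 2 = (n + 1) + n by omega]
    field_simp
    linear_combination ((x ^ 2) ^ (n + 1) + 1) * hx
  · rw [show 2 * (n + 1) + 1 - 3 = n + n by omega]
    field_simp
    linear_combination ((x ^ 2) ^ (n + 1) + 1) * hx

variable {k : Type*} [Field k] [CharP k 2] {ℓ : ℕ} {u v w : k}

/-- For `u + v + w = 1`, the direction of the unique tangent line of `apnPolynomial k (2 * ℓ + 1)`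
at the point `(u ^ 2, v ^ 2)`. -/
def tangentDirection (u v w : k) : Fin 2 → k :=
  ![v⁻¹ + w⁻¹, u⁻¹ + w⁻¹]

theorem tangentDirection_add (u v w : k) :
    tangentDirection u v w 0 + tangentDirection u v w 1 = u⁻¹ + v⁻¹ := by
  simp only [tangentDirection, Matrix.cons_val_zero, Matrix.cons_val_one]
  linear_combination w⁻¹ * CharTwo.two_eq_zero (R := k)

theorem sq_add_sq_add_one (huvw : u + v + w = 1) : u ^ 2 + v ^ 2 + 1 = w ^ 2 := by
  rw [← CharTwo.add_sq, ← one_pow 2, ← CharTwo.add_sq, ← huvw, ← add_assoc,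
    CharTwo.add_self_eq_zero, zero_add]

theorem taylorForm_two_and_three (hℓ : ℓ ≠ 0) (huvw : u + v + w = 1)
    (hP : IsRootPoint ℓ ![u ^ 2, v ^ 2]) :
    taylorForm (2 * ℓ + 1) 2 ![u ^ 2, v ^ 2] = C (u⁻¹ ^ 2) * X 0 ^ 2 + C (v⁻¹ ^ 2) * X 1 ^ 2 +
        C (w⁻¹ ^ 2) * (X 0 + X 1) ^ 2 ∧
      taylorForm (2 * ℓ + 1) 3 ![u ^ 2, v ^ 2] = C (u⁻¹ ^ 4) * X 0 ^ 3 + C (v⁻¹ ^ 4) * X 1 ^ 3 +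
        C (w⁻¹ ^ 4) * (X 0 + X 1) ^ 3 := by
  obtain ⟨hu, hv, hw⟩ := hP
  simp only [Matrix.cons_val_zero, Matrix.cons_val_one, sq_add_sq_add_one huvw] at hu hv hw
  have hu' := sq_pow_eq_inv_pow hℓ hu
  have hv' := sq_pow_eq_inv_pow hℓ hv
  have hw' := sq_pow_eq_inv_pow hℓ hw
  simp only [taylorForm, Matrix.cons_val_zero, Matrix.cons_val_one, sq_add_sq_add_one huvw, hu',
    hv', hw', and_self]

theorem eval_tangentDirection_taylorForm_two (hℓ : ℓ ≠ 0) (huvw : u + v + w = 1)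
    (hP : IsRootPoint ℓ ![u ^ 2, v ^ 2]) :
    eval (tangentDirection u v w) (taylorForm (2 * ℓ + 1) 2 ![u ^ 2, v ^ 2]) = 0 := by
  rw [(taylorForm_two_and_three hℓ huvw hP).1]
  simp only [map_add, map_mul, map_pow, eval_C, eval_X, tangentDirection_add]
  simp only [tangentDirection, Matrix.cons_val_zero, Matrix.cons_val_one, CharTwo.add_sq]
  linear_combination (u⁻¹ ^ 2 * v⁻¹ ^ 2 + u⁻¹ ^ 2 * w⁻¹ ^ 2 + v⁻¹ ^ 2 * w⁻¹ ^ 2) *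
    CharTwo.two_eq_zero (R := k)

theorem pow_mul_eval_tangentDirection_taylorForm_three (hℓ : ℓ ≠ 0) (huvw : u + v + w = 1)
    (hP : IsRootPoint ℓ ![u ^ 2, v ^ 2]) :
    (u * v * w) ^ 4 *
        eval (tangentDirection u v w) (taylorForm (2 * ℓ + 1) 3 ![u ^ 2, v ^ 2]) =
      (1 + u) * (1 + v) * (1 + w) := by
  have h2 := CharTwo.two_eq_zero (R := k)
  have hne := hP.ne_zero hℓ
  simp only [Matrix.cons_val_zero, Matrix.cons_val_one, sq_add_sq_add_one huvw, ne_eq,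
    pow_eq_zero_iff two_ne_zero] at hne
  obtain ⟨hu, hv, hw⟩ := hne
  have hvw : v⁻¹ + w⁻¹ = (1 + u) / (v * w) := by
    field_simp
    linear_combination huvw - u * h2
  have huw : u⁻¹ + w⁻¹ = (1 + v) / (u * w) := by
    field_simp
    linear_combination huvw - v * h2
  have huv : u⁻¹ + v⁻¹ = (1 + w) / (u * v) := by
    field_simp
    linear_combination huvw - w * h2
  rw [(taylorForm_two_and_three hℓ huvw hP).2]
  simp only [map_add, map_mul, map_pow, eval_C, eval_X, tangentDirection_add]
  simp only [tangentDirection, Matrix.cons_val_zero, Matrix.cons_val_one, hvw, huw, huv]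
  have hclear : (u * v * w) ^ 4 * (u⁻¹ ^ 4 * ((1 + u) / (v * w)) ^ 3 +
      v⁻¹ ^ 4 * ((1 + v) / (u * w)) ^ 3 + w⁻¹ ^ 4 * ((1 + w) / (u * v)) ^ 3) =
      (1 + u) ^ 3 * (v * w) + (1 + v) ^ 3 * (u * w) + (1 + w) ^ 3 * (u * v) := by
    field_simp
  rw [hclear]
  obtain rfl : w = 1 - u - v := by linear_combination huvw
  linear_combination (6 * (u * v * (1 - u - v)) -
    (u * v + v * (1 - u - v) + (1 - u - v) * u) * (u * v * (1 - u - v)) - 1) * h2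

variable [IsAlgClosed k] {P : Fin 2 → k} {a b r L : MvPolynomial (Fin 2) k}

theorem eval_trivialLines_eq_zero_of_dvd_taylorForm (hℓ : ℓ ≠ 0) (hP : IsRootPoint ℓ P) {n : ℕ}
    (h2 : taylorForm (2 * ℓ + 1) 2 P ∣ L ^ n) (h3 : L ∣ taylorForm (2 * ℓ + 1) 3 P) :
    eval P (trivialLines k) = 0 := by
  obtain ⟨u, hu⟩ := IsAlgClosed.exists_pow_nat_eq (P 0) zero_lt_two
  obtain ⟨v, hv⟩ := IsAlgClosed.exists_pow_nat_eq (P 1) zero_lt_two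
  obtain rfl : P = ![u ^ 2, v ^ 2] := by
    ext j
    fin_cases j <;> simp [hu, hv]
  have huvw := add_add_add_self_add_one u v
  have hL : eval (tangentDirection u v (u + v + 1)) L = 0 := by
    refine eq_zero_of_pow_eq_zero (n := n) (zero_dvd_iff.1 ?_)
    rw [← eval_tangentDirection_taylorForm_two hℓ huvw hP, ← map_pow]
    exact _root_.map_dvd _ h2
  have hthree : eval (tangentDirection u v (u + v + 1))
      (taylorForm (2 * ℓ + 1) 3 ![u ^ 2, v ^ 2]) = 0 :=
    zero_dvd_iff.1 (hL ▸ _root_.map_dvd (eval _) h3)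
  have hprod := pow_mul_eval_tangentDirection_taylorForm_three hℓ huvw hP
  rw [hthree, mul_zero, eq_comm, mul_eq_zero, mul_eq_zero] at hprod
  rw [eval_trivialLines_eq_zero_iff]
  rcases hprod with (hu1 | hv1) | hw1
  · simp [← CharTwo.add_eq_zero.1 hu1]
  · simp [← CharTwo.add_eq_zero.1 hv1]
  · have huv : u = v := CharTwo.add_eq_zero.1 (right_eq_add.1 (CharTwo.add_eq_zero.1 hw1))
    simp [huv]

theorem eval_trivialLines_eq_zero_of_eq_mul (hℓ : Odd ℓ) (h : apnPolynomial k (2 * ℓ + 1) = a * b)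
    (hP1 : ¬ IsRootPoint 1 P) (ha : eval P a = 0) (hb : eval P b = 0) :
    eval P (trivialLines k) = 0 := by
  have hP : IsRootPoint ℓ P :=
    isRootPoint_of_eval_eq_zero (i := 1) (by rwa [pow_one]) one_ne_zero ha hb
  have hne : a * b ≠ 0 := h ▸ apnPolynomial_ne_zero (three_le_two_mul_add_one hℓ) ⟨ℓ, rfl⟩
  have ha0 := left_ne_zero_of_mul hne
  have hb0 := right_ne_zero_of_mul hne
  have hord : orderAt P (a * b) = 2 := by
    simpa [h] using hP.orderAt_apnPolynomial_of_not (i := 1) one_ne_zero hℓ hP1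
  have hsum := hord
  rw [orderAt_mul P ha0 hb0] at hsum
  have hapos := (orderAt_pos_iff ha0).2 ha
  have hbpos := (orderAt_pos_iff hb0).2 hb
  have ha1 : orderAt P a = 1 := by omega
  have hb1 : orderAt P b = 1 := by omega
  have htan : HasSingleTangent P (a * b) := by
    simpa [h] using hP.hasSingleTangent_apnPolynomial (i := 1) one_ne_zero hℓ hP1
  obtain ⟨L, -, hLa, hLb⟩ := htan.exists_associated_pow ha0 hb0 (by omega)
  rw [ha1, pow_one] at hLa
  rw [hb1, pow_one] at hLb
  have htwo : taylorForm (2 * ℓ + 1) 2 P = initialForm P a * initialForm P b := by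
    rw [← initialForm_mul P ha0 hb0, initialForm, hord, ← h]
    simpa using (homogeneousComponent_two_pow_translate (i := 1) one_ne_zero hℓ P).symm
  have hthree : taylorForm (2 * ℓ + 1) 3 P =
      homogeneousComponent (orderAt P (a * b) + 1) (translate P (a * b)) := by
    rw [hord, ← h]
    simpa using (homogeneousComponent_two_pow_add_one_translate (i := 1) one_ne_zero hℓ P).symm
  rw [homogeneousComponent_orderAt_add_one_translate_mul P ha0 hb0] at hthree
  refine eval_trivialLines_eq_zero_of_dvd_taylorForm (L := L) (n := 2) hℓ.pos.ne' hP ?_ ?_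
  · rw [htwo, pow_two]
    exact mul_dvd_mul hLa.dvd hLb.dvd
  · rw [hthree]
    exact dvd_add (hLa.symm.dvd.mul_right _) (hLb.symm.dvd.mul_left _)

theorem eval_ne_zero_of_eq_trivialLines_mul (hℓ : Odd ℓ)
    (h : apnPolynomial k (2 * ℓ + 1) = trivialLines k * (a * (b * r))) (ha : eval P a = 0) :
    eval P b ≠ 0 := by
  intro hb
  have hne : trivialLines k * (a * (b * r)) ≠ 0 :=
    h ▸ apnPolynomial_ne_zero (three_le_two_mul_add_one hℓ) ⟨ℓ, rfl⟩
  obtain ⟨hl, ha0, hb0, hr⟩ := by simpa only [mul_ne_zero_iff] using hne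
  have h' : apnPolynomial k (2 * ℓ + 1) = a * (b * (trivialLines k * r)) := by
    rw [h]
    ring
  have hP : IsRootPoint ℓ P :=
    isRootPoint_of_eval_eq_zero (i := 1) (by rwa [pow_one]) one_ne_zero ha
      (show eval P (b * (trivialLines k * r)) = 0 by simp [hb])
  have hord : orderAt P (apnPolynomial k (2 * ℓ + 1)) =
      orderAt P (trivialLines k) + (orderAt P a + (orderAt P b + orderAt P r)) := by
    rw [h, orderAt_mul P hl (by simp [*]), orderAt_mul P ha0 (by simp [*]), orderAt_mul P hb0 hr]
  have hapos := (orderAt_pos_iff ha0).2 ha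
  have hbpos := (orderAt_pos_iff hb0).2 hb
  by_cases hP1 : IsRootPoint 1 P
  · have hlines := three_le_orderAt_trivialLines hP1 hl
    have hthree : orderAt P (apnPolynomial k (2 * ℓ + 1)) = 3 := by
      simpa using hP.orderAt_apnPolynomial (i := 1) one_ne_zero hℓ hP1
    omega
  · have hlines := (orderAt_pos_iff hl).2
      (eval_trivialLines_eq_zero_of_eq_mul hℓ h' hP1 ha (by simp [hb]))
    have htwo : orderAt P (apnPolynomial k (2 * ℓ + 1)) = 2 := by
      simpa using hP.orderAt_apnPolynomial_of_not (i := 1) one_ne_zero hℓ hP1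
    omega

theorem not_mul_map_frobenius_dvd (hℓ : Odd ℓ) {g : MvPolynomial (Fin 2) k}
    (hg : apnPolynomial k (2 * ℓ + 1) = trivialLines k * g) (ha : Irreducible a) :
    ¬ a * map (frobenius k 2) a ∣ g := by
  rintro ⟨r, rfl⟩
  rw [mul_assoc] at hg
  have hconj := irreducible_map_frobenius ha
  have hrel : IsRelPrime (leadingForm a) (leadingForm (map (frobenius k 2) a)) := by
    have hg' : apnPolynomial k (2 * ℓ + 1) =
        a * (map (frobenius k 2) a * (trivialLines k * r)) := by
      rw [hg]
      ring
    have hne : trivialLines k * (a * (map (frobenius k 2) a * r)) ≠ 0 :=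
      hg ▸ apnPolynomial_ne_zero (three_le_two_mul_add_one hℓ) ⟨ℓ, rfl⟩
    refine (isRelPrime_leadingForm_of_apnPolynomial_eq (three_le_two_mul_add_one hℓ) ⟨ℓ, rfl⟩
      hg').of_dvd_right ?_
    rw [leadingForm_mul hconj.ne_zero (by simp_all)]
    exact dvd_mul_right _ _
  have hbezout := totalDegree_mul_totalDegree_le_sum hconj.ne_zero hrel (Z := ∅) (b := 0)
    (fun P hPa hPb => absurd hPb (eval_ne_zero_of_eq_trivialLines_mul hℓ hg hPa)) (by simp)
  rw [totalDegree_map_ringHom, Finset.sum_empty, Nat.le_zero, mul_self_eq_zero] at hbezout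
  refine ha.not_isUnit (isUnit_iff_totalDegree_of_isReduced.2 ⟨IsUnit.mk0 _ fun h0 => ?_, hbezout⟩)
  exact ha.ne_zero (by rw [totalDegree_eq_zero_iff_eq_C.1 hbezout, h0, C_0])

end TwoMulOdd

section Conclusion

open MvPolynomial

variable {k : Type*} [Field k] [CharP k 2] [IsAlgClosed k] {i ℓ : ℕ} {g : MvPolynomial (Fin 2) k}

theorem eq_one_of_forall_mul_map_frobenius_dvd (hℓ : Odd ℓ)
    (hg : apnPolynomial k (2 * ℓ + 1) = trivialLines k * g)
    (hconj : ∀ a, Irreducible a → a ∣ g → a * map (frobenius k 2) a ∣ g) : ℓ = 1 := by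
  have ht := three_le_two_mul_add_one hℓ
  have hg0 : g ≠ 0 := right_ne_zero_of_mul (hg ▸ apnPolynomial_ne_zero ht ⟨ℓ, rfl⟩)
  have hunit : IsUnit g := by
    by_contra hnu
    obtain ⟨a, ha, hag⟩ := WfDvdMonoid.exists_irreducible_factor hnu hg0
    exact not_mul_map_frobenius_dvd hℓ hg ha (hconj a ha hag)
  have hdeg := le_totalDegree_add_three ht ⟨ℓ, rfl⟩ hg
  rw [(isUnit_iff_totalDegree_of_isReduced.1 hunit).2] at hdeg
  omega

theorem eq_one_or_eq_of_forall_mul_map_frobenius_dvd (hi : 2 ≤ i) (hℓ : Odd ℓ)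
    (hg : apnPolynomial k (2 ^ i * ℓ + 1) = trivialLines k * g)
    (hconj : ∀ a, Irreducible a → a ∣ g → a * map (frobenius k 2) a ∣ g) :
    ℓ = 1 ∨ ℓ = 2 ^ i - 1 := by
  have hi0 : i ≠ 0 := by omega
  by_contra! hne
  have hlower := le_totalDegree_add_three (three_le_two_pow_mul_add_one hi0 hℓ)
    (odd_two_pow_mul_add_one hi0 ℓ) hg
  have hupper := mul_totalDegree_le_card_ordinaryPoints_add hi0 hℓ (frobenius k 2) hg
    fun a ha hag => hg ▸ (hconj a ha hag).mul_left _
  have hlt := sq_mul_add_lt (A := (ordinaryPoints k i ℓ).card)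
    (B := (singleTangentPoints k i ℓ).card) hi hℓ hne.1 hne.2 (card_ordinaryPoints_le hℓ)
    (card_ordinaryPoints_add_card_singleTangentPoints (k := k) ▸ card_rootPoints_le hℓ)
    fun hdvd => card_singleTangentPoints_eq_zero hℓ.pos hdvd
  zify at hlower hupper
  refine absurd (hupper.trans_lt hlt) (not_lt.2 ?_)
  exact mul_le_mul_of_nonneg_left (by linarith) (by positivity)

theorem eq_one_or_eq_of_infinite_isAPN (hi : i ≠ 0) (hℓ : Odd ℓ)
    (h : {n : ℕ | 0 < n ∧ IsAPN fun x : GaloisField 2 n => x ^ (2 ^ i * ℓ + 1)}.Infinite) :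
    ℓ = 1 ∨ ℓ = 2 ^ i - 1 := by
  obtain ⟨g, hg, hass⟩ :=
    exists_apnPolynomial_eq_trivialLines_mul (k := AlgebraicClosure (ZMod 2)) hi hℓ h
  have hconj (a) (ha : Irreducible a) (hag : a ∣ g) := mul_map_frobenius_dvd
    (three_le_two_pow_mul_add_one hi hℓ) (odd_two_pow_mul_add_one hi ℓ) hg ha hag (hass a ha hag)
  rcases (Nat.one_le_iff_ne_zero.2 hi).eq_or_lt with rfl | hi2
  · rw [pow_one] at hg
    exact .inl (eq_one_of_forall_mul_map_frobenius_dvd hℓ hg hconj)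
  · exact eq_one_or_eq_of_forall_mul_map_frobenius_dvd hi2 hℓ hg hconj

end Conclusion

end APN

/-- If `x ↦ x^t` is APN on `𝔽_{2^n}` for infinitely many positive `n`, then `t` is a
Gold number `2^i + 1` or a Kasami–Welch number `4^i - 2^i + 1`. -/
theorem stmt_0 (t : ℕ) (ht : 3 ≤ t) (htodd : Odd t)
    (h : {n : ℕ | 0 < n ∧ ∀ a b : GaloisField 2 n, a ≠ 0 →
        Set.ncard {x : GaloisField 2 n | (x + a) ^ t + x ^ t = b} ≤ 2}.Infinite) :
    (∃ i : ℕ, 1 ≤ i ∧ t = 2 ^ i + 1) ∨ (∃ i : ℕ, 1 ≤ i ∧ t = 4 ^ i - 2 ^ i + 1) := by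
  obtain ⟨i, ℓ, hℓ, hiℓ⟩ := Nat.exists_eq_two_pow_mul_odd (n := t - 1) (by omega)
  obtain rfl : t = 2 ^ i * ℓ + 1 := by omega
  have hi : i ≠ 0 := by
    rintro rfl
    rw [pow_zero, one_mul] at htodd
    exact Nat.not_odd_iff_even.2 hℓ.add_one htodd
  rcases APN.eq_one_or_eq_of_infinite_isAPN hi hℓ h with rfl | rfl
  · exact .inl ⟨i, Nat.one_le_iff_ne_zero.2 hi, by rw [mul_one]⟩
  · exact .inr ⟨i, Nat.one_le_iff_ne_zero.2 hi, by
      rw [Nat.mul_sub, mul_one, ← mul_pow, show 2 * 2 = 4 from rfl]⟩
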